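/- arXiv:1306.5829 — 2 statements merged into one kernel-verified Lean document; each statement's English description precedes it below -/
import Mathlib

section
/- Let σ > 0 and let K ⊆ ℝⁿ be a convex body with B_n ⊆ K ⊆ 4σ√n B_n. Let 0 < δ ≤ σ/(8√n), let f(x) = e^{−‖x‖²/(2σ²)}, define ℓ(x) = vol(K ∩ (x + δB_n))/vol(δB_n) and P_x(S) = (1/vol(K ∩ (x + δB_n))) ∫_{S ∩ K ∩ (x + δB_n)} min(1, f(y)/f(x)) dy for x ∉ S, and let π be the probability measure on K with density proportional to ℓ(x)f(x). Then the conductance of the speedy walk satisfies: for every measurable S ⊆ K with 0 < π(S) < 1, (1/2)(∫_S P_x(K∖S) dπ(x) + ∫_{K∖S} P_x(S) dπ(x)) ≥ 10^{−4} · (δ/(σ√n)) · min{π(S), π(K∖S)}. -/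
open MeasureTheory Real Set Metric

open Module Filter Topology

open scoped ENNReal Pointwise RealInnerProductSpace

/-!
The stationary measure has density `vol (K ∩ B(x, δ)) exp (-‖x‖² / (2 σ²))` on `K`. The first factor
is log-concave and the second is a Gaussian, so by the Prékopa–Leindler inequality the measure is
strongly log-concave in the integrated form `e^{t(1-t)r²/(2σ²)} μ(A)^{1-t} μ(B)^t ≤ μ(C)`. Points on
the two sides of the cut from which the walk seldom crosses are either far apart or have local
volumes that differ by a constant factor, since otherwise their step balls overlap substantially
inside `K`. So an isoperimetric inequality for this notion of separation suffices.

Repeated bisection by hyperplanes reduces a counterexample to that inequality to an arbitrarily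
thin convex body, and projecting to its axis gives one on an interval. In dimension one, moving away
from the median by the separation distance loses a definite fraction of the tail, because the
logarithm of the tail is concave and drops at rate at least `1 / (10 σ)` beyond the median. Moving
far enough to change the local volume by a constant factor loses such a fraction as well: a
homothety of ratio `t` keeps at least the fraction `t ^ n` of the local volume, so the move covers a
proportion of order `1 / n` of the distance to an end of the interval.
-/

section PrekopaLeindler

theorem volume_image_affine {r : ℝ} (hr : 0 ≤ r) (k : ℝ) (A : Set ℝ) :
    volume ((fun x => r * x + k) '' A) = ENNReal.ofReal r * volume A := by
  have himage : (fun x => r * x + k) '' A = (fun x => x + k) '' (r • A) := by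
    rw [← Set.image_smul, Set.image_image]; rfl
  rw [himage, Set.image_add_right, measure_preimage_add_right, Measure.addHaar_smul]
  simp [abs_of_nonneg hr]

variable {t : ℝ}

-- `(1 - t) A + t B` contains a translate of `(1 - t) A` and one of `t B` that meet in one point.
theorem brunnMinkowski_real_of_isCompact (ht0 : 0 ≤ t) (ht1 : t ≤ 1) {A B C : Set ℝ}
    (hA : IsCompact A) (hB : IsCompact B) (hAne : A.Nonempty) (hBne : B.Nonempty)
    (hC : ∀ a ∈ A, ∀ b ∈ B, (1 - t) * a + t * b ∈ C) :
    ENNReal.ofReal (1 - t) * volume A + ENNReal.ofReal t * volume B ≤ volume C := by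
  have ht1' : 0 ≤ 1 - t := sub_nonneg.2 ht1
  obtain ⟨a₀, ha₀, ha₀max⟩ := hA.exists_isMaxOn hAne continuousOn_id
  obtain ⟨b₀, hb₀, hb₀min⟩ := hB.exists_isMinOn hBne continuousOn_id
  rw [← volume_image_affine ht1' (t * b₀) A, ← volume_image_affine ht0 ((1 - t) * a₀) B]
  set X := (fun x => (1 - t) * x + t * b₀) '' A
  set Y := (fun x => t * x + (1 - t) * a₀) '' B
  have hY : IsCompact Y := hB.image (by fun_prop)
  have hXY : X ∩ Y ⊆ {(1 - t) * a₀ + t * b₀} := by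
    rintro _ ⟨⟨a, ha, rfl⟩, b, hb, hab⟩
    have hle : a ≤ a₀ := ha₀max ha
    have hge : b₀ ≤ b := hb₀min hb
    refine mem_singleton_iff.2 (le_antisymm ?_ ?_)
    · linarith [mul_le_mul_of_nonneg_left hle ht1']
    · linarith [mul_le_mul_of_nonneg_left hge ht0]
  have hdisj : AEDisjoint volume X Y := measure_mono_null hXY (by simp)
  rw [← measure_union₀ hY.measurableSet.nullMeasurableSet hdisj]
  refine measure_mono (union_subset ?_ ?_)
  · rintro _ ⟨a, ha, rfl⟩
    exact hC a ha b₀ hb₀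
  · rintro _ ⟨b, hb, rfl⟩
    simpa only [add_comm] using hC a₀ ha₀ b hb

theorem brunnMinkowski_real (ht0 : 0 ≤ t) (ht1 : t ≤ 1) {A B C : Set ℝ}
    (hA : MeasurableSet A) (hB : MeasurableSet B) (hAne : A.Nonempty) (hBne : B.Nonempty)
    (hC : ∀ a ∈ A, ∀ b ∈ B, (1 - t) * a + t * b ∈ C) :
    ENNReal.ofReal (1 - t) * volume A + ENNReal.ofReal t * volume B ≤ volume C := by
  obtain ⟨a, ha⟩ := hAne
  obtain ⟨b, hb⟩ := hBne
  rw [hA.measure_eq_iSup_isCompact volume, hB.measure_eq_iSup_isCompact volume]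
  simp only [ENNReal.mul_iSup, iSup_and', iSup_subtype']
  have : Nonempty {A' : Set ℝ // A' ⊆ A ∧ IsCompact A'} := ⟨⟨∅, by simp⟩⟩
  have : Nonempty {B' : Set ℝ // B' ⊆ B ∧ IsCompact B'} := ⟨⟨∅, by simp⟩⟩
  refine ENNReal.iSup_add_iSup_le fun ⟨A', hA', hA'c⟩ ⟨B', hB', hB'c⟩ => ?_
  calc ENNReal.ofReal (1 - t) * volume A' + ENNReal.ofReal t * volume B'
      ≤ ENNReal.ofReal (1 - t) * volume (insert a A') +
          ENNReal.ofReal t * volume (insert b B') := by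
        gcongr <;> exact subset_insert _ _
    _ ≤ volume C := brunnMinkowski_real_of_isCompact ht0 ht1 (hA'c.insert a) (hB'c.insert b)
        (insert_nonempty _ _) (insert_nonempty _ _)
        fun x hx y hy => hC x (insert_subset ha hA' hx) y (insert_subset hb hB' hy)

theorem ennreal_geom_mean_le_arith_mean2_weighted (ht0 : 0 < t) (ht1 : t < 1) (a b : ℝ≥0∞) :
    a ^ (1 - t) * b ^ t ≤ ENNReal.ofReal (1 - t) * a + ENNReal.ofReal t * b := by
  have ht1' : 0 < 1 - t := sub_pos.2 ht1
  obtain rfl | ha := eq_or_ne a ⊤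
  · simp [ENNReal.mul_top, ht1]
  obtain rfl | hb := eq_or_ne b ⊤
  · simp [ENNReal.mul_top, ht0]
  lift a to NNReal using ha
  lift b to NNReal using hb
  have hreal := ENNReal.ofReal_le_ofReal
    (Real.geom_mean_le_arith_mean2_weighted ht1'.le ht0.le a.2 b.2 (by ring))
  simp only [NNReal.val_eq_coe] at hreal
  rw [ENNReal.ofReal_mul (by positivity), ENNReal.ofReal_add (by positivity) (by positivity),
    ENNReal.ofReal_mul (by positivity), ENNReal.ofReal_mul (by positivity),
    ← ENNReal.ofReal_rpow_of_nonneg (by positivity) ht1'.le,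
    ← ENNReal.ofReal_rpow_of_nonneg (by positivity) ht0.le] at hreal
  simpa using hreal

theorem lintegral_eq_lintegral_meas_ofReal_lt {α : Type*} [MeasurableSpace α] (μ : Measure α)
    {k : α → ℝ≥0∞} (hk : Measurable k) (hk_top : ∀ x, k x ≠ ⊤) :
    ∫⁻ x, k x ∂μ = ∫⁻ s in Ioi (0 : ℝ), μ {a | ENNReal.ofReal s < k a} := by
  have hlayer := lintegral_eq_lintegral_meas_lt (f := fun x => (k x).toReal) μ
    (Eventually.of_forall fun x => ENNReal.toReal_nonneg) hk.ennreal_toReal.aemeasurable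
  simp only [ENNReal.ofReal_toReal (hk_top _)] at hlayer
  rw [hlayer]
  refine setLIntegral_congr_fun measurableSet_Ioi fun s hs => ?_
  simp only [ENNReal.ofReal_lt_iff_lt_toReal (le_of_lt hs) (hk_top _)]

/-- The Prékopa–Leindler inequality with weights `1 - t` and `t`, as a property of a real vector
space carrying a measure. -/
def PrekopaLeindler (t : ℝ) (E : Type*) [AddCommGroup E] [Module ℝ E] [MeasureSpace E] : Prop :=
  ∀ f g h : E → ℝ≥0∞, Measurable f → Measurable g → Measurable h →
    (∀ x y, f x ^ (1 - t) * g y ^ t ≤ h ((1 - t) • x + t • y)) →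
    (∫⁻ x, f x) ^ (1 - t) * (∫⁻ x, g x) ^ t ≤ ∫⁻ x, h x

theorem superlevel_brunnMinkowski (ht0 : 0 < t) (ht1 : t < 1) {f g h : ℝ → ℝ≥0∞}
    (hf : Measurable f) (hg : Measurable g) (hfsup : ⨆ x, f x = 1) (hgsup : ⨆ x, g x = 1)
    (H : ∀ x y, f x ^ (1 - t) * g y ^ t ≤ h ((1 - t) * x + t * y)) {r : ℝ≥0∞} (hr0 : r ≠ 0)
    (hr1 : r < 1) :
    ENNReal.ofReal (1 - t) * volume {a | r < f a} + ENNReal.ofReal t * volume {a | r < g a} ≤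
      volume {a | r < min (h a) 1} := by
  obtain ⟨x, hx⟩ := lt_iSup_iff.1 (hfsup ▸ hr1)
  obtain ⟨y, hy⟩ := lt_iSup_iff.1 (hgsup ▸ hr1)
  refine brunnMinkowski_real ht0.le ht1.le (measurableSet_lt measurable_const hf)
    (measurableSet_lt measurable_const hg) ⟨x, hx⟩ ⟨y, hy⟩ fun a ha b hb => lt_min ?_ hr1
  calc r = r ^ (1 - t) * r ^ t := by
        rw [← ENNReal.rpow_add _ _ hr0 hr1.ne_top]; simp
    _ < f a ^ (1 - t) * g b ^ t :=
        ENNReal.mul_lt_mul (ENNReal.rpow_lt_rpow ha (sub_pos.2 ht1)) (ENNReal.rpow_lt_rpow hb ht0)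
    _ ≤ h ((1 - t) * a + t * b) := H a b

theorem prekopaLeindler_real_of_iSup_eq_one (ht0 : 0 < t) (ht1 : t < 1) {f g h : ℝ → ℝ≥0∞}
    (hf : Measurable f) (hg : Measurable g) (hh : Measurable h)
    (hfsup : ⨆ x, f x = 1) (hgsup : ⨆ x, g x = 1)
    (H : ∀ x y, f x ^ (1 - t) * g y ^ t ≤ h ((1 - t) * x + t * y)) :
    (∫⁻ x, f x) ^ (1 - t) * (∫⁻ x, g x) ^ t ≤ ∫⁻ x, h x := by
  have hf1 : ∀ x, f x ≤ 1 := fun x => hfsup ▸ le_iSup f x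
  have hg1 : ∀ x, g x ≤ 1 := fun x => hgsup ▸ le_iSup g x
  have hfmeas : Measurable fun s : ℝ => volume {a | ENNReal.ofReal s < f a} :=
    Antitone.measurable fun s s' hss => measure_mono fun a ha =>
      (ENNReal.ofReal_le_ofReal hss).trans_lt ha
  have hlayer : ∀ {k : ℝ → ℝ≥0∞}, Measurable k → (∀ x, k x ≤ 1) →
      ∫⁻ x, k x = ∫⁻ s in Ioi (0 : ℝ), volume {a | ENNReal.ofReal s < k a} := fun hk hk1 =>
    lintegral_eq_lintegral_meas_ofReal_lt _ hk fun x => ((hk1 x).trans_lt ENNReal.one_lt_top).ne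
  calc (∫⁻ x, f x) ^ (1 - t) * (∫⁻ x, g x) ^ t
      ≤ ENNReal.ofReal (1 - t) * (∫⁻ x, f x) + ENNReal.ofReal t * ∫⁻ x, g x :=
        ennreal_geom_mean_le_arith_mean2_weighted ht0 ht1 _ _
    _ = ∫⁻ s in Ioi (0 : ℝ), (ENNReal.ofReal (1 - t) * volume {a | ENNReal.ofReal s < f a} +
          ENNReal.ofReal t * volume {a | ENNReal.ofReal s < g a}) := by
        rw [hlayer hf hf1, hlayer hg hg1, lintegral_add_left (by fun_prop),
          lintegral_const_mul' _ _ ENNReal.ofReal_ne_top,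
          lintegral_const_mul' _ _ ENNReal.ofReal_ne_top]
    _ ≤ ∫⁻ s in Ioi (0 : ℝ), volume {a | ENNReal.ofReal s < min (h a) 1} := by
        refine setLIntegral_mono' measurableSet_Ioi fun s hs => ?_
        by_cases hs1 : ENNReal.ofReal s < 1
        · exact superlevel_brunnMinkowski ht0 ht1 hf hg hfsup hgsup H (by simpa using hs) hs1
        · have hempty : ∀ {k : ℝ → ℝ≥0∞}, (∀ x, k x ≤ 1) → {a | ENNReal.ofReal s < k a} = ∅ :=
            fun hk => eq_empty_of_forall_notMem fun a ha => hs1 (lt_of_lt_of_le ha (hk a))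
          simp [hempty hf1, hempty hg1]
    _ = ∫⁻ x, min (h x) 1 := (hlayer (hh.min measurable_const) fun x => min_le_right _ _).symm
    _ ≤ ∫⁻ x, h x := lintegral_mono fun x => min_le_left _ _

theorem prekopaLeindler_real_of_iSup_ne_top (ht0 : 0 < t) (ht1 : t < 1) {f g h : ℝ → ℝ≥0∞}
    (hf : Measurable f) (hg : Measurable g) (hh : Measurable h)
    (hfsup : ⨆ x, f x ≠ ⊤) (hgsup : ⨆ x, g x ≠ ⊤)
    (H : ∀ x y, f x ^ (1 - t) * g y ^ t ≤ h ((1 - t) * x + t * y)) :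
    (∫⁻ x, f x) ^ (1 - t) * (∫⁻ x, g x) ^ t ≤ ∫⁻ x, h x := by
  have ht1' : 0 < 1 - t := sub_pos.2 ht1
  set F := ⨆ x, f x
  set G := ⨆ x, g x
  obtain hF0 | hF0 := eq_or_ne F 0
  · simp [iSup_eq_bot.1 hF0, ENNReal.zero_rpow_of_pos ht1']
  obtain hG0 | hG0 := eq_or_ne G 0
  · simp [iSup_eq_bot.1 hG0, ENNReal.zero_rpow_of_pos ht0]
  have hscaled := prekopaLeindler_real_of_iSup_eq_one ht0 ht1 (f := fun x => F⁻¹ * f x)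
    (g := fun x => G⁻¹ * g x) (h := fun x => (F⁻¹ ^ (1 - t) * G⁻¹ ^ t) * h x)
    (by fun_prop) (by fun_prop) (by fun_prop)
    (by rw [← ENNReal.mul_iSup]; exact ENNReal.inv_mul_cancel hF0 hfsup)
    (by rw [← ENNReal.mul_iSup]; exact ENNReal.inv_mul_cancel hG0 hgsup)
    fun x y => by
      rw [ENNReal.mul_rpow_of_nonneg _ _ ht1'.le, ENNReal.mul_rpow_of_nonneg _ _ ht0.le,
        mul_mul_mul_comm]
      gcongr
      exact H x y
  rw [lintegral_const_mul _ hf, lintegral_const_mul _ hg, lintegral_const_mul _ hh,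
    ENNReal.mul_rpow_of_nonneg _ _ ht1'.le, ENNReal.mul_rpow_of_nonneg _ _ ht0.le,
    mul_mul_mul_comm] at hscaled
  rwa [ENNReal.mul_le_mul_iff_right] at hscaled
  · exact mul_ne_zero (ENNReal.rpow_pos (ENNReal.inv_pos.2 hfsup) (ENNReal.inv_ne_top.2 hF0)).ne'
      (ENNReal.rpow_pos (ENNReal.inv_pos.2 hgsup) (ENNReal.inv_ne_top.2 hG0)).ne'
  · exact ENNReal.mul_ne_top (ENNReal.rpow_ne_top_of_nonneg ht1'.le (ENNReal.inv_ne_top.2 hF0))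
      (ENNReal.rpow_ne_top_of_nonneg ht0.le (ENNReal.inv_ne_top.2 hG0))

theorem tendsto_lintegral_min_natCast {α : Type*} [MeasurableSpace α] (μ : Measure α)
    {k : α → ℝ≥0∞} (hk : Measurable k) :
    Tendsto (fun N : ℕ => ∫⁻ x, min (k x) N ∂μ) atTop (𝓝 (∫⁻ x, k x ∂μ)) := by
  refine lintegral_tendsto_of_tendsto_of_monotone
    (fun N => (hk.min measurable_const).aemeasurable)
    (Eventually.of_forall fun x N N' hN => min_le_min le_rfl (by exact_mod_cast hN))
    (Eventually.of_forall fun x => ?_)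
  simpa using (tendsto_const_nhds (x := k x)).min ENNReal.tendsto_nat_nhds_top

theorem prekopaLeindler_real (ht0 : 0 < t) (ht1 : t < 1) : PrekopaLeindler t ℝ := by
  intro f g h hf hg hh H
  have ht1' : 0 < 1 - t := sub_pos.2 ht1
  obtain hF0 | hF0 := eq_or_ne (∫⁻ x, f x) 0
  · simp [hF0, ENNReal.zero_rpow_of_pos ht1']
  obtain hG0 | hG0 := eq_or_ne (∫⁻ x, g x) 0
  · simp [hG0, ENNReal.zero_rpow_of_pos ht0]
  have htrunc : ∀ N : ℕ,
      (∫⁻ x, min (f x) N) ^ (1 - t) * (∫⁻ x, min (g x) N) ^ t ≤ ∫⁻ x, h x := by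
    intro N
    have hsup : ∀ k : ℝ → ℝ≥0∞, ⨆ x, min (k x) N ≠ ⊤ := fun k =>
      ((iSup_le fun x => min_le_right _ _).trans_lt (ENNReal.natCast_lt_top N)).ne
    refine prekopaLeindler_real_of_iSup_ne_top ht0 ht1 (hf.min measurable_const)
      (hg.min measurable_const) hh (hsup f) (hsup g) fun x y => le_trans ?_ (H x y)
    gcongr <;> exact min_le_left _ _
  refine le_of_tendsto' (ENNReal.Tendsto.mul
    ((ENNReal.continuous_rpow_const.tendsto _).comp (tendsto_lintegral_min_natCast _ hf)) (.inl ?_)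
    ((ENNReal.continuous_rpow_const.tendsto _).comp (tendsto_lintegral_min_natCast _ hg))
    (.inl ?_)) htrunc
  · simp [ENNReal.rpow_eq_zero_iff, hF0, not_lt.2 ht1.le]
  · simp [ENNReal.rpow_eq_zero_iff, hG0, not_lt.2 ht0.le]

theorem PrekopaLeindler.prod {E F : Type*} [AddCommGroup E] [Module ℝ E] [MeasureSpace E]
    [AddCommGroup F] [Module ℝ F] [MeasureSpace F] [SFinite (volume : Measure F)]
    (hE : PrekopaLeindler t E) (hF : PrekopaLeindler t F) : PrekopaLeindler t (E × F) := by
  intro f g h hf hg hh H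
  have hfubini : ∀ {k : E × F → ℝ≥0∞}, Measurable k → ∫⁻ z, k z = ∫⁻ x, ∫⁻ y, k (x, y) :=
    fun hk => lintegral_prod _ hk.aemeasurable
  rw [hfubini hf, hfubini hg, hfubini hh]
  refine hE _ _ _ hf.lintegral_prod_right' hg.lintegral_prod_right' hh.lintegral_prod_right' ?_
  intro x y
  exact hF _ _ _ (hf.comp measurable_prodMk_left) (hg.comp measurable_prodMk_left)
    (hh.comp measurable_prodMk_left) fun u v => H (x, u) (y, v)

theorem PrekopaLeindler.of_measurePreserving {E F : Type*} [AddCommGroup E] [Module ℝ E]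
    [MeasureSpace E] [AddCommGroup F] [Module ℝ F] [MeasureSpace F] (hE : PrekopaLeindler t E)
    (φ : E →ₗ[ℝ] F) (hφ : MeasurePreserving φ) : PrekopaLeindler t F := by
  intro f g h hf hg hh H
  rw [← hφ.lintegral_comp hf, ← hφ.lintegral_comp hg, ← hφ.lintegral_comp hh]
  exact hE _ _ _ (hf.comp hφ.measurable) (hg.comp hφ.measurable) (hh.comp hφ.measurable)
    fun x y => by simpa using H (φ x) (φ y)

theorem PrekopaLeindler.setLIntegral_le {E : Type*} [AddCommGroup E] [Module ℝ E]
    [MeasureSpace E] (hE : PrekopaLeindler t E) (ht0 : 0 < t) (ht1 : t < 1) {A B C : Set E}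
    (hA : MeasurableSet A) (hB : MeasurableSet B) (hC : MeasurableSet C) {f g h : E → ℝ≥0∞}
    (hf : Measurable f) (hg : Measurable g) (hh : Measurable h)
    (H : ∀ x ∈ A, ∀ y ∈ B, (1 - t) • x + t • y ∈ C ∧
      f x ^ (1 - t) * g y ^ t ≤ h ((1 - t) • x + t • y)) :
    (∫⁻ x in A, f x) ^ (1 - t) * (∫⁻ x in B, g x) ^ t ≤ ∫⁻ x in C, h x := by
  rw [← lintegral_indicator hA, ← lintegral_indicator hB, ← lintegral_indicator hC]
  refine hE _ _ _ (hf.indicator hA) (hg.indicator hB) (hh.indicator hC) fun x y => ?_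
  by_cases hx : x ∈ A
  · by_cases hy : y ∈ B
    · rw [indicator_of_mem hx, indicator_of_mem hy, indicator_of_mem (H x hx y hy).1]
      exact (H x hx y hy).2
    · simp [hy, ht0]
  · simp [hx, ht1]

theorem prekopaLeindler_pi (ht0 : 0 < t) (ht1 : t < 1) (n : ℕ) :
    PrekopaLeindler t (Fin n → ℝ) := by
  induction n with
  | zero =>
    intro f g h _ _ _ H
    rw [Measure.volume_pi_eq_dirac, lintegral_dirac, lintegral_dirac, lintegral_dirac]
    exact (H _ _).trans_eq (congrArg h (Subsingleton.elim _ _))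
  | succ n ih =>
    have hcons : ⇑(Fin.consLinearEquiv ℝ fun _ : Fin (n + 1) => ℝ).toLinearMap =
        (MeasurableEquiv.piFinSuccAbove (fun _ : Fin (n + 1) => ℝ) 0).symm := by
      ext p i
      refine Fin.cases ?_ (fun j => ?_) i <;> simp [MeasurableEquiv.piFinSuccAbove]
    refine ((prekopaLeindler_real ht0 ht1).prod ih).of_measurePreserving
      (Fin.consLinearEquiv ℝ fun _ => ℝ).toLinearMap ?_
    rw [hcons]
    exact (volume_preserving_piFinSuccAbove (fun _ : Fin (n + 1) => ℝ) 0).symm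

theorem prekopaLeindler {E : Type*} [NormedAddCommGroup E] [InnerProductSpace ℝ E]
    [FiniteDimensional ℝ E] [MeasurableSpace E] [BorelSpace E] (ht0 : 0 < t) (ht1 : t < 1) :
    PrekopaLeindler t E :=
  ((prekopaLeindler_pi ht0 ht1 (finrank ℝ E)).of_measurePreserving
    (WithLp.linearEquiv 2 ℝ (Fin (finrank ℝ E) → ℝ)).symm.toLinearMap
    (PiLp.volume_preserving_toLp _)).of_measurePreserving
    (stdOrthonormalBasis ℝ E).repr.symm.toLinearMap
    (stdOrthonormalBasis ℝ E).repr.symm.measurePreserving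

end PrekopaLeindler

section StronglyLogConcave

/-- A measure is strongly log-concave with parameter `σ` if it satisfies the multiplicative
Brunn–Minkowski inequality with the gain `exp (t (1 - t) r² / (2 σ²))` for sets at distance at
least `r`. This is the integrated form of the density being log-concave relative to the centred
Gaussian of variance `σ²`, and it makes sense for measures without a density. -/
def StronglyLogConcave {E : Type*} [SeminormedAddCommGroup E] [Module ℝ E] [MeasurableSpace E]
    (μ : Measure E) (σ : ℝ) : Prop :=
  ∀ ⦃A B C : Set E⦄, MeasurableSet A → MeasurableSet B → MeasurableSet C →
    ∀ ⦃t r : ℝ⦄, 0 < t → t < 1 → 0 ≤ r →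
      (∀ x ∈ A, ∀ y ∈ B, r ≤ ‖x - y‖ ∧ (1 - t) • x + t • y ∈ C) →
      ENNReal.ofReal (exp (t * (1 - t) * r ^ 2 / (2 * σ ^ 2))) * (μ A ^ (1 - t) * μ B ^ t) ≤ μ C

namespace StronglyLogConcave

variable {E F : Type*} [SeminormedAddCommGroup E] [Module ℝ E] [MeasurableSpace E]
  [SeminormedAddCommGroup F] [Module ℝ F] [MeasurableSpace F] {μ : Measure E} {σ : ℝ}

theorem restrict (hμ : StronglyLogConcave μ σ) {K : Set E} (hK : Convex ℝ K)
    (hKm : MeasurableSet K) : StronglyLogConcave (μ.restrict K) σ := by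
  intro A B C hA hB hC t r ht0 ht1 hr H
  rw [Measure.restrict_apply hA, Measure.restrict_apply hB, Measure.restrict_apply hC]
  exact hμ (hA.inter hKm) (hB.inter hKm) (hC.inter hKm) ht0 ht1 hr fun x hx y hy =>
    ⟨(H x hx.1 y hy.1).1, (H x hx.1 y hy.1).2,
      hK hx.2 hy.2 (sub_nonneg.2 ht1.le) ht0.le (sub_add_cancel 1 t)⟩

theorem map (hμ : StronglyLogConcave μ σ) (φ : E →ₗ[ℝ] F) (hφm : Measurable φ)
    (hφ : ∀ x, ‖φ x‖ ≤ ‖x‖) : StronglyLogConcave (μ.map φ) σ := by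
  intro A B C hA hB hC t r ht0 ht1 hr H
  rw [Measure.map_apply hφm hA, Measure.map_apply hφm hB, Measure.map_apply hφm hC]
  refine hμ (hφm hA) (hφm hB) (hφm hC) ht0 ht1 hr fun x hx y hy => ?_
  obtain ⟨hdist, hmem⟩ := H (φ x) hx (φ y) hy
  exact ⟨hdist.trans (by simpa using hφ (x - y)), by simpa using hmem⟩

theorem measureReal_le [IsFiniteMeasure μ] (hμ : StronglyLogConcave μ σ) {A B C : Set E}
    (hA : MeasurableSet A) (hB : MeasurableSet B) (hC : MeasurableSet C) {t r : ℝ} (ht0 : 0 < t)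
    (ht1 : t < 1) (hr : 0 ≤ r)
    (H : ∀ x ∈ A, ∀ y ∈ B, r ≤ ‖x - y‖ ∧ (1 - t) • x + t • y ∈ C) :
    exp (t * (1 - t) * r ^ 2 / (2 * σ ^ 2)) * (μ.real A ^ (1 - t) * μ.real B ^ t) ≤
      μ.real C := by
  have hreal := ENNReal.toReal_mono (measure_ne_top _ _) (hμ hA hB hC ht0 ht1 hr H)
  rwa [ENNReal.toReal_mul, ENNReal.toReal_mul, ENNReal.toReal_ofReal (exp_pos _).le,
    ← ENNReal.toReal_rpow, ← ENNReal.toReal_rpow] at hreal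

theorem log_measureReal_le [IsFiniteMeasure μ] (hμ : StronglyLogConcave μ σ) {A B C : Set E}
    (hA : MeasurableSet A) (hB : MeasurableSet B) (hC : MeasurableSet C) {t : ℝ} (ht0 : 0 < t)
    (ht1 : t < 1) (H : ∀ x ∈ A, ∀ y ∈ B, (1 - t) • x + t • y ∈ C)
    (hA0 : 0 < μ.real A) (hB0 : 0 < μ.real B) :
    (1 - t) * log (μ.real A) + t * log (μ.real B) ≤ log (μ.real C) := by
  have hreal := hμ.measureReal_le hA hB hC ht0 ht1 le_rfl
    fun x hx y hy => ⟨norm_nonneg _, H x hx y hy⟩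
  rw [zero_pow two_ne_zero, mul_zero, zero_div, exp_zero, one_mul] at hreal
  have hlog := log_le_log (by positivity) hreal
  rwa [log_mul (by positivity) (by positivity), log_rpow hA0, log_rpow hB0] at hlog

end StronglyLogConcave

variable {E : Type*} [NormedAddCommGroup E] [InnerProductSpace ℝ E]

theorem convexCombination_mem_closedBall {E : Type*} [SeminormedAddCommGroup E] [NormedSpace ℝ E]
    {t δ : ℝ} (ht0 : 0 ≤ t) (ht1 : t ≤ 1) {p q x y : E} (hp : p ∈ closedBall x δ)
    (hq : q ∈ closedBall y δ) : (1 - t) • p + t • q ∈ closedBall ((1 - t) • x + t • y) δ := by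
  have hmem : (1 - t) • (p - x) + t • (q - y) ∈ closedBall (0 : E) δ :=
    convex_closedBall 0 δ (by simpa [dist_eq_norm] using hp) (by simpa [dist_eq_norm] using hq)
      (sub_nonneg.2 ht1) ht0 (sub_add_cancel 1 t)
  rw [mem_closedBall_zero_iff] at hmem
  have hsub : (1 - t) • (p - x) + t • (q - y) =
      (1 - t) • p + t • q - ((1 - t) • x + t • y) := by module
  rwa [hsub, ← dist_eq_norm] at hmem

theorem norm_sq_convexCombination (x y : E) (t : ℝ) :
    ‖(1 - t) • x + t • y‖ ^ 2 =
      (1 - t) * ‖x‖ ^ 2 + t * ‖y‖ ^ 2 - t * (1 - t) * ‖x - y‖ ^ 2 := by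
  simp only [norm_add_sq_real, norm_sub_sq_real, norm_smul, inner_smul_left, inner_smul_right,
    mul_pow, norm_eq_abs, sq_abs, conj_trivial]
  ring

variable [FiniteDimensional ℝ E] [MeasurableSpace E] [BorelSpace E] {t : ℝ}

theorem stronglyLogConcave_withDensity {w : E → ℝ} (hw : Measurable w) (hw0 : ∀ x, 0 ≤ w x)
    {σ : ℝ} (hwσ : ∀ x y t, 0 < t → t < 1 →
      exp (t * (1 - t) * ‖x - y‖ ^ 2 / (2 * σ ^ 2)) * (w x ^ (1 - t) * w y ^ t) ≤
        w ((1 - t) • x + t • y)) :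
    StronglyLogConcave (volume.withDensity fun x => ENNReal.ofReal (w x)) σ := by
  intro A B C hA hB hC t r ht0 ht1 hr H
  have ht1' : 0 < 1 - t := sub_pos.2 ht1
  set c := exp (t * (1 - t) * r ^ 2 / (2 * σ ^ 2)) with hc
  set D : E → ℝ≥0∞ := fun x => ENNReal.ofReal (w x)
  have hD : Measurable D := hw.ennreal_ofReal
  have hpointwise : ∀ x ∈ A, ∀ y ∈ B,
      D x ^ (1 - t) * D y ^ t ≤ ENNReal.ofReal c⁻¹ * D ((1 - t) • x + t • y) := by
    intro x hx y hy
    have hcle : c ≤ exp (t * (1 - t) * ‖x - y‖ ^ 2 / (2 * σ ^ 2)) := by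
      rw [hc]
      gcongr
      exact (H x hx y hy).1
    have hcw : c * (w x ^ (1 - t) * w y ^ t) ≤ w ((1 - t) • x + t • y) :=
      (mul_le_mul_of_nonneg_right hcle
        (mul_nonneg (rpow_nonneg (hw0 x) _) (rpow_nonneg (hw0 y) _))).trans (hwσ x y t ht0 ht1)
    simp only [D]
    rw [ENNReal.ofReal_rpow_of_nonneg (hw0 x) ht1'.le, ENNReal.ofReal_rpow_of_nonneg (hw0 y) ht0.le,
      ← ENNReal.ofReal_mul (rpow_nonneg (hw0 x) _), ← ENNReal.ofReal_mul (by positivity)]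
    exact ENNReal.ofReal_le_ofReal (by rwa [le_inv_mul_iff₀ (exp_pos _)])
  have hPL := (prekopaLeindler ht0 ht1).setLIntegral_le ht0 ht1 hA hB hC hD hD
    (hD.const_mul (ENNReal.ofReal c⁻¹)) fun x hx y hy => ⟨(H x hx y hy).2, hpointwise x hx y hy⟩
  rw [lintegral_const_mul _ hD, ← withDensity_apply _ hA, ← withDensity_apply _ hB,
    ← withDensity_apply _ hC] at hPL
  calc ENNReal.ofReal c * (volume.withDensity D A ^ (1 - t) * volume.withDensity D B ^ t)
      ≤ ENNReal.ofReal c * (ENNReal.ofReal c⁻¹ * volume.withDensity D C) := by gcongr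
    _ = volume.withDensity D C := by
      rw [← mul_assoc, ← ENNReal.ofReal_mul (exp_pos _).le, mul_inv_cancel₀ (exp_pos _).ne',
        ENNReal.ofReal_one, one_mul]

theorem measureReal_rpow_mul_rpow_le (ht0 : 0 < t) (ht1 : t < 1) {A B C : Set E}
    (hA : MeasurableSet A) (hB : MeasurableSet B) (hC : MeasurableSet C)
    (hCtop : volume C ≠ ⊤) (H : ∀ x ∈ A, ∀ y ∈ B, (1 - t) • x + t • y ∈ C) :
    volume.real A ^ (1 - t) * volume.real B ^ t ≤ volume.real C := by
  have hPL := (prekopaLeindler ht0 ht1).setLIntegral_le ht0 ht1 hA hB hC measurable_one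
    measurable_one measurable_one fun x hx y hy => ⟨H x hx y hy, by simp⟩
  simp only [Pi.one_apply, setLIntegral_one] at hPL
  have hreal := ENNReal.toReal_mono hCtop hPL
  rwa [ENNReal.toReal_mul, ← ENNReal.toReal_rpow, ← ENNReal.toReal_rpow] at hreal

end StronglyLogConcave

section LocalVolume

variable {E : Type*} [NormedAddCommGroup E] [InnerProductSpace ℝ E] [FiniteDimensional ℝ E]
  [MeasurableSpace E] [BorelSpace E] {K : Set E} {δ : ℝ}

/-- The volume of the part of `K` within distance `δ` of `x`, that is, the local conductance of `K`
at `x` before normalisation by the volume of the ball. -/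
noncomputable def localVolume (K : Set E) (δ : ℝ) (x : E) : ℝ :=
  volume.real (K ∩ closedBall x δ)

theorem localVolume_nonneg (K : Set E) (δ : ℝ) (x : E) : 0 ≤ localVolume K δ x :=
  measureReal_nonneg

theorem volume_inter_closedBall_ne_top (K : Set E) (δ : ℝ) (x : E) :
    volume (K ∩ closedBall x δ) ≠ ⊤ :=
  measure_ne_top_of_subset inter_subset_right measure_closedBall_lt_top.ne

theorem localVolume_rpow_mul_rpow_le (hK : Convex ℝ K) (hKm : MeasurableSet K) {t : ℝ}
    (ht0 : 0 < t) (ht1 : t < 1) (x y : E) :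
    localVolume K δ x ^ (1 - t) * localVolume K δ y ^ t ≤
      localVolume K δ ((1 - t) • x + t • y) :=
  measureReal_rpow_mul_rpow_le ht0 ht1 (hKm.inter measurableSet_closedBall)
    (hKm.inter measurableSet_closedBall) (hKm.inter measurableSet_closedBall)
    (volume_inter_closedBall_ne_top _ _ _) fun _ hp _ hq =>
      ⟨hK hp.1 hq.1 (sub_nonneg.2 ht1.le) ht0.le (sub_add_cancel 1 t),
        convexCombination_mem_closedBall ht0.le ht1.le hp.2 hq.2⟩

theorem continuous_localVolume (hK : volume K ≠ ⊤) (hδ : 0 < δ) :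
    Continuous (localVolume K δ) := by
  have hint : localVolume K δ =
      fun x => ∫ y in K, (closedBall y δ).indicator (fun _ => (1 : ℝ)) x := by
    funext x
    have hcomm : ∀ y, (closedBall y δ).indicator (fun _ => (1 : ℝ)) x =
        (closedBall x δ).indicator (fun _ => (1 : ℝ)) y := fun y => by
      simp only [indicator, mem_closedBall, dist_comm]
    simp only [hcomm]
    rw [setIntegral_indicator measurableSet_closedBall]
    simp [localVolume]
  rw [hint, continuous_iff_continuousAt]
  intro x₀
  refine continuousAt_of_dominated (bound := fun _ => (1 : ℝ))
    (Eventually.of_forall fun x => ?_)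
    (Eventually.of_forall fun x => Eventually.of_forall fun y =>
      (norm_indicator_le_norm_self _ _).trans (by simp))
    (integrableOn_const hK) ?_
  · have hmeas : MeasurableSet {y | x ∈ closedBall y δ} :=
      measurableSet_le (measurable_const.dist measurable_id) measurable_const
    exact (stronglyMeasurable_const.indicator hmeas).aestronglyMeasurable
  · have hsphere : ∀ᵐ y ∂volume.restrict K, y ∉ sphere x₀ δ :=
      ae_restrict_of_ae (measure_eq_zero_iff_ae_notMem.1
        (Measure.addHaar_sphere_of_ne_zero volume x₀ hδ.ne'))
    filter_upwards [hsphere] with y hy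
    refine continuousOn_const.continuousAt_indicator fun hfr => hy ?_
    exact mem_sphere_comm.1 (frontier_closedBall_subset_sphere hfr)

theorem localVolume_pos (hK : Convex ℝ K) (hKint : (interior K).Nonempty) (hδ : 0 < δ) {x : E}
    (hx : x ∈ K) : 0 < localVolume K δ x := by
  have hxcl : x ∈ closure (interior K) := by
    rw [hK.closure_interior_eq_closure_of_nonempty_interior hKint]
    exact subset_closure hx
  have hopen : 0 < volume (ball x δ ∩ interior K) :=
    (isOpen_ball.inter isOpen_interior).measure_pos _
      (mem_closure_iff.1 hxcl _ isOpen_ball (mem_ball_self hδ))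
  refine ENNReal.toReal_pos (hopen.trans_le (measure_mono fun y hy => ?_)).ne'
    (volume_inter_closedBall_ne_top _ _ _)
  exact ⟨interior_subset hy.2, ball_subset_closedBall hy.1⟩

theorem pow_finrank_mul_measureReal_le_of_mapsTo_homothety {A B : Set E} {z : E} {s : ℝ}
    (hs : 0 ≤ s) (hB : volume B ≠ ⊤) (hmaps : MapsTo (AffineMap.homothety z s) A B) :
    s ^ finrank ℝ E * volume.real A ≤ volume.real B := by
  have hmeas := measure_mono (μ := volume) hmaps.image_subset
  rw [Measure.addHaar_image_homothety, abs_of_nonneg (by positivity)] at hmeas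
  have hreal := ENNReal.toReal_mono hB hmeas
  rwa [ENNReal.toReal_mul, ENNReal.toReal_ofReal (by positivity)] at hreal

theorem pow_finrank_mul_localVolume_le (hK : Convex ℝ K) {w : E} (hw : w ∈ K) (a : E) {t : ℝ}
    (ht0 : 0 < t) (ht1 : t ≤ 1) :
    t ^ finrank ℝ E * localVolume K δ a ≤ localVolume K δ ((1 - t) • w + t • a) := by
  refine pow_finrank_mul_measureReal_le_of_mapsTo_homothety (z := w) ht0.le
    (volume_inter_closedBall_ne_top _ _ _) fun z hz => ?_
  rw [AffineMap.homothety_eq_lineMap, AffineMap.lineMap_apply_module]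
  refine ⟨hK hw hz.1 (sub_nonneg.2 ht1) ht0.le (sub_add_cancel 1 t), ?_⟩
  calc dist ((1 - t) • w + t • z) ((1 - t) • w + t • a) = t * dist z a := by
        rw [dist_add_left, dist_smul₀, Real.norm_of_nonneg ht0.le]
    _ ≤ 1 * δ := by gcongr; exact hz.2
    _ = δ := one_mul δ

end LocalVolume

section SpeedyMeasure

variable {E : Type*} [NormedAddCommGroup E]

/-- The Gaussian density `exp (-‖x‖² / (2 σ²))`, not normalised. -/
noncomputable def gaussianWeight (σ : ℝ) (x : E) : ℝ :=
  exp (-‖x‖ ^ 2 / (2 * σ ^ 2))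

theorem gaussianWeight_pos (σ : ℝ) (x : E) : 0 < gaussianWeight σ x :=
  exp_pos _

theorem continuous_gaussianWeight (σ : ℝ) : Continuous (gaussianWeight (E := E) σ) := by
  unfold gaussianWeight
  fun_prop

variable [InnerProductSpace ℝ E]

theorem exp_mul_gaussianWeight_rpow_mul_rpow (σ t : ℝ) (x y : E) :
    exp (t * (1 - t) * ‖x - y‖ ^ 2 / (2 * σ ^ 2)) *
        (gaussianWeight σ x ^ (1 - t) * gaussianWeight σ y ^ t) =
      gaussianWeight σ ((1 - t) • x + t • y) := by
  simp only [gaussianWeight, norm_sq_convexCombination, ← exp_mul, ← exp_add]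
  congr 1
  ring

variable [FiniteDimensional ℝ E] [MeasurableSpace E] [BorelSpace E] {K : Set E} {δ : ℝ}

/-- The stationary measure of the speedy walk on `K`, not normalised. -/
noncomputable def speedyMeasure (K : Set E) (δ σ : ℝ) : Measure E :=
  (volume.withDensity fun x => ENNReal.ofReal (localVolume K δ x * gaussianWeight σ x)).restrict K

theorem localVolume_mul_gaussianWeight_nonneg (K : Set E) (δ σ : ℝ) (x : E) :
    0 ≤ localVolume K δ x * gaussianWeight σ x :=
  mul_nonneg (localVolume_nonneg K δ x) (gaussianWeight_pos σ x).le

theorem continuous_localVolume_mul_gaussianWeight (hK : IsCompact K) (hδ : 0 < δ) (σ : ℝ) :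
    Continuous fun x => localVolume K δ x * gaussianWeight σ x :=
  (continuous_localVolume hK.measure_lt_top.ne hδ).mul (continuous_gaussianWeight σ)

theorem speedyMeasure_absolutelyContinuous (K : Set E) (δ σ : ℝ) : speedyMeasure K δ σ ≪ volume :=
  Measure.absolutelyContinuous_restrict.trans (withDensity_absolutelyContinuous _ _)

theorem isFiniteMeasure_speedyMeasure (hK : IsCompact K) (hδ : 0 < δ) (σ : ℝ) :
    IsFiniteMeasure (speedyMeasure K δ σ) := by
  rw [speedyMeasure, restrict_withDensity hK.measurableSet]
  exact isFiniteMeasure_withDensity_ofReal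
    ((continuous_localVolume_mul_gaussianWeight hK hδ σ).continuousOn.integrableOn_compact hK).2

theorem setIntegral_speedyMeasure (hK : IsCompact K) (hδ : 0 < δ) (σ : ℝ) {A : Set E}
    (hA : MeasurableSet A) (hAK : A ⊆ K) (g : E → ℝ) :
    ∫ x in A, g x ∂speedyMeasure K δ σ =
      ∫ x in A, g x * (localVolume K δ x * gaussianWeight σ x) := by
  rw [speedyMeasure, Measure.restrict_restrict hA, inter_eq_left.2 hAK,
    setIntegral_withDensity_eq_setIntegral_toReal_smul
      (continuous_localVolume_mul_gaussianWeight hK hδ σ).measurable.ennreal_ofReal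
      (Eventually.of_forall fun _ => ENNReal.ofReal_lt_top) _ hA]
  simp only [ENNReal.toReal_ofReal (localVolume_mul_gaussianWeight_nonneg K δ σ _), smul_eq_mul,
    mul_comm (g _)]

theorem stronglyLogConcave_speedyMeasure (hKconv : Convex ℝ K) (hK : IsCompact K) (hδ : 0 < δ)
    (σ : ℝ) : StronglyLogConcave (speedyMeasure K δ σ) σ := by
  refine (stronglyLogConcave_withDensity
    (continuous_localVolume_mul_gaussianWeight hK hδ σ).measurable
    (localVolume_mul_gaussianWeight_nonneg K δ σ) fun x y t ht0 ht1 => ?_).restrict hKconv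
    hK.measurableSet
  rw [mul_rpow (localVolume_nonneg K δ x) (gaussianWeight_pos σ x).le,
    mul_rpow (localVolume_nonneg K δ y) (gaussianWeight_pos σ y).le, mul_mul_mul_comm,
    mul_left_comm, exp_mul_gaussianWeight_rpow_mul_rpow]
  exact mul_le_mul_of_nonneg_right
    (localVolume_rpow_mul_rpow_le hKconv hK.measurableSet ht0 ht1 x y) (gaussianWeight_pos σ _).le

end SpeedyMeasure

section Localization

variable {E : Type*} [NormedAddCommGroup E] [InnerProductSpace ℝ E]

/-- The closed half-space with inner normal `u` whose bounding hyperplane passes through `q`. -/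
def halfSpace (u q : E) : Set E := {x | 0 ≤ ⟪u, x - q⟫}

theorem isClosed_halfSpace (u q : E) : IsClosed (halfSpace u q) :=
  isClosed_le continuous_const (by fun_prop)

theorem convex_halfSpace (u q : E) : Convex ℝ (halfSpace u q) := by
  have : halfSpace u q = {x | ⟪u, q⟫ ≤ innerSL ℝ u x} := by
    ext x
    simp only [halfSpace, mem_ofPred_eq, inner_sub_right, sub_nonneg, innerSL_apply_apply]
  rw [this]
  exact convex_halfSpace_ge (innerSL ℝ u).toLinearMap.isLinear _

theorem halfSpace_union_neg (u q : E) : halfSpace u q ∪ halfSpace (-u) q = univ := by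
  ext x
  simpa only [halfSpace, mem_union, mem_ofPred_eq, inner_neg_left, neg_nonneg, mem_univ, iff_true]
    using le_total 0 ⟪u, x - q⟫

theorem three_nonneg_eq_zero_of_pos_combination {a b c x y z : ℝ} (ha : 0 < a) (hb : 0 < b)
    (hc : 0 < c) (hx : 0 ≤ x) (hy : 0 ≤ y) (hz : 0 ≤ z) (h : a * x + b * y + c * z = 0) :
    x = 0 ∧ y = 0 ∧ z = 0 := by
  have hax := mul_nonneg ha.le hx
  have hby := mul_nonneg hb.le hy
  have hcz := mul_nonneg hc.le hz
  refine ⟨?_, ?_, ?_⟩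
  · exact (mul_eq_zero.1 (by linarith : a * x = 0)).resolve_left ha.ne'
  · exact (mul_eq_zero.1 (by linarith : b * y = 0)).resolve_left hb.ne'
  · exact (mul_eq_zero.1 (by linarith : c * z = 0)).resolve_left hc.ne'

theorem exists_mem_pos_barycentric {D : Set E} (hD : Dense D) {u w l m : E}
    (hdet : ⟪u, l⟫ * ⟪w, m⟫ - ⟪w, l⟫ * ⟪u, m⟫ ≠ 0) (A : E) :
    ∃ q ∈ D, ∃ β γ : ℝ, 0 < β ∧ 0 < γ ∧ β + γ < 1 ∧
      ∀ z ∈ Submodule.span ℝ {u, w}, ⟪z, q - A⟫ = β * ⟪z, l⟫ + γ * ⟪z, m⟫ := by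
  set Δ := ⟪u, l⟫ * ⟪w, m⟫ - ⟪w, l⟫ * ⟪u, m⟫ with hΔ
  let β : E → ℝ := fun x => (⟪u, x - A⟫ * ⟪w, m⟫ - ⟪w, x - A⟫ * ⟪u, m⟫) / Δ
  let γ : E → ℝ := fun x => (⟪u, l⟫ * ⟪w, x - A⟫ - ⟪w, l⟫ * ⟪u, x - A⟫) / Δ
  have hβ : Continuous β := by fun_prop
  have hγ : Continuous γ := by fun_prop
  have hopen : IsOpen {x | 0 < β x ∧ 0 < γ x ∧ β x + γ x < 1} :=
    (isOpen_lt continuous_const hβ).inter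
      ((isOpen_lt continuous_const hγ).inter (isOpen_lt (hβ.add hγ) continuous_const))
  have hne : {x | 0 < β x ∧ 0 < γ x ∧ β x + γ x < 1}.Nonempty := by
    refine ⟨A + ((1 / 3 : ℝ) • l + (1 / 3 : ℝ) • m), ?_⟩
    have hβ' : β (A + ((1 / 3 : ℝ) • l + (1 / 3 : ℝ) • m)) = 1 / 3 := by
      simp only [β, add_sub_cancel_left, inner_add_right, inner_smul_right]
      rw [div_eq_iff hdet, hΔ]
      ring
    have hγ' : γ (A + ((1 / 3 : ℝ) • l + (1 / 3 : ℝ) • m)) = 1 / 3 := by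
      simp only [γ, add_sub_cancel_left, inner_add_right, inner_smul_right]
      rw [div_eq_iff hdet, hΔ]
      ring
    rw [mem_ofPred_eq, hβ', hγ']
    norm_num
  obtain ⟨q, ⟨hβq, hγq, hβγq⟩, hqD⟩ := hD.inter_open_nonempty _ hopen hne
  refine ⟨q, hqD, β q, γ q, hβq, hγq, hβγq, fun z hz => ?_⟩
  obtain ⟨a, b, rfl⟩ := Submodule.mem_span_pair.1 hz
  simp only [β, γ, inner_add_left, inner_smul_left, conj_trivial]
  field_simp
  rw [hΔ]
  ring

-- If the shadow of `A`, `B`, `C` on the plane of `u` and `w` were a triangle, a point of `D` would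
-- lie strictly inside it, and no line through such a point has all three vertices on one side.
theorem inner_mul_inner_eq_of_forall_subset_halfSpace {Q D : Set E} (hD : Dense D) {u w : E}
    (hQ : ∀ q ∈ D, ∃ z ∈ Submodule.span ℝ {u, w}, z ≠ 0 ∧ Q ⊆ halfSpace z q)
    {A B C : E} (hA : A ∈ Q) (hB : B ∈ Q) (hC : C ∈ Q) :
    ⟪u, B - A⟫ * ⟪w, C - A⟫ = ⟪w, B - A⟫ * ⟪u, C - A⟫ := by
  by_contra hne
  have hdet := sub_ne_zero.2 hne
  obtain ⟨q, hqD, β, γ, hβ, hγ, hβγ, hq⟩ := exists_mem_pos_barycentric hD hdet A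
  obtain ⟨z, hz, hz0, hQz⟩ := hQ q hqD
  obtain ⟨hzA, hzB, hzC⟩ := three_nonneg_eq_zero_of_pos_combination (sub_pos.2 hβγ) hβ hγ
    (hQz hA) (hQz hB) (hQz hC) (by
      have := hq z hz
      simp only [inner_sub_right] at this ⊢
      linear_combination -this)
  have hzBA : ⟪z, B - A⟫ = 0 := by
    simp only [inner_sub_right] at *
    linarith
  have hzCA : ⟪z, C - A⟫ = 0 := by
    simp only [inner_sub_right] at *
    linarith
  obtain ⟨a, b, rfl⟩ := Submodule.mem_span_pair.1 hz
  rw [inner_add_left, real_inner_smul_left, real_inner_smul_left] at hzBA hzCA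
  have ha : a = 0 := by
    refine (mul_eq_zero.1 ?_).resolve_right hdet
    linear_combination ⟪w, C - A⟫ * hzBA - ⟪w, B - A⟫ * hzCA
  have hb : b = 0 := by
    refine (mul_eq_zero.1 ?_).resolve_right hdet
    linear_combination ⟪u, B - A⟫ * hzCA - ⟪u, C - A⟫ * hzBA
  exact hz0 (by rw [ha, hb, zero_smul, zero_smul, zero_add])

theorem exists_subset_line_of_forall_subset_halfSpace [Nontrivial E] {ι : Type*} [Fintype ι]
    (b : OrthonormalBasis ι ℝ E) {Q D : Set E} (hD : Dense D)
    (hQ : ∀ q ∈ D, ∀ i j, i ≠ j →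
      ∃ z ∈ Submodule.span ℝ {b i, b j}, z ≠ 0 ∧ Q ⊆ halfSpace z q) :
    ∃ a v : E, ‖v‖ = 1 ∧ ∀ x ∈ Q, ∃ c : ℝ, x = a + c • v := by
  rcases Q.subsingleton_or_nontrivial with hsub | ⟨A, hA, B, hB, hAB⟩
  · obtain ⟨v, hv⟩ := exists_norm_eq E zero_le_one
    rcases hsub.eq_empty_or_singleton with rfl | ⟨x, rfl⟩
    · exact ⟨0, v, hv, fun x hx => hx.elim⟩
    · exact ⟨x, v, hv, fun y hy => ⟨0, by rw [zero_smul, add_zero, mem_singleton_iff.1 hy]⟩⟩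
  · have hBA : B - A ≠ 0 := sub_ne_zero.2 hAB.symm
    obtain ⟨i, hi⟩ : ∃ i, ⟪b i, B - A⟫ ≠ 0 := by
      by_contra! h
      exact hBA (InnerProductSpace.ext_inner_left_basis (𝕜 := ℝ) b.toBasis
        fun i => by simpa using h i)
    refine ⟨A, ‖B - A‖⁻¹ • (B - A), norm_smul_inv_norm hBA, fun C hC =>
      ⟨⟪b i, C - A⟫ / ⟪b i, B - A⟫ * ‖B - A‖, ?_⟩⟩
    rw [smul_smul, mul_assoc, mul_inv_cancel₀ (norm_ne_zero_iff.2 hBA), mul_one,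
      ← sub_eq_iff_eq_add']
    refine InnerProductSpace.ext_inner_left_basis (𝕜 := ℝ) b.toBasis fun j => ?_
    rw [b.coe_toBasis, real_inner_smul_right, eq_comm, div_mul_eq_mul_div, div_eq_iff hi]
    rcases eq_or_ne i j with rfl | hij
    · rfl
    · linarith [inner_mul_inner_eq_of_forall_subset_halfSpace hD
        (fun q hq => hQ q hq i j hij) hA hB hC]

theorem one_lt_finrank_span_pair {ι : Type*} {b : ι → E} (hb : LinearIndependent ℝ b) {i j : ι}
    (hij : i ≠ j) : 1 < finrank ℝ (Submodule.span ℝ {b i, b j}) := by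
  have hinj : Function.Injective ![i, j] := by
    rwa [injective_pair_iff_ne]
  have := finrank_span_eq_card (hb.comp _ hinj)
  rw [range_comp, Matrix.range_cons_cons_empty, image_pair, Fintype.card_fin] at this
  omega

variable [FiniteDimensional ℝ E] [MeasurableSpace E] [BorelSpace E] {μ : Measure E}

theorem measure_hyperplane_eq_zero (hμ : μ ≪ volume) {u : E} (hu : u ≠ 0) (q : E) :
    μ {x | ⟪u, x - q⟫ = 0} = 0 := by
  have hset : {x | ⟪u, x - q⟫ = 0} = (AffineSubspace.mk' q (ℝ ∙ u)ᗮ : Set E) := by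
    ext x
    simp [AffineSubspace.mem_mk', Submodule.mem_orthogonal_singleton_iff_inner_right]
  rw [hset]
  refine hμ (Measure.addHaar_affineSubspace volume _ fun htop => hu ?_)
  have hdir : (ℝ ∙ u)ᗮ = ⊤ := by
    rw [← AffineSubspace.direction_mk' q (ℝ ∙ u)ᗮ, htop, AffineSubspace.direction_top]
  rwa [Submodule.orthogonal_eq_top_iff, Submodule.span_singleton_eq_bot] at hdir

theorem setIntegral_halfSpace_add_neg (hμ : μ ≪ volume) {g : E → ℝ} (hg : Integrable g μ)
    {P : Set E} (hP : MeasurableSet P) {u : E} (hu : u ≠ 0) (q : E) :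
    ∫ x in P ∩ halfSpace u q, g x ∂μ + ∫ x in P ∩ halfSpace (-u) q, g x ∂μ =
      ∫ x in P, g x ∂μ := by
  rw [← setIntegral_union₀ _
    (hP.inter (isClosed_halfSpace _ q).measurableSet).nullMeasurableSet hg.integrableOn
    hg.integrableOn, ← inter_union_distrib_left, halfSpace_union_neg, inter_univ]
  refine measure_mono_null ?_ (measure_hyperplane_eq_zero hμ hu q)
  rintro x ⟨⟨_, hx⟩, ⟨_, hx'⟩⟩
  simp only [halfSpace, mem_ofPred_eq, inner_neg_left] at hx hx' ⊢
  linarith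

theorem continuousAt_setIntegral_halfSpace (hμ : μ ≪ volume) {g : E → ℝ} (hg : Integrable g μ)
    (P : Set E) (q : E) {u : E} (hu : u ≠ 0) :
    ContinuousAt (fun u => ∫ x in P ∩ halfSpace u q, g x ∂μ) u := by
  have hmeas (u) : MeasurableSet (halfSpace u q) := (isClosed_halfSpace u q).measurableSet
  have hind (u) : ∫ x in P ∩ halfSpace u q, g x ∂μ =
      ∫ x in P, (halfSpace u q).indicator g x ∂μ := by
    rw [integral_indicator (hmeas u), Measure.restrict_restrict (hmeas u), inter_comm]
  simp only [hind]
  refine continuousAt_of_dominated (bound := fun x => ‖g x‖)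
    (.of_forall fun u => hg.integrableOn.aestronglyMeasurable.indicator (hmeas u))
    (.of_forall fun u => .of_forall fun x => norm_indicator_le_norm_self _ _)
    hg.integrableOn.norm (ae_restrict_of_ae ?_)
  have hnull : ∀ᵐ x ∂μ, ⟪u, x - q⟫ ≠ 0 := by
    rw [ae_iff]
    simpa only [ne_eq, not_not] using measure_hyperplane_eq_zero hμ hu q
  filter_upwards [hnull] with x hx
  have hcont : ContinuousAt (fun u : E => ⟪u, x - q⟫) u := by fun_prop
  refine continuousAt_const.congr (f := fun _ => (halfSpace u q).indicator g x) ?_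
  rcases hx.lt_or_gt with hneg | hpos
  · filter_upwards [hcont.eventually_lt continuousAt_const hneg] with u' hu'
    rw [indicator_of_notMem (s := halfSpace u q) (not_le.2 hneg),
      indicator_of_notMem (s := halfSpace u' q) (not_le.2 hu')]
  · filter_upwards [continuousAt_const.eventually_lt hcont hpos] with u' hu'
    rw [indicator_of_mem (s := halfSpace u q) (le_of_lt hpos),
      indicator_of_mem (s := halfSpace u' q) (le_of_lt hu')]

theorem exists_bisecting_halfSpace (hμ : μ ≪ volume) {g : E → ℝ} (hg : Integrable g μ)
    {P : Set E} (hP : MeasurableSet P) (h0 : ∫ x in P, g x ∂μ = 0) (q : E)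
    {V : Submodule ℝ E} (hV : 1 < finrank ℝ V) :
    ∃ z ∈ V, z ≠ 0 ∧ ∫ x in P ∩ halfSpace z q, g x ∂μ = 0 := by
  let D : V → ℝ := fun z => ∫ x in P ∩ halfSpace (z : E) q, g x ∂μ
  have hne {z : V} (hz : z ∈ ({0}ᶜ : Set V)) : (z : E) ≠ 0 := by simpa using hz
  have hD : ContinuousOn D {0}ᶜ := fun z hz =>
    (ContinuousAt.comp (g := fun u : E => ∫ x in P ∩ halfSpace u q, g x ∂μ)
      (continuousAt_setIntegral_halfSpace hμ hg P q (hne hz))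
      continuous_subtype_val.continuousAt).continuousWithinAt
  have hodd {z : V} (hz : z ∈ ({0}ᶜ : Set V)) : D z + D (-z) = 0 := by
    simpa only [D, h0, Submodule.coe_neg] using setIntegral_halfSpace_add_neg hμ hg hP (hne hz) q
  have hconn : IsConnected ({0}ᶜ : Set V) :=
    isConnected_compl_singleton_of_one_lt_rank (one_lt_rank_of_one_lt_finrank hV) 0
  obtain ⟨z₀, hz₀⟩ := hconn.nonempty
  have hz₀' : -z₀ ∈ ({0}ᶜ : Set V) := by simpa using hz₀
  obtain ⟨z, hz, hDz⟩ : (0 : ℝ) ∈ D '' {0}ᶜ := by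
    rcases le_total (D z₀) 0 with h | h
    · exact hconn.isPreconnected.intermediate_value hz₀ hz₀' hD ⟨h, by linarith [hodd hz₀]⟩
    · exact hconn.isPreconnected.intermediate_value hz₀' hz₀ hD ⟨by linarith [hodd hz₀], h⟩
  exact ⟨z, z.2, hne hz, hDz⟩

theorem exists_bisecting_halfSpace_of_neg (hμ : μ ≪ volume) {g₁ g₂ : E → ℝ}
    (hg₁ : Integrable g₁ μ) (hg₂ : Integrable g₂ μ) {P : Set E} (hP : MeasurableSet P)
    (h₁ : ∫ x in P, g₁ x ∂μ = 0) (h₂ : ∫ x in P, g₂ x ∂μ < 0) (q : E)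
    {V : Submodule ℝ E} (hV : 1 < finrank ℝ V) :
    ∃ z ∈ V, z ≠ 0 ∧ ∫ x in P ∩ halfSpace z q, g₁ x ∂μ = 0 ∧
      ∫ x in P ∩ halfSpace z q, g₂ x ∂μ < 0 := by
  obtain ⟨z, hzV, hz0, hz⟩ := exists_bisecting_halfSpace hμ hg₁ hP h₁ q hV
  have hsum₁ := setIntegral_halfSpace_add_neg hμ hg₁ hP hz0 q
  have hsum₂ := setIntegral_halfSpace_add_neg hμ hg₂ hP hz0 q
  by_cases hneg : ∫ x in P ∩ halfSpace z q, g₂ x ∂μ < 0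
  · exact ⟨z, hzV, hz0, hz, hneg⟩
  · exact ⟨-z, V.neg_mem hzV, neg_ne_zero.2 hz0, by linarith, by linarith⟩

theorem exists_antitone_seq_of_refinement {α ι : Type*} [Countable ι] [Nonempty ι]
    {p : Set α → Prop} {r : ι → Set α → Prop}
    (hstep : ∀ i P, p P → ∃ P' ⊆ P, p P' ∧ r i P') {K : Set α} (hK : p K) :
    ∃ P : ℕ → Set α, Antitone P ∧ P 0 = K ∧ (∀ k, p (P k)) ∧ ∀ i, ∃ k, r i (P k) := by
  obtain ⟨e, he⟩ := exists_surjective_nat ι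
  have hstep' (k : ℕ) (P : {P // p P}) : ∃ P' : {P // p P}, P'.1 ⊆ P.1 ∧ r (e k) P'.1 := by
    obtain ⟨P', hP', hp, hr⟩ := hstep (e k) P.1 P.2
    exact ⟨⟨P', hp⟩, hP', hr⟩
  choose next hsub hr using hstep'
  let P : ℕ → {P // p P} := fun k => Nat.rec ⟨K, hK⟩ next k
  refine ⟨fun k => (P k).1, antitone_nat_of_succ_le fun k => hsub k (P k), rfl,
    fun k => (P k).2, fun i => ?_⟩
  obtain ⟨k, rfl⟩ := he i
  exact ⟨k + 1, hr k (P k)⟩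

theorem exists_thin_convex_subset [Nontrivial E] (hμ : μ ≪ volume) {g₁ g₂ : E → ℝ}
    (hg₁ : Integrable g₁ μ) (hg₂ : Integrable g₂ μ) {K : Set E} (hK : IsCompact K)
    (hKconv : Convex ℝ K) (h₁ : ∫ x in K, g₁ x ∂μ = 0) (h₂ : ∫ x in K, g₂ x ∂μ < 0)
    {ε : ℝ} (hε : 0 < ε) :
    ∃ P ⊆ K, IsCompact P ∧ Convex ℝ P ∧
      (∃ a v : E, ‖v‖ = 1 ∧ ∀ x ∈ P, ‖(x - a) - ⟪v, x - a⟫ • v‖ < ε) ∧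
      ∫ x in P, g₁ x ∂μ = 0 ∧ ∫ x in P, g₂ x ∂μ < 0 := by
  let b := stdOrthonormalBasis ℝ E
  obtain ⟨D, hDc, hD⟩ := TopologicalSpace.exists_countable_dense E
  have : Countable D := hDc
  have : Nonempty D := hD.nonempty.to_subtype
  have : Nonempty (Fin (finrank ℝ E)) := ⟨⟨0, finrank_pos⟩⟩
  obtain ⟨P, hanti, hP0, hP, hcut⟩ := exists_antitone_seq_of_refinement
    (ι := D × Fin (finrank ℝ E) × Fin (finrank ℝ E))
    (p := fun P => IsCompact P ∧ Convex ℝ P ∧ ∫ x in P, g₁ x ∂μ = 0 ∧ ∫ x in P, g₂ x ∂μ < 0)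
    (r := fun i P => i.2.1 ≠ i.2.2 →
      ∃ z ∈ Submodule.span ℝ {b i.2.1, b i.2.2}, z ≠ 0 ∧ P ⊆ halfSpace z (i.1 : E)) (by
      rintro ⟨q, i, j⟩ P ⟨hPc, hPconv, hP₁, hP₂⟩
      rcases eq_or_ne i j with hij | hij
      · exact ⟨P, subset_rfl, ⟨hPc, hPconv, hP₁, hP₂⟩, fun h => absurd hij h⟩
      obtain ⟨z, hzV, hz0, hz₁, hz₂⟩ := exists_bisecting_halfSpace_of_neg hμ hg₁ hg₂
        hPc.measurableSet hP₁ hP₂ q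
        (one_lt_finrank_span_pair b.orthonormal.linearIndependent hij)
      exact ⟨P ∩ halfSpace z q, inter_subset_left, ⟨hPc.inter_right (isClosed_halfSpace z _),
        hPconv.inter (convex_halfSpace z _), hz₁, hz₂⟩, fun _ => ⟨z, hzV, hz0, inter_subset_right⟩⟩)
    ⟨hK, hKconv, h₁, h₂⟩
  obtain ⟨a, v, hv, hline⟩ := exists_subset_line_of_forall_subset_halfSpace b (Q := ⋂ k, P k) hD
    fun q hq i j hij => by
      obtain ⟨k, hk⟩ := hcut (⟨q, hq⟩, i, j)
      obtain ⟨z, hzV, hz0, hPz⟩ := hk hij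
      exact ⟨z, hzV, hz0, (iInter_subset P k).trans hPz⟩
  have hopen : IsOpen {x | ‖(x - a) - ⟪v, x - a⟫ • v‖ < ε} :=
    isOpen_lt (by fun_prop) continuous_const
  obtain ⟨k, hk⟩ := exists_subset_nhds_of_isCompact hanti.directed_ge (fun k => (hP k).1)
    fun x hx => hopen.mem_nhds (by
      obtain ⟨c, rfl⟩ := hline x hx
      simpa [inner_smul_right, hv] using hε)
  exact ⟨P k, hP0 ▸ hanti k.zero_le, (hP k).1, (hP k).2.1, ⟨a, v, hv, hk⟩, (hP k).2.2⟩

end Localization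

section OneDimensional

theorem mul_le_sub_of_le_log_sub_log {e x y : ℝ} (hx : 0 < x) (hy : 0 < y)
    (h : e ≤ log x - log y) : e * y ≤ x - y := by
  rw [← log_div hx.ne' hy.ne'] at h
  have hratio := h.trans (log_le_sub_one_of_pos (div_pos hx hy))
  rwa [div_sub_one hy.ne', le_div_iff₀ hy] at hratio

theorem StronglyLogConcave.exp_mul_measureReal_mul_le {E : Type*} [SeminormedAddCommGroup E]
    [Module ℝ E] [MeasurableSpace E] {μ : Measure E} [IsFiniteMeasure μ] {σ : ℝ}
    (hμ : StronglyLogConcave μ σ) {A B : Set E} (hA : MeasurableSet A) (hB : MeasurableSet B)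
    {r : ℝ} (hr : 0 ≤ r) (H : ∀ x ∈ A, ∀ y ∈ B, r ≤ ‖x - y‖) :
    exp (r ^ 2 / (4 * σ ^ 2)) * (μ.real A * μ.real B) ≤ μ.real univ ^ 2 := by
  have h := hμ.measureReal_le hA hB MeasurableSet.univ one_half_pos one_half_lt_one hr
    fun x hx y hy => ⟨H x hx y hy, mem_univ _⟩
  rw [sub_half, ← sqrt_eq_rpow, ← sqrt_eq_rpow] at h
  have hsq := pow_le_pow_left₀ (by positivity) h 2
  rw [mul_pow, mul_pow, ← exp_nat_mul, sq_sqrt measureReal_nonneg,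
    sq_sqrt measureReal_nonneg] at hsq
  have hexp : (2 : ℕ) * (1 / 2 * (1 / 2) * r ^ 2 / (2 * σ ^ 2)) = r ^ 2 / (4 * σ ^ 2) := by
    push_cast
    ring
  rwa [hexp] at hsq

section Tails

variable {ν : Measure ℝ} {σ : ℝ}

theorem measureReal_eq_univ_of_Icc_subset {α β : ℝ} (hsupp : ν (Icc α β)ᶜ = 0) {s : Set ℝ}
    (hs : Icc α β ⊆ s) : ν.real s = ν.real univ :=
  measureReal_congr <| ae_eq_univ.2 <| measure_mono_null (compl_subset_compl.2 hs) hsupp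

variable [IsFiniteMeasure ν]

theorem StronglyLogConcave.concaveOn_log_measureReal_Ici (hν : StronglyLogConcave ν σ) :
    ConcaveOn ℝ {x | 0 < ν.real (Ici x)} fun x => log (ν.real (Ici x)) := by
  have hlower : IsLowerSet {x | 0 < ν.real (Ici x)} := fun x y hyx hx =>
    hx.trans_le (measureReal_mono (Ici_subset_Ici.2 hyx))
  refine concaveOn_iff_forall_pos.2 ⟨hlower.ordConnected.convex, ?_⟩
  intro x hx y hy a b ha hb hab
  obtain rfl := eq_sub_of_add_eq hab
  refine hν.log_measureReal_le measurableSet_Ici measurableSet_Ici measurableSet_Ici hb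
    (by linarith) (fun u hu v hv => ?_) hx hy
  exact add_le_add (mul_le_mul_of_nonneg_left hu ha.le) (mul_le_mul_of_nonneg_left hv hb.le)

theorem StronglyLogConcave.concaveOn_log_measureReal_Iic (hν : StronglyLogConcave ν σ) :
    ConcaveOn ℝ {x | 0 < ν.real (Iic x)} fun x => log (ν.real (Iic x)) := by
  have hupper : IsUpperSet {x | 0 < ν.real (Iic x)} := fun x y hxy hx =>
    hx.trans_le (measureReal_mono (Iic_subset_Iic.2 hxy))
  refine concaveOn_iff_forall_pos.2 ⟨hupper.ordConnected.convex, ?_⟩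
  intro x hx y hy a b ha hb hab
  obtain rfl := eq_sub_of_add_eq hab
  refine hν.log_measureReal_le measurableSet_Iic measurableSet_Iic measurableSet_Iic hb
    (by linarith) (fun u hu v hv => ?_) hx hy
  exact add_le_add (mul_le_mul_of_nonneg_left hu ha.le) (mul_le_mul_of_nonneg_left hv hb.le)

variable [NullSingletonClass ν]

theorem measureReal_Ici_add_Iic (u : ℝ) : ν.real (Ici u) + ν.real (Iic u) = ν.real univ := by
  rw [measureReal_congr (Iio_ae_eq_Iic (μ := ν) (a := u)).symm, ← compl_Ici]
  exact measureReal_add_measureReal_compl measurableSet_Ici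

theorem measureReal_Ioo_eq_sub {a b : ℝ} (hab : a ≤ b) :
    ν.real (Ioo a b) = ν.real (Ici a) - ν.real (Ici b) := by
  rw [← measureReal_sdiff (Ici_subset_Ici.2 hab) measurableSet_Ici,
    measureReal_congr (Ioo_ae_eq_Ico (μ := ν) (a := a) (b := b)), Ici_sdiff_Ici]

theorem exists_median {α β : ℝ} (hαβ : α ≤ β) (hsupp : ν (Icc α β)ᶜ = 0) :
    ∃ m ∈ Icc α β, ν.real (Ici m) = ν.real univ / 2 := by
  have hprim {u : ℝ} (hu : u ∈ Icc α β) : ∫ _ in α..u, (1 : ℝ) ∂ν = ν.real (Iic u) := by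
    rw [intervalIntegral.integral_of_le hu.1, setIntegral_const, smul_eq_mul, mul_one]
    have hα : ν (Iic α) = 0 := by
      rw [measure_congr (Iio_ae_eq_Iic (μ := ν) (a := α)).symm]
      exact measure_mono_null (subset_compl_iff_disjoint_left.2
        (Iio_disjoint_Ici le_rfl |>.mono_right Icc_subset_Ici_self).symm) hsupp
    rw [← Iic_sdiff_Iic]
    exact measureReal_congr (sdiff_null_ae_eq_self hα)
  have hcont : ContinuousOn (fun u => ∫ _ in α..u, (1 : ℝ) ∂ν) (Icc α β) :=
    (intervalIntegral.continuous_primitive (fun a b => intervalIntegrable_const) α).continuousOn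
  have hβ : ν.real (Iic β) = ν.real univ :=
    measureReal_eq_univ_of_Icc_subset hsupp Icc_subset_Iic_self
  obtain ⟨m, hm, hmF⟩ := intermediate_value_Icc hαβ hcont
    (show ν.real univ / 2 ∈ Icc _ _ by
      rw [hprim (right_mem_Icc.2 hαβ), hβ, intervalIntegral.integral_same]
      constructor <;> linarith [measureReal_nonneg (μ := ν) (s := univ)])
  refine ⟨m, hm, ?_⟩
  rw [← measureReal_Ici_add_Iic m] at hmF ⊢
  simp only [hprim hm] at hmF
  linarith

-- Since `e ^ 4 ≥ 50`, at most `1 / 25` of the mass lies left of `m - 4 σ`, so the ratio of the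
-- tails is at least `2 · 24 / 25 ≥ 9 / 5`, and `log (9 / 5) ≥ 4 / 9`.
theorem StronglyLogConcave.two_fifths_le_log_tail_sub (hν : StronglyLogConcave ν σ) (hσ : 0 < σ)
    {m : ℝ} (hM : 0 < ν.real univ) (hm : ν.real (Ici m) = ν.real univ / 2) :
    2 / 5 ≤ log (ν.real (Ici (m - 4 * σ))) - log (ν.real (Ici m)) := by
  have hconc := hν.exp_mul_measureReal_mul_le (A := Iic (m - 4 * σ)) (B := Ici m) measurableSet_Iic
    measurableSet_Ici (r := 4 * σ) (by positivity) fun x hx y hy => by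
      rw [norm_sub_rev]
      exact le_trans (by linarith [mem_Iic.1 hx, mem_Ici.1 hy]) (le_norm_self _)
  have hexp : (4 * σ) ^ 2 / (4 * σ ^ 2) = (4 : ℕ) * 1 := by
    field_simp
    norm_num
  have hexp4 : (50 : ℝ) ≤ exp 1 ^ 4 :=
    le_trans (by norm_num) (pow_le_pow_left₀ (by norm_num) exp_one_gt_d9.le 4)
  rw [hexp, exp_nat_mul, hm] at hconc
  set M := ν.real univ
  have hsum := measureReal_Ici_add_Iic (ν := ν) (m - 4 * σ)
  have hF : 25 * ν.real (Iic (m - 4 * σ)) ≤ M := by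
    refine le_of_mul_le_mul_left ?_ hM
    have := mul_le_mul_of_nonneg_right hexp4
      (by positivity : 0 ≤ ν.real (Iic (m - 4 * σ)) * (M / 2))
    nlinarith
  have hratio : 9 / 5 ≤ ν.real (Ici (m - 4 * σ)) / (M / 2) := by
    rw [le_div_iff₀ (half_pos hM)]
    linarith
  have hlog := one_sub_inv_le_log_of_pos (lt_of_lt_of_le (by norm_num) hratio)
  have hinv := inv_anti₀ (by norm_num) hratio
  rw [hm, ← log_div (by linarith) (half_pos hM).ne']
  linarith

theorem StronglyLogConcave.div_le_log_tail_sub (hν : StronglyLogConcave ν σ) (hσ : 0 < σ)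
    {m s' s : ℝ} (hM : 0 < ν.real univ) (hm : ν.real (Ici m) = ν.real univ / 2) (hms' : m ≤ s')
    (hs's : s' < s) (hs : 0 < ν.real (Ici s)) :
    (s - s') / (10 * σ) ≤ log (ν.real (Ici s')) - log (ν.real (Ici s)) := by
  have hconc := hν.concaveOn_log_measureReal_Ici
  have hpos {x : ℝ} (hx : x ≤ s) : 0 < ν.real (Ici x) :=
    hs.trans_le (measureReal_mono (Ici_subset_Ici.2 hx))
  have hslope : (log (ν.real (Ici m)) - log (ν.real (Ici (m - 4 * σ)))) / (m - (m - 4 * σ)) ≤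
      -(1 / (10 * σ)) := by
    rw [sub_sub_cancel, div_le_iff₀ (by positivity)]
    have : -(1 / (10 * σ)) * (4 * σ) = -(2 / 5) := by
      field_simp
      norm_num
    linarith [hν.two_fifths_le_log_tail_sub hσ hM hm]
  have hslope' : (log (ν.real (Ici s)) - log (ν.real (Ici s'))) / (s - s') ≤ -(1 / (10 * σ)) := by
    have hleft : m - 4 * σ < m := by linarith
    rcases hms'.eq_or_lt with rfl | hlt
    · exact (hconc.slope_anti_adjacent (hpos (by linarith)) hs hleft hs's).trans hslope
    · exact ((hconc.slope_anti_adjacent (hpos (by linarith)) hs hlt hs's).trans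
        (hconc.slope_anti_adjacent (hpos (by linarith)) (hpos hs's.le) hleft hlt)).trans hslope
  rw [div_le_iff₀ (sub_pos.2 hs's)] at hslope'
  rw [div_eq_mul_one_div]
  linarith

end Tails

end OneDimensional

section Separation

variable {E : Type*} [SeminormedAddCommGroup E] {Φ : E → ℝ} {d h : ℝ} {x y z : E}

/-- Two points are separated when either their distance is at least `d` or their values under the
potential `Φ` differ by at least `h`. -/
def Separated (Φ : E → ℝ) (d h : ℝ) (x y : E) : Prop := d ≤ ‖x - y‖ ∨ h ≤ |Φ x - Φ y|

theorem Separated.symm (hxy : Separated Φ d h x y) : Separated Φ d h y x := by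
  rwa [Separated, norm_sub_rev, abs_sub_comm]

theorem Separated.half_or_half (hxz : Separated Φ d h x z) (y : E) :
    Separated Φ (d / 2) (h / 2) y x ∨ Separated Φ (d / 2) (h / 2) y z := by
  by_contra! hcon
  simp only [Separated, not_or, not_le] at hcon
  obtain ⟨⟨hyx, hΦyx⟩, hyz, hΦyz⟩ := hcon
  rw [norm_sub_rev] at hyx
  rw [abs_sub_comm] at hΦyx
  rcases hxz with hxz | hxz
  · linarith [norm_sub_le_norm_sub_add_norm_sub x y z]
  · linarith [abs_sub_le (Φ x) (Φ y) (Φ z)]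

theorem not_separated_self (hd : 0 < d) (hh : 0 < h) (x : E) : ¬ Separated Φ d h x x := by
  simp [Separated, hd, hh]

theorem isClosed_setOf_separated {I : Set E} (hI : IsClosed I) (hΦ : ContinuousOn Φ I) (y : E) :
    IsClosed {x ∈ I | Separated Φ d h x y} := by
  have hdist : IsClosed {x ∈ I | d ≤ ‖x - y‖} :=
    hI.isClosed_le continuousOn_const (by fun_prop)
  have hpot : IsClosed {x ∈ I | h ≤ |Φ x - Φ y|} :=
    hI.isClosed_le continuousOn_const (hΦ.sub continuousOn_const).abs
  convert hdist.union hpot using 1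
  ext x
  exact and_or_left

end Separation

section HomothetyBound

/-- `Φ` decreases by at most `N |log t|` under a homothety of ratio `t` about a point of `I`. For
`Φ` the logarithm of a local volume this holds with `N` the dimension. -/
def LogHomothetyBound {E : Type*} [AddCommGroup E] [Module ℝ E] (N : ℝ) (I : Set E)
    (Φ : E → ℝ) : Prop :=
  ∀ ⦃w⦄, w ∈ I → ∀ ⦃a⦄, a ∈ I → ∀ ⦃t : ℝ⦄, 0 < t → t ≤ 1 →
    Φ a + N * log t ≤ Φ ((1 - t) • w + t • a)

variable {E F : Type*} [AddCommGroup E] [Module ℝ E] [AddCommGroup F] [Module ℝ F] {N : ℝ}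
  {I : Set E} {Φ : E → ℝ}

theorem LogHomothetyBound.comp_affineMap (hΦ : LogHomothetyBound N I Φ) (c : F →ᵃ[ℝ] E)
    {J : Set F} (hc : MapsTo c J I) : LogHomothetyBound N J (Φ ∘ c) := by
  intro w hw a ha t ht0 ht1
  have hcomb : c ((1 - t) • w + t • a) = (1 - t) • c w + t • c a :=
    Convex.combo_affine_apply (sub_add_cancel 1 t)
  simpa only [Function.comp_apply, hcomb] using hΦ (hc hw) (hc ha) ht0 ht1

theorem LogHomothetyBound.le_inv_sub_one (hΦ : LogHomothetyBound N I Φ) (hN : 0 < N) {w a : E}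
    (hw : w ∈ I) (ha : a ∈ I) {t : ℝ} (ht0 : 0 < t) (ht1 : t ≤ 1)
    (hdrop : 1 / 2 ≤ Φ a - Φ ((1 - t) • w + t • a)) : 1 / (2 * N) ≤ t⁻¹ - 1 := by
  have hbound := hΦ hw ha ht0 ht1
  have hlog := log_le_sub_one_of_pos (inv_pos.2 ht0)
  rw [log_inv] at hlog
  refine le_trans ?_ hlog
  rw [div_le_iff₀ (by positivity)]
  linarith

end HomothetyBound

/-- The one-dimensional data produced by localization: a strongly log-concave measure on a segment,
with a potential that is continuous and obeys a homothety bound there. -/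
structure Needle (ν : Measure ℝ) (Φ : ℝ → ℝ) (α β σ N : ℝ) : Prop where
  stronglyLogConcave : StronglyLogConcave ν σ
  measure_compl_Icc : ν (Icc α β)ᶜ = 0
  continuousOn : ContinuousOn Φ (Icc α β)
  logHomothetyBound : LogHomothetyBound N (Icc α β) Φ

namespace Needle

variable {ν : Measure ℝ} {Φ : ℝ → ℝ} {α β σ N d m s s' : ℝ}

theorem neg (hν : Needle ν Φ α β σ N) :
    Needle (ν.map Neg.neg) (Φ ∘ Neg.neg) (-β) (-α) σ N := by
  have hmaps : MapsTo Neg.neg (Icc (-β) (-α)) (Icc α β) := fun x hx =>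
    ⟨le_neg.1 hx.2, neg_le.1 hx.1⟩
  refine ⟨hν.stronglyLogConcave.map (-LinearMap.id) measurable_neg fun x => (norm_neg x).le, ?_,
    hν.continuousOn.comp continuousOn_neg hmaps,
    hν.logHomothetyBound.comp_affineMap (-LinearMap.id : ℝ →ₗ[ℝ] ℝ).toAffineMap hmaps⟩
  rw [Measure.map_apply measurable_neg measurableSet_Icc.compl]
  simpa using hν.measure_compl_Icc

theorem measureReal_Ici_left (hν : Needle ν Φ α β σ N) : ν.real (Ici α) = ν.real univ :=
  measureReal_eq_univ_of_Icc_subset hν.measure_compl_Icc Icc_subset_Ici_self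

theorem measureReal_Iic_right (hν : Needle ν Φ α β σ N) : ν.real (Iic β) = ν.real univ :=
  measureReal_eq_univ_of_Icc_subset hν.measure_compl_Icc Icc_subset_Iic_self

variable [IsFiniteMeasure ν]

theorem tail_drop_of_potential_rise (hν : Needle ν Φ α β σ N) (hN : 0 < N)
    (hm : ν.real (Ici m) = ν.real univ / 2) (hαm : α ≤ m) (hms' : m ≤ s') (hs's : s' < s)
    (hsβ : s ≤ β) (hs : 0 < ν.real (Ici s)) (hrise : 1 / 2 ≤ Φ s - Φ s') :
    1 / (4 * N) * ν.real (Ici s) ≤ ν.real (Ici s') - ν.real (Ici s) := by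
  have hs' : 0 < ν.real (Ici s') := hs.trans_le (measureReal_mono (Ici_subset_Ici.2 hs's.le))
  have hs'half : ν.real (Ici s') ≤ ν.real univ / 2 :=
    hm ▸ measureReal_mono (Ici_subset_Ici.2 hms')
  have hM : 0 < ν.real univ := by linarith
  have hαs' : α < s' := by
    refine (hαm.trans hms').lt_of_ne fun h => ?_
    rw [← h, hν.measureReal_Ici_left] at hs'half
    linarith
  have hmem : s' ∈ openSegment ℝ α s := by
    rw [openSegment_eq_Ioo (hαs'.trans hs's)]
    exact ⟨hαs', hs's⟩
  rw [openSegment_eq_image] at hmem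
  obtain ⟨t, ⟨ht0, ht1⟩, hts : (1 - t) • α + t • s = s'⟩ := hmem
  have hshrink := hν.logHomothetyBound.le_inv_sub_one hN (left_mem_Icc.2 (by linarith))
    ⟨by linarith, hsβ⟩ ht0 ht1.le (hts ▸ hrise)
  refine mul_le_sub_of_le_log_sub_log hs' hs ?_
  have hconc := hν.stronglyLogConcave.concaveOn_log_measureReal_Ici.2
    (x := α) (hM.trans_eq hν.measureReal_Ici_left.symm) (y := s) hs (sub_nonneg.2 ht1.le) ht0.le
    (sub_add_cancel 1 t)
  rw [hts] at hconc
  simp only [hν.measureReal_Ici_left, smul_eq_mul] at hconc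
  have hhalf : log 2 ≤ log (ν.real univ) - log (ν.real (Ici s')) := by
    rw [← log_div hM.ne' hs'.ne']
    exact log_le_log two_pos (by rw [le_div_iff₀ hs']; linarith)
  have hhalf' := mul_le_mul_of_nonneg_left hhalf (sub_nonneg.2 ht1.le)
  calc
    1 / (4 * N) = 1 / (2 * N) * (1 / 2) := by
      field_simp
      norm_num
    _ ≤ (t⁻¹ - 1) * log 2 :=
      mul_le_mul hshrink (by linarith [log_two_gt_d9]) (by norm_num)
        (le_trans (by positivity) hshrink)
    _ = (1 - t) * log 2 / t := by field_simp
    _ ≤ log (ν.real (Ici s')) - log (ν.real (Ici s)) := by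
      rw [div_le_iff₀ ht0]
      linarith

variable [NullSingletonClass ν]

theorem mul_le_measureReal_Iic_sub (hν : Needle ν Φ α β σ N) (hs's : s' ≤ s) {t : ℝ} (ht0 : 0 ≤ t)
    (ht1 : t ≤ 1) (hts : (1 - t) • β + t • s' = s) (hFs' : 0 < ν.real (Iic s')) :
    (1 - t) * (ν.real (Ici s') / ν.real univ) * ν.real (Iic s') ≤
      ν.real (Iic s) - ν.real (Iic s') := by
  have hβ := hν.measureReal_Iic_right
  have hM : 0 < ν.real univ := hFs'.trans_le (measureReal_mono (subset_univ _))
  have hconc := hν.stronglyLogConcave.concaveOn_log_measureReal_Iic.2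
    (x := β) (hM.trans_eq hβ.symm) (y := s') hFs' (sub_nonneg.2 ht1) ht0 (sub_add_cancel 1 t)
  rw [hts] at hconc
  simp only [hβ, smul_eq_mul] at hconc
  have hlogM : ν.real (Ici s') / ν.real univ ≤ log (ν.real univ) - log (ν.real (Iic s')) := by
    have := one_sub_inv_le_log_of_pos (div_pos hM hFs')
    rw [log_div hM.ne' hFs'.ne', inv_div] at this
    refine le_trans (le_of_eq ?_) this
    field_simp
    linarith [measureReal_Ici_add_Iic (ν := ν) s']
  exact mul_le_sub_of_le_log_sub_log (hFs'.trans_le (measureReal_mono (Iic_subset_Iic.2 hs's))) hFs'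
    (by linarith [mul_le_mul_of_nonneg_left hlogM (sub_nonneg.2 ht1)])

theorem tail_drop_of_potential_drop (hν : Needle ν Φ α β σ N) (hN : 1 ≤ N)
    (hm : ν.real (Ici m) = ν.real univ / 2) (hαm : α ≤ m) (hms' : m ≤ s') (hs's : s' < s)
    (hsβ : s ≤ β) (hs : 0 < ν.real (Ici s)) (hdrop : 1 / 2 ≤ Φ s' - Φ s) :
    1 / (6 * N) * ν.real (Ici s) ≤ ν.real (Ici s') - ν.real (Ici s) := by
  have hTs' : ν.real (Ici s) ≤ ν.real (Ici s') := measureReal_mono (Ici_subset_Ici.2 hs's.le)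
  have hs'half : ν.real (Ici s') ≤ ν.real univ / 2 :=
    hm ▸ measureReal_mono (Ici_subset_Ici.2 hms')
  have hM : 0 < ν.real univ := by linarith
  have hsum (u : ℝ) := measureReal_Ici_add_Iic (ν := ν) u
  have hβ := hν.measureReal_Iic_right
  have hsβ' : s < β := by
    refine hsβ.lt_of_ne fun h => ?_
    rw [h] at hs
    linarith [hsum β]
  have hFs' : 0 < ν.real (Iic s') := by linarith [hsum s']
  have hmem : s ∈ openSegment ℝ β s' := by
    rw [openSegment_symm, openSegment_eq_Ioo (hs's.trans hsβ')]
    exact ⟨hs's, hsβ'⟩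
  rw [openSegment_eq_image] at hmem
  obtain ⟨t, ⟨ht0, ht1⟩, hts : (1 - t) • β + t • s' = s⟩ := hmem
  have hshrink := hν.logHomothetyBound.le_inv_sub_one (by linarith) (right_mem_Icc.2 (by linarith))
    ⟨by linarith, by linarith⟩ ht0 ht1.le (hts ▸ hdrop)
  have hratio : 1 / (3 * N) ≤ 1 - t := by
    rw [div_le_iff₀ (by positivity)] at hshrink ⊢
    have := mul_le_mul_of_nonneg_left hshrink ht0.le
    have hcancel : t * ((t⁻¹ - 1) * (2 * N)) = (1 - t) * (2 * N) := by field_simp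
    nlinarith
  have hgain := hν.mul_le_measureReal_Iic_sub hs's.le ht0.le ht1.le hts hFs'
  calc
    1 / (6 * N) * ν.real (Ici s) = 1 / (3 * N) * (ν.real (Ici s) / ν.real univ) *
        (ν.real univ / 2) := by
      field_simp
      norm_num
    _ ≤ (1 - t) * (ν.real (Ici s') / ν.real univ) * ν.real (Iic s') := by
      gcongr
      linarith [hsum s']
    _ ≤ ν.real (Ici s') - ν.real (Ici s) := by linarith [hsum s', hsum s]

theorem tail_drop (hν : Needle ν Φ α β σ N) (hσ : 0 < σ) (hN : 1 ≤ N) (hd : d ≤ σ / (8 * N))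
    (hm : ν.real (Ici m) = ν.real univ / 2) (hαm : α ≤ m) (hms' : m ≤ s') (hs's : s' < s)
    (hsβ : s ≤ β) (hsep : Separated Φ (d / 2) (1 / 2) s' s) :
    d / (20 * σ) * ν.real (Ici s) ≤ ν.real (Ici s') - ν.real (Ici s) := by
  have hTs' : ν.real (Ici s) ≤ ν.real (Ici s') := measureReal_mono (Ici_subset_Ici.2 hs's.le)
  rcases (measureReal_nonneg (μ := ν) (s := Ici s)).eq_or_lt with hs | hs
  · rw [← hs, mul_zero, sub_zero]
    exact measureReal_nonneg
  have hs'half : ν.real (Ici s') ≤ ν.real univ / 2 :=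
    hm ▸ measureReal_mono (Ici_subset_Ici.2 hms')
  have hdN : d / (20 * σ) ≤ 1 / (160 * N) := by
    rw [div_le_div_iff₀ (by positivity) (by positivity)]
    rw [le_div_iff₀ (by positivity)] at hd
    linarith
  rcases hsep with hdist | hpot
  · refine le_trans ?_ (mul_le_sub_of_le_log_sub_log (hs.trans_le hTs') hs
      (hν.stronglyLogConcave.div_le_log_tail_sub hσ (by linarith) hm hms' hs's hs))
    rw [norm_sub_rev, norm_of_nonneg (sub_nonneg.2 hs's.le)] at hdist
    refine mul_le_mul_of_nonneg_right ?_ hs.le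
    rw [div_le_div_iff₀ (by positivity) (by positivity)]
    nlinarith
  · rcases le_abs'.1 hpot with hrise | hdrop
    · refine le_trans (mul_le_mul_of_nonneg_right (hdN.trans ?_) hs.le)
        (hν.tail_drop_of_potential_rise (by linarith) hm hαm hms' hs's hsβ hs (by linarith))
      gcongr
      norm_num
    · refine le_trans (mul_le_mul_of_nonneg_right (hdN.trans ?_) hs.le)
        (hν.tail_drop_of_potential_drop hN hm hαm hms' hs's hsβ hs hdrop)
      gcongr
      norm_num

end Needle

theorem exists_separated_gap {A : Set ℝ} {Φ : ℝ → ℝ} {α β m d h : ℝ} (hA : IsClosed A)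
    (hAI : A ⊆ Icc α β) (hΦ : ContinuousOn Φ (Icc α β)) (hαm : α ≤ m) (hd : 0 < d) (hh : 0 < h)
    (hne : (A ∩ Ici m).Nonempty) (hsep : ∀ y ∈ A, Separated Φ d h m y) :
    ∃ s', m ≤ s' ∧ ∃ s ∈ A, s' < s ∧ A ∩ Ici m ⊆ Ici s ∧ Separated Φ d h s' s ∧
      ∀ x ∈ Ioo s' s, ¬ Separated Φ d h x s := by
  have hbdd : BddBelow (A ∩ Ici m) := ⟨m, fun x hx => hx.2⟩
  obtain ⟨hsA, hms⟩ := (hA.inter isClosed_Ici).csInf_mem hne hbdd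
  set s := sInf (A ∩ Ici m)
  have hsub : Icc m s ⊆ Icc α β := Icc_subset_Icc hαm (hAI hsA).2
  have hclosed := isClosed_setOf_separated (d := d) (h := h) isClosed_Icc (hΦ.mono hsub) s
  have hbdd' : BddAbove {x ∈ Icc m s | Separated Φ d h x s} := ⟨s, fun x hx => hx.1.2⟩
  obtain ⟨⟨hms', hs's⟩, hseps⟩ :=
    hclosed.csSup_mem ⟨m, left_mem_Icc.2 hms, hsep s hsA⟩ hbdd'
  refine ⟨_, hms', s, hsA, hs's.lt_of_ne fun heq => ?_, fun x hx => csInf_le hbdd hx, hseps,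
    fun x hx hxs => ?_⟩
  · rw [heq] at hseps
    exact not_separated_self hd hh s hseps
  · exact hx.1.not_ge (le_csSup hbdd' ⟨⟨hms'.trans hx.1.le, hx.2.le⟩, hxs⟩)

namespace Needle

variable {ν : Measure ℝ} [IsFiniteMeasure ν] [NullSingletonClass ν] {Φ : ℝ → ℝ}
  {α β σ N d m : ℝ} {A₁ A₂ : Set ℝ}

theorem mul_measureReal_inter_Ici_le (hν : Needle ν Φ α β σ N) (hσ : 0 < σ) (hN : 1 ≤ N)
    (hd : 0 < d) (hdσ : d ≤ σ / (8 * N)) (hαm : α ≤ m) (hm : ν.real (Ici m) = ν.real univ / 2)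
    (hA₂ : IsClosed A₂) (hA₂I : A₂ ⊆ Icc α β)
    (hsep : ∀ x ∈ A₁, ∀ y ∈ A₂, Separated Φ d 1 x y)
    (hfar : ∀ y ∈ A₂, Separated Φ (d / 2) (1 / 2) m y) :
    d / (20 * σ) * ν.real (A₂ ∩ Ici m) ≤ ν.real (Ioi m \ (A₁ ∪ A₂)) := by
  rcases (A₂ ∩ Ici m).eq_empty_or_nonempty with hempty | hne
  · simp [hempty]
  obtain ⟨s', hms', s, hs, hs's, hmin, hseps, hgap⟩ :=
    exists_separated_gap hA₂ hA₂I hν.continuousOn hαm (half_pos hd) one_half_pos hne hfar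
  have hIoo : Ioo s' s ⊆ Ioi m \ (A₁ ∪ A₂) := by
    refine fun x hx => ⟨hms'.trans_lt hx.1, ?_⟩
    rintro (hx₁ | hx₂)
    · rcases (hsep x hx₁ s hs).half_or_half x with hself | hxs
      · exact not_separated_self (half_pos hd) one_half_pos x hself
      · exact hgap x hx hxs
    · exact hx.2.not_ge (hmin ⟨hx₂, hms'.trans hx.1.le⟩)
  calc
    d / (20 * σ) * ν.real (A₂ ∩ Ici m) ≤ d / (20 * σ) * ν.real (Ici s) := by
      gcongr
      exact measure_ne_top ν _
    _ ≤ ν.real (Ici s') - ν.real (Ici s) :=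
      hν.tail_drop hσ hN hdσ hm hαm hms' hs's (hA₂I hs).2 hseps
    _ = ν.real (Ioo s' s) := (measureReal_Ioo_eq_sub hs's.le).symm
    _ ≤ ν.real (Ioi m \ (A₁ ∪ A₂)) := measureReal_mono hIoo

theorem mul_measureReal_inter_Iic_le (hν : Needle ν Φ α β σ N) (hσ : 0 < σ) (hN : 1 ≤ N)
    (hd : 0 < d) (hdσ : d ≤ σ / (8 * N)) (hmβ : m ≤ β) (hm : ν.real (Iic m) = ν.real univ / 2)
    (hA₁ : IsClosed A₁) (hA₂ : IsClosed A₂) (hA₂I : A₂ ⊆ Icc α β)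
    (hsep : ∀ x ∈ A₁, ∀ y ∈ A₂, Separated Φ d 1 x y)
    (hfar : ∀ y ∈ A₂, Separated Φ (d / 2) (1 / 2) m y) :
    d / (20 * σ) * ν.real (A₂ ∩ Iic m) ≤ ν.real (Iio m \ (A₁ ∪ A₂)) := by
  have hreal {A : Set ℝ} (hA : MeasurableSet A) :
      (ν.map Neg.neg).real A = ν.real (Neg.neg ⁻¹' A) :=
    map_measureReal_apply measurable_neg hA
  have : NullSingletonClass (ν.map Neg.neg) := ⟨fun x => by
    rw [Measure.map_apply measurable_neg (measurableSet_singleton x)]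
    simp⟩
  have hsep_neg {d h x y : ℝ} (hxy : Separated Φ d h x y) :
      Separated (Φ ∘ Neg.neg) d h (-x) (-y) := by
    simpa [Separated, neg_add_eq_sub, norm_sub_rev] using hxy
  have hside := hν.neg.mul_measureReal_inter_Ici_le (A₁ := Neg.neg ⁻¹' A₁) (A₂ := Neg.neg ⁻¹' A₂)
    (m := -m) hσ hN hd hdσ (neg_le_neg hmβ) (by simpa [hreal measurableSet_Ici, hreal .univ])
    (hA₂.preimage continuous_neg)
    (fun x hx => ⟨neg_le.1 (hA₂I hx).2, le_neg.1 (hA₂I hx).1⟩)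
    (fun x hx y hy => by simpa using hsep_neg (hsep _ hx _ hy))
    (fun y hy => by simpa using hsep_neg (hfar _ hy))
  have hm₁ := hA₁.preimage continuous_neg |>.measurableSet
  have hm₂ := hA₂.preimage continuous_neg |>.measurableSet
  rw [hreal (hm₂.inter measurableSet_Ici),
    hreal (measurableSet_Ioi.diff (hm₁.union hm₂))] at hside
  simpa [← preimage_comp] using hside

theorem mul_measureReal_le_of_separated_median (hν : Needle ν Φ α β σ N) (hσ : 0 < σ)
    (hN : 1 ≤ N) (hd : 0 < d) (hdσ : d ≤ σ / (8 * N)) (hmI : m ∈ Icc α β)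
    (hm : ν.real (Ici m) = ν.real univ / 2) (hA₁ : IsClosed A₁) (hA₂ : IsClosed A₂)
    (hA₂I : A₂ ⊆ Icc α β) (hsep : ∀ x ∈ A₁, ∀ y ∈ A₂, Separated Φ d 1 x y)
    (hfar : ∀ y ∈ A₂, Separated Φ (d / 2) (1 / 2) m y) :
    d / (20 * σ) * ν.real A₂ ≤ ν.real (A₁ ∪ A₂)ᶜ := by
  have hright := hν.mul_measureReal_inter_Ici_le hσ hN hd hdσ hmI.1 hm hA₂ hA₂I hsep hfar
  have hleft := hν.mul_measureReal_inter_Iic_le hσ hN hd hdσ hmI.2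
    (by linarith [measureReal_Ici_add_Iic (ν := ν) m]) hA₁ hA₂ hA₂I hsep hfar
  have hcover : ν.real A₂ ≤ ν.real (A₂ ∩ Ici m) + ν.real (A₂ ∩ Iic m) := by
    refine le_trans (measureReal_mono fun x hx => ?_) (measureReal_union_le _ _)
    exact (le_total m x).imp (⟨hx, ·⟩) (⟨hx, ·⟩)
  have hdisj : Disjoint (Ioi m \ (A₁ ∪ A₂)) (Iio m \ (A₁ ∪ A₂)) :=
    Ioi_disjoint_Iio_same.mono sdiff_subset sdiff_subset
  have hsides : ν.real (Ioi m \ (A₁ ∪ A₂)) + ν.real (Iio m \ (A₁ ∪ A₂)) ≤ ν.real (A₁ ∪ A₂)ᶜ := by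
    rw [← measureReal_union hdisj
      (measurableSet_Iio.diff (hA₁.measurableSet.union hA₂.measurableSet))]
    exact measureReal_mono (union_subset (fun x hx => hx.2) fun x hx => hx.2)
  calc
    d / (20 * σ) * ν.real A₂ ≤
        d / (20 * σ) * ν.real (A₂ ∩ Ici m) + d / (20 * σ) * ν.real (A₂ ∩ Iic m) := by
      rw [← mul_add]
      gcongr
    _ ≤ ν.real (A₁ ∪ A₂)ᶜ := (add_le_add hright hleft).trans hsides

theorem isoperimetry (hν : Needle ν Φ α β σ N) (hσ : 0 < σ) (hN : 1 ≤ N) (hd : 0 < d)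
    (hdσ : d ≤ σ / (8 * N)) (hαβ : α ≤ β) (hA₁ : IsClosed A₁) (hA₂ : IsClosed A₂)
    (hA₁I : A₁ ⊆ Icc α β) (hA₂I : A₂ ⊆ Icc α β)
    (hsep : ∀ x ∈ A₁, ∀ y ∈ A₂, Separated Φ d 1 x y) :
    d / (20 * σ) * min (ν.real A₁) (ν.real A₂) ≤ ν.real (A₁ ∪ A₂)ᶜ := by
  -- The median cannot be near a point of `A₁` and near a point of `A₂` at the same time.
  obtain ⟨m, hmI, hm⟩ := exists_median hαβ hν.measure_compl_Icc
  by_cases hfar : ∀ y ∈ A₂, Separated Φ (d / 2) (1 / 2) m y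
  · refine le_trans ?_ (hν.mul_measureReal_le_of_separated_median hσ hN hd hdσ hmI hm hA₁ hA₂
      hA₂I hsep hfar)
    gcongr
    exact min_le_right _ _
  · push Not at hfar
    obtain ⟨y, hy, hnear⟩ := hfar
    rw [union_comm]
    refine le_trans ?_ (hν.mul_measureReal_le_of_separated_median hσ hN hd hdσ hmI hm hA₂ hA₁
      hA₁I (fun y hy x hx => (hsep x hx y hy).symm) fun x hx => ?_)
    · gcongr
      exact min_le_left _ _
    · exact ((hsep x hx y hy).half_or_half m).resolve_right hnear

end Needle

theorem Separated.of_mem_closure {E : Type*} [SeminormedAddCommGroup E] {Φ : E → ℝ} {d h : ℝ}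
    {I A₁ A₂ : Set E} (hI : IsClosed I) (hΦ : ContinuousOn Φ I) (hA₁ : A₁ ⊆ I) (hA₂ : A₂ ⊆ I)
    (hsep : ∀ x ∈ A₁, ∀ y ∈ A₂, Separated Φ d h x y) {x y : E} (hx : x ∈ closure A₁)
    (hy : y ∈ closure A₂) : Separated Φ d h x y := by
  have hclosure₁ {z : E} (hz : z ∈ A₂) : closure A₁ ⊆ {x ∈ I | Separated Φ d h x z} :=
    closure_minimal (fun x hx => ⟨hA₁ hx, hsep x hx z hz⟩) (isClosed_setOf_separated hI hΦ z)
  have hclosure₂ : closure A₂ ⊆ {z ∈ I | Separated Φ d h z x} :=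
    closure_minimal (fun z hz => ⟨hA₂ hz, (hclosure₁ hz hx).2.symm⟩)
      (isClosed_setOf_separated hI hΦ x)
  exact (hclosure₂ hy).2.symm

section ThinSets

variable {E : Type*} [NormedAddCommGroup E] [InnerProductSpace ℝ E] {P : Set E} {a v x y : E}
  {ε : ℝ}

theorem norm_sub_sub_inner_smul_lt (hthin : ∀ x ∈ P, ‖(x - a) - ⟪v, x - a⟫ • v‖ < ε)
    (hx : x ∈ P) (hy : y ∈ P) : ‖x - y - ⟪v, x - y⟫ • v‖ < 2 * ε := by
  have hsplit : x - y - ⟪v, x - y⟫ • v =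
      ((x - a) - ⟪v, x - a⟫ • v) - ((y - a) - ⟪v, y - a⟫ • v) := by
    simp only [inner_sub_right]
    module
  rw [hsplit]
  linarith [norm_sub_le ((x - a) - ⟪v, x - a⟫ • v) ((y - a) - ⟪v, y - a⟫ • v), hthin x hx,
    hthin y hy]

theorem Separated.inner_of_thin {Φ : E → ℝ} {Ψ : ℝ → ℝ} {d d' h : ℝ} (hv : ‖v‖ = 1)
    (hthin : ∀ x ∈ P, ‖(x - a) - ⟪v, x - a⟫ • v‖ < ε)
    (hΨ : ∀ x ∈ P, |Φ x - Ψ ⟪v, x⟫| ≤ (h - 1) / 2) (hd : d' + 2 * ε ≤ d) (hx : x ∈ P)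
    (hy : y ∈ P) (hsep : Separated Φ d h x y) : Separated Ψ d' 1 ⟪v, x⟫ ⟪v, y⟫ := by
  refine hsep.imp (fun hdist => ?_) fun hpot => ?_
  · have htriangle := norm_le_norm_add_norm_sub' (x - y) (⟪v, x - y⟫ • v)
    rw [norm_smul, hv, mul_one, inner_sub_right] at htriangle
    have hclose := norm_sub_sub_inner_smul_lt hthin hx hy
    rw [inner_sub_right] at hclose
    linarith
  · have hxΨ := hΨ x hx
    have hyΨ := hΨ y hy
    rw [abs_sub_comm] at hyΨ
    have htriangle₁ := abs_sub_le (Φ x) (Ψ ⟪v, x⟫) (Φ y)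
    have htriangle₂ := abs_sub_le (Ψ ⟪v, x⟫) (Ψ ⟪v, y⟫) (Φ y)
    rw [abs_sub_comm] at hyΨ
    linarith [abs_sub_comm (Ψ ⟪v, y⟫) (Φ y)]

theorem exists_affine_section (hP : IsCompact P) (hPconv : Convex ℝ P) (hne : P.Nonempty)
    (p : E →L[ℝ] ℝ) : ∃ α β : ℝ, α ≤ β ∧ MapsTo p P (Icc α β) ∧
      ∃ c : ℝ →ᵃ[ℝ] E, ∀ t ∈ Icc α β, c t ∈ P ∧ p (c t) = t := by
  obtain ⟨x₀, hx₀, hmin⟩ := hP.exists_isMinOn hne p.continuous.continuousOn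
  obtain ⟨x₁, hx₁, hmax⟩ := hP.exists_isMaxOn hne p.continuous.continuousOn
  refine ⟨p x₀, p x₁, hmin hx₁, fun x hx => ⟨hmin hx, hmax hx⟩, (AffineMap.lineMap x₀ x₁).comp
    ((p x₁ - p x₀)⁻¹ • (AffineMap.id ℝ ℝ - AffineMap.const ℝ ℝ (p x₀))), fun t ht => ?_⟩
  have hw₀ : 0 ≤ (p x₁ - p x₀)⁻¹ * (t - p x₀) :=
    mul_nonneg (inv_nonneg.2 (sub_nonneg.2 (hmin hx₁))) (sub_nonneg.2 ht.1)
  have hw₁ : (p x₁ - p x₀)⁻¹ * (t - p x₀) ≤ 1 :=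
    inv_mul_le_one_of_le₀ (by linarith [ht.2]) (sub_nonneg.2 (hmin hx₁))
  refine ⟨hPconv.lineMap_mem hx₀ hx₁ ⟨hw₀, hw₁⟩, ?_⟩
  have hvalue : p (AffineMap.lineMap x₀ x₁ ((p x₁ - p x₀)⁻¹ * (t - p x₀))) =
      p x₀ + (p x₁ - p x₀)⁻¹ * (t - p x₀) * (p x₁ - p x₀) := by
    simp [AffineMap.lineMap_apply, add_comm]
  refine hvalue.trans ?_
  rcases (sub_nonneg.2 (hmin hx₁) : 0 ≤ p x₁ - p x₀).eq_or_lt with hzero | hpos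
  · rw [← hzero, mul_zero, add_zero]
    linarith [ht.1, ht.2]
  · field_simp
    ring

end ThinSets

theorem Needle.isoperimetry_preimage {E : Type*} [TopologicalSpace E] [MeasurableSpace E]
    [OpensMeasurableSpace E] {μ : Measure E} [IsFiniteMeasure μ] {P S₁ S₂ : Set E} {p : E → ℝ}
    {Ψ : ℝ → ℝ} {α β σ N d : ℝ} (hp : Continuous p) [NullSingletonClass ((μ.restrict P).map p)]
    (hneedle : Needle ((μ.restrict P).map p) Ψ α β σ N) (hmaps : MapsTo p P (Icc α β))
    (hσ : 0 < σ) (hN : 1 ≤ N) (hd : 0 < d) (hdσ : d ≤ σ / (8 * N)) (hαβ : α ≤ β)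
    (hsep : ∀ x ∈ S₁ ∩ P, ∀ y ∈ S₂ ∩ P, Separated Ψ d 1 (p x) (p y)) :
    d / (20 * σ) * min (μ.real (S₁ ∩ P)) (μ.real (S₂ ∩ P)) ≤ μ.real (P \ (S₁ ∪ S₂)) := by
  have hreal {A : Set ℝ} (hA : MeasurableSet A) :
      ((μ.restrict P).map p).real A = μ.real (p ⁻¹' A ∩ P) := by
    rw [map_measureReal_apply hp.measurable hA, measureReal_restrict_apply (hp.measurable hA)]
  have himage (S : Set E) : p '' (S ∩ P) ⊆ Icc α β := image_subset_iff.2 fun x hx => hmaps hx.2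
  have hiso := hneedle.isoperimetry hσ hN hd hdσ hαβ (A₁ := closure (p '' (S₁ ∩ P)))
    (A₂ := closure (p '' (S₂ ∩ P))) isClosed_closure isClosed_closure
    (closure_minimal (himage S₁) isClosed_Icc) (closure_minimal (himage S₂) isClosed_Icc)
    fun s hs t ht => Separated.of_mem_closure isClosed_Icc hneedle.continuousOn (himage S₁)
      (himage S₂) (by
        rintro _ ⟨x, hx, rfl⟩ _ ⟨y, hy, rfl⟩
        exact hsep x hx y hy) hs ht
  have hshadow (S : Set E) : S ∩ P ⊆ p ⁻¹' closure (p '' (S ∩ P)) ∩ P := fun x hx =>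
    ⟨subset_closure (mem_image_of_mem p hx), hx.2⟩
  simp only [hreal isClosed_closure.measurableSet,
    hreal (isClosed_closure.union isClosed_closure).measurableSet.compl] at hiso
  refine (mul_le_mul_of_nonneg_left ?_ (by positivity)).trans (hiso.trans (measureReal_mono ?_))
  · exact min_le_min (measureReal_mono (hshadow S₁)) (measureReal_mono (hshadow S₂))
  · rintro x ⟨hx, hxP⟩
    exact ⟨hxP, fun hxS => hx (hxS.imp (fun h₁ => (hshadow S₁ ⟨h₁, hxP⟩).1)
      fun h₂ => (hshadow S₂ ⟨h₂, hxP⟩).1)⟩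

theorem setIntegral_indicator_const_sub {E : Type*} [MeasurableSpace E] {μ : Measure E}
    [IsFiniteMeasure μ] {S₁ S₂ : Set E} (hS₁ : MeasurableSet S₁)
    (hS₂ : MeasurableSet S₂) (Q : Set E) (r s : ℝ) :
    ∫ x in Q, (S₁.indicator (fun _ => r) - S₂.indicator (fun _ => s)) x ∂μ =
      r * μ.real (S₁ ∩ Q) - s * μ.real (S₂ ∩ Q) := by
  simp only [Pi.sub_apply]
  rw [integral_sub (((integrable_const r).indicator hS₁).integrableOn)
    (((integrable_const s).indicator hS₂).integrableOn), integral_indicator hS₁,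
    integral_indicator hS₂, Measure.restrict_restrict hS₁, Measure.restrict_restrict hS₂]
  simp [mul_comm]

section Isoperimetry

variable {E : Type*} [NormedAddCommGroup E] [InnerProductSpace ℝ E] [FiniteDimensional ℝ E]
  [MeasurableSpace E] [BorelSpace E] {μ : Measure E} {σ N d d' h ε : ℝ} {Φ : E → ℝ}
  {K P S₁ S₂ : Set E} {a v : E}

theorem nullSingletonClass_map_inner (hμ : μ ≪ volume) (hv : v ≠ 0) :
    NullSingletonClass (μ.map fun x => ⟪v, x⟫) where
  measure_singleton t := by
    rw [Measure.map_apply (by fun_prop) (measurableSet_singleton t)]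
    have hvv : ⟪v, v⟫ ≠ 0 := inner_self_ne_zero.2 hv
    refine measure_mono_null (fun x hx => ?_)
      (measure_hyperplane_eq_zero hμ hv ((t / ⟪v, v⟫) • v))
    have hxt : ⟪v, x⟫ = t := hx
    rw [mem_ofPred_eq, inner_sub_right, real_inner_smul_right, div_mul_cancel₀ t hvv, hxt, sub_self]

theorem StronglyLogConcave.needle_map_inner (hμ : StronglyLogConcave μ σ) (hP : IsCompact P)
    (hPconv : Convex ℝ P) (hΦ : ContinuousOn Φ P) (hhom : LogHomothetyBound N P Φ)
    (hv : ‖v‖ = 1) {α β : ℝ} (hmaps : MapsTo (fun x => ⟪v, x⟫) P (Icc α β)) (c : ℝ →ᵃ[ℝ] E)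
    (hc : MapsTo c (Icc α β) P) :
    Needle ((μ.restrict P).map fun x => ⟪v, x⟫) (Φ ∘ c) α β σ N := by
  refine ⟨(hμ.restrict hPconv hP.measurableSet).map (innerₗ E v) (by fun_prop) fun x => ?_, ?_,
    hΦ.comp c.continuous_of_finiteDimensional.continuousOn hc, hhom.comp_affineMap c hc⟩
  · simpa [hv] using norm_inner_le_norm (𝕜 := ℝ) v x
  · rw [Measure.map_apply (by fun_prop) measurableSet_Icc.compl, preimage_compl, ← mem_ae_iff]
    filter_upwards [ae_restrict_mem hP.measurableSet] with x hx using hmaps hx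

theorem StronglyLogConcave.isoperimetry_of_thin [IsFiniteMeasure μ]
    (hμ : StronglyLogConcave μ σ) (hμvol : μ ≪ volume) (hσ : 0 < σ) (hN : 1 ≤ N)
    (hP : IsCompact P) (hPconv : Convex ℝ P) (hΦ : ContinuousOn Φ P)
    (hhom : LogHomothetyBound N P Φ) (hv : ‖v‖ = 1)
    (hthin : ∀ x ∈ P, ‖(x - a) - ⟪v, x - a⟫ • v‖ < ε)
    (hosc : ∀ x ∈ P, ∀ y ∈ P, ‖x - y‖ < 2 * ε → |Φ x - Φ y| ≤ (h - 1) / 2)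
    (hd' : 0 < d') (hd'σ : d' ≤ σ / (8 * N)) (hd : d' + 2 * ε ≤ d)
    (hsep : ∀ x ∈ S₁, ∀ y ∈ S₂, Separated Φ d h x y) :
    d' / (20 * σ) * min (μ.real (S₁ ∩ P)) (μ.real (S₂ ∩ P)) ≤ μ.real (P \ (S₁ ∪ S₂)) := by
  rcases P.eq_empty_or_nonempty with rfl | hne
  · simp
  obtain ⟨α, β, hαβ, hmaps, c, hc⟩ := exists_affine_section hP hPconv hne (innerSL ℝ v)
  have := nullSingletonClass_map_inner (Measure.restrict_le_self.absolutelyContinuous.trans hμvol)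
    (ne_zero_of_norm_ne_zero (hv ▸ one_ne_zero)) (μ := μ.restrict P)
  have hclose : ∀ x ∈ P, |Φ x - (Φ ∘ c) ⟪v, x⟫| ≤ (h - 1) / 2 := fun x hx => by
    obtain ⟨hcP, hpc⟩ := hc _ (hmaps hx)
    have hlevel : ⟪v, x - c ⟪v, x⟫⟫ = 0 := by
      rw [inner_sub_right]
      exact sub_eq_zero.2 hpc.symm
    refine hosc x hx _ hcP ?_
    have hdiam := norm_sub_sub_inner_smul_lt hthin hx hcP
    simp only [innerSL_apply_apply] at hdiam
    rwa [hlevel, zero_smul, sub_zero] at hdiam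
  exact (hμ.needle_map_inner hP hPconv hΦ hhom hv hmaps c fun t ht => (hc t ht).1)
    |>.isoperimetry_preimage (by fun_prop) hmaps hσ hN hd' hd'σ hαβ fun x hx y hy =>
      (hsep x hx.1 y hy.1).inner_of_thin hv hthin hclose hd hx.2 hy.2

theorem exists_thin_convex_subset_measureReal_lt [Nontrivial E] [IsFiniteMeasure μ]
    (hμ : μ ≪ volume) (hK : IsCompact K) (hKconv : Convex ℝ K) (hS₁ : MeasurableSet S₁)
    (hS₂ : MeasurableSet S₂) (hS₁K : S₁ ⊆ K) (hS₂K : S₂ ⊆ K) {κ : ℝ} (hκ : 0 ≤ κ)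
    (hlt : μ.real (K \ (S₁ ∪ S₂)) < κ * min (μ.real S₁) (μ.real S₂)) (hε : 0 < ε) :
    ∃ P ⊆ K, IsCompact P ∧ Convex ℝ P ∧
      (∃ a v : E, ‖v‖ = 1 ∧ ∀ x ∈ P, ‖(x - a) - ⟪v, x - a⟫ • v‖ < ε) ∧
      μ.real (P \ (S₁ ∪ S₂)) < κ * min (μ.real (S₁ ∩ P)) (μ.real (S₂ ∩ P)) := by
  have hmin : 0 < min (μ.real S₁) (μ.real S₂) :=
    pos_of_mul_pos_right (measureReal_nonneg.trans_lt hlt) hκ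
  set m₁ := μ.real S₁
  set m₂ := μ.real S₂
  have hm₁0 : 0 < m₁ := hmin.trans_le (min_le_left _ _)
  have hS₃ := hK.measurableSet.diff (hS₁.union hS₂)
  have hint {A : Set E} (hA : MeasurableSet A) (r : ℝ) : Integrable (A.indicator fun _ => r) μ :=
    (integrable_const r).indicator hA
  have hscale {x y : ℝ} (hx : 0 ≤ x) (hxy : m₂ * x - m₁ * y = 0) :
      κ * min 1 (m₂ / m₁) * x = κ * min x y := by
    have hy : m₂ / m₁ * x = y := by
      field_simp
      linarith
    rw [mul_assoc, min_mul_of_nonneg _ _ hx, one_mul, hy]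
  obtain ⟨P, hPK, hP, hPconv, hthin, hbalance, hneg⟩ := exists_thin_convex_subset hμ
    ((hint hS₁ m₂).sub (hint hS₂ m₁)) ((hint hS₃ 1).sub (hint hS₁ (κ * min 1 (m₂ / m₁)))) hK
    hKconv (by
      rw [setIntegral_indicator_const_sub hS₁ hS₂, inter_eq_left.2 hS₁K, inter_eq_left.2 hS₂K]
      ring) (by
      rw [setIntegral_indicator_const_sub hS₃ hS₁, inter_eq_left.2 hS₁K,
        inter_eq_left.2 sdiff_subset, hscale hm₁0.le (by ring)]
      linarith) hε
  refine ⟨P, hPK, hP, hPconv, hthin, ?_⟩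
  rw [setIntegral_indicator_const_sub hS₁ hS₂] at hbalance
  rw [setIntegral_indicator_const_sub hS₃ hS₁, hscale measureReal_nonneg hbalance, one_mul,
    sdiff_inter_right_comm, inter_eq_right.2 hPK] at hneg
  linarith

theorem StronglyLogConcave.isoperimetry [Nontrivial E] [IsFiniteMeasure μ]
    (hμ : StronglyLogConcave μ σ) (hμvol : μ ≪ volume) (hσ : 0 < σ) (hN : 1 ≤ N)
    (hK : IsCompact K) (hKconv : Convex ℝ K) (hΦ : ContinuousOn Φ K)
    (hhom : LogHomothetyBound N K Φ) (hh : 1 < h) (hd' : 0 < d') (hd'σ : d' ≤ σ / (8 * N))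
    (hd : d' < d) (hS₁ : MeasurableSet S₁) (hS₂ : MeasurableSet S₂) (hS₁K : S₁ ⊆ K)
    (hS₂K : S₂ ⊆ K) (hsep : ∀ x ∈ S₁, ∀ y ∈ S₂, Separated Φ d h x y) :
    d' / (20 * σ) * min (μ.real S₁) (μ.real S₂) ≤ μ.real (K \ (S₁ ∪ S₂)) := by
  by_contra! hlt
  obtain ⟨η, hη, hunif⟩ := uniformContinuousOn_iff.1
    (hK.uniformContinuousOn_of_continuous hΦ) _ (half_pos (sub_pos.2 hh))
  have hε : 0 < min η (d - d') / 2 := half_pos (lt_min hη (sub_pos.2 hd))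
  obtain ⟨P, hPK, hP, hPconv, ⟨a, v, hv, hthin⟩, hPlt⟩ :=
    exists_thin_convex_subset_measureReal_lt hμvol hK hKconv hS₁ hS₂ hS₁K hS₂K (by positivity)
      hlt hε
  refine hPlt.not_ge (hμ.isoperimetry_of_thin hμvol hσ hN hP hPconv (hΦ.mono hPK)
    (fun w hw b hb => hhom (hPK hw) (hPK hb)) hv hthin (fun x hx y hy hxy => ?_) hd' hd'σ ?_ hsep)
  · rw [mul_div_cancel₀ _ two_ne_zero, ← dist_eq_norm] at hxy
    exact (hunif x (hPK hx) y (hPK hy) (hxy.trans_le (min_le_left _ _))).le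
  · linarith [min_le_right η (d - d')]

end Isoperimetry

section LogLocalVolume

variable {E : Type*} [NormedAddCommGroup E] [InnerProductSpace ℝ E] [FiniteDimensional ℝ E]
  [MeasurableSpace E] [BorelSpace E] {K : Set E} {δ : ℝ}

theorem logHomothetyBound_log_localVolume (hK : Convex ℝ K) (hKint : (interior K).Nonempty)
    (hδ : 0 < δ) :
    LogHomothetyBound (finrank ℝ E) K fun x => log (localVolume K δ x) := by
  intro w hw a ha t ht0 ht1
  have hpos := localVolume_pos hK hKint hδ ha
  calc log (localVolume K δ a) + finrank ℝ E * log t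
      = log (t ^ finrank ℝ E * localVolume K δ a) := by
        rw [log_mul (by positivity) hpos.ne', log_pow, add_comm]
    _ ≤ log (localVolume K δ ((1 - t) • w + t • a)) :=
        log_le_log (by positivity) (pow_finrank_mul_localVolume_le hK hw a ht0 ht1)

theorem continuousOn_log_localVolume (hK : IsCompact K) (hKconv : Convex ℝ K)
    (hKint : (interior K).Nonempty) (hδ : 0 < δ) :
    ContinuousOn (fun x => log (localVolume K δ x)) K :=
  (continuous_localVolume hK.measure_lt_top.ne hδ).continuousOn.log fun _ hx =>
    (localVolume_pos hKconv hKint hδ hx).ne'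

theorem localVolume_lt_mul_of_log_sub_log_lt (hK : Convex ℝ K) (hKint : (interior K).Nonempty)
    (hδ : 0 < δ) {x y : E} (hx : x ∈ K) (hy : y ∈ K) {c : ℝ} (hc : 0 < c)
    (hlog : log (localVolume K δ x) - log (localVolume K δ y) < log c) :
    localVolume K δ x < c * localVolume K δ y := by
  have hx0 := localVolume_pos hK hKint hδ hx
  have hy0 := localVolume_pos hK hKint hδ hy
  rwa [← log_lt_log_iff hx0 (by positivity), log_mul hc.ne' hy0.ne', ← sub_lt_iff_lt_add]

end LogLocalVolume

section Overlap

variable {E : Type*} [NormedAddCommGroup E] [InnerProductSpace ℝ E]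

theorem norm_sq_midpoint_sub_le {x y p q : E} {δ : ℝ} (hp : ‖p - x‖ ≤ δ) (hq : ‖q - y‖ ≤ δ)
    (hpy : δ ≤ ‖p - y‖) : ‖midpoint ℝ p q - x‖ ^ 2 ≤ δ ^ 2 + ‖x - y‖ ^ 2 := by
  have hmid : midpoint ℝ p q - x = (1 / 2 : ℝ) • ((p - x) + (q - y) + (y - x)) := by
    rw [midpoint_eq_smul_add, invOf_eq_inv]
    module
  have hfar : ‖p - x‖ ^ 2 ≤ ‖(p - x) - (y - x)‖ ^ 2 := by
    rw [sub_sub_sub_cancel_right]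
    gcongr
    exact hp.trans hpy
  rw [hmid, norm_sub_rev x y, norm_smul, mul_pow, Real.norm_of_nonneg (by norm_num)]
  generalize p - x = a, q - y = b, y - x = e at *
  have ha : ‖a‖ ^ 2 ≤ δ ^ 2 := by gcongr
  have hb : ‖b‖ ^ 2 ≤ δ ^ 2 := by gcongr
  have hsum : 0 ≤ ‖a - b + e‖ ^ 2 := by positivity
  rw [norm_sub_sq_real] at hfar
  rw [norm_add_sq_real, norm_sub_sq_real, inner_sub_left] at hsum
  rw [norm_add_sq_real, norm_add_sq_real, inner_add_left]
  linarith

theorem homothety_mem_closedBall_of_norm_sq_le {u w z : E} {δ d t : ℝ} (hδ : 0 ≤ δ) (ht0 : 0 ≤ t)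
    (ht1 : t ≤ 1) (hd : d ^ 2 ≤ t * δ ^ 2) (hw : ‖w - u‖ ^ 2 ≤ δ ^ 2 + d ^ 2)
    (hz : ‖z - u‖ ≤ d) : AffineMap.homothety z (1 - t) w ∈ closedBall u δ := by
  have hcomb : AffineMap.homothety z (1 - t) w - u = (1 - t) • (w - u) + t • (z - u) := by
    rw [AffineMap.homothety_apply, vsub_eq_sub, vadd_eq_add]
    module
  rw [mem_closedBall, dist_eq_norm, ← pow_le_pow_iff_left₀ (norm_nonneg _) hδ two_ne_zero, hcomb,
    norm_sq_convexCombination]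
  have hgap : 0 ≤ t * (1 - t) * ‖w - u - (z - u)‖ ^ 2 :=
    mul_nonneg (mul_nonneg ht0 (sub_nonneg.2 ht1)) (sq_nonneg _)
  calc (1 - t) * ‖w - u‖ ^ 2 + t * ‖z - u‖ ^ 2 - t * (1 - t) * ‖w - u - (z - u)‖ ^ 2
      ≤ (1 - t) * ‖w - u‖ ^ 2 + t * ‖z - u‖ ^ 2 := sub_le_self _ hgap
    _ ≤ (1 - t) * (δ ^ 2 + d ^ 2) + t * d ^ 2 := by
      have := sub_nonneg.2 ht1
      gcongr
    _ ≤ δ ^ 2 := by linarith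

theorem homothety_midpoint_mem_closedBall {x y p q : E} {δ t : ℝ} (hδ : 0 ≤ δ) (ht0 : 0 ≤ t)
    (ht1 : t ≤ 1) (hxy : ‖x - y‖ ^ 2 ≤ t * δ ^ 2) (hpx : p ∈ closedBall x δ)
    (hpy : p ∉ closedBall y δ) (hqy : q ∈ closedBall y δ) :
    AffineMap.homothety (midpoint ℝ x y) (1 - t) (midpoint ℝ p q) ∈ closedBall x δ := by
  refine homothety_mem_closedBall_of_norm_sq_le hδ ht0 ht1 hxy
    (norm_sq_midpoint_sub_le (mem_closedBall_iff_norm.1 hpx) (mem_closedBall_iff_norm.1 hqy)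
      (not_le.1 fun h => hpy (mem_closedBall_iff_norm.2 h)).le) ?_
  rw [← dist_eq_norm, dist_midpoint_left, dist_eq_norm, Real.norm_ofNat]
  linarith [norm_nonneg (x - y)]

variable [FiniteDimensional ℝ E] [MeasurableSpace E] [BorelSpace E]

theorem min_measureReal_le_of_midpoint_mem {A B C : Set E} (hA : MeasurableSet A)
    (hB : MeasurableSet B) (hC : MeasurableSet C) (hCtop : volume C ≠ ⊤)
    (H : ∀ x ∈ A, ∀ y ∈ B, midpoint ℝ x y ∈ C) :
    min (volume.real A) (volume.real B) ≤ volume.real C := by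
  set m := min (volume.real A) (volume.real B)
  have hm : 0 ≤ m := le_min measureReal_nonneg measureReal_nonneg
  calc m = m ^ (1 - 1 / 2 : ℝ) * m ^ (1 / 2 : ℝ) := by
        rw [← rpow_add_of_nonneg hm (by norm_num) (by norm_num), sub_add_cancel, rpow_one]
    _ ≤ volume.real A ^ (1 - 1 / 2 : ℝ) * volume.real B ^ (1 / 2 : ℝ) := by
      gcongr
      exacts [min_le_left _ _, min_le_right _ _]
    _ ≤ volume.real C :=
      measureReal_rpow_mul_rpow_le (by norm_num) (by norm_num) hA hB hC hCtop fun x hx y hy => by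
        convert H x hx y hy using 1
        rw [midpoint_eq_smul_add, invOf_eq_inv]
        module

theorem localVolume_eq_add (K : Set E) (δ : ℝ) (x y : E) :
    localVolume K δ x = volume.real (K ∩ closedBall x δ ∩ closedBall y δ) +
      volume.real ((K ∩ closedBall x δ) \ closedBall y δ) :=
  (measureReal_inter_add_sdiff measurableSet_closedBall
    (h := volume_inter_closedBall_ne_top K δ x)).symm

-- Midpoints of points of the two lunes leave the balls by so little that contracting them towards
-- the midpoint of the centres brings them back into both balls.
theorem pow_finrank_mul_min_measureReal_lune_le {K : Set E} {δ t : ℝ} {x y : E}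
    (hK : Convex ℝ K) (hKm : MeasurableSet K) (hδ : 0 ≤ δ) (hx : x ∈ K) (hy : y ∈ K)
    (ht0 : 0 ≤ t) (ht1 : t ≤ 1) (hxy : ‖x - y‖ ^ 2 ≤ t * δ ^ 2) :
    (1 - t) ^ finrank ℝ E * min (volume.real ((K ∩ closedBall x δ) \ closedBall y δ))
      (volume.real ((K ∩ closedBall y δ) \ closedBall x δ)) ≤
        volume.real (K ∩ closedBall x δ ∩ closedBall y δ) := by
  set C := K ∩ closedBall x δ ∩ closedBall y δ
  have hball (u : E) : MeasurableSet (K ∩ closedBall u δ) := hKm.inter measurableSet_closedBall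
  have hCm : MeasurableSet C := (hball x).inter measurableSet_closedBall
  set φ := AffineMap.homothety (midpoint ℝ x y) (1 - t) with hφ
  set C' := φ ⁻¹' C ∩ closedBall (midpoint ℝ x y) δ
  have hφK {p q : E} (hp : p ∈ K) (hq : q ∈ K) : φ (midpoint ℝ p q) ∈ K := by
    rw [hφ, AffineMap.homothety_eq_lineMap]
    exact hK.lineMap_mem (hK.midpoint_mem hx hy) (hK.midpoint_mem hp hq)
      ⟨sub_nonneg.2 ht1, sub_le_self 1 ht0⟩
  have hmem : ∀ p ∈ (K ∩ closedBall x δ) \ closedBall y δ,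
      ∀ q ∈ (K ∩ closedBall y δ) \ closedBall x δ, midpoint ℝ p q ∈ C' := by
    refine fun p hp q hq => ⟨⟨⟨hφK hp.1.1 hq.1.1,
      homothety_midpoint_mem_closedBall hδ ht0 ht1 hxy hp.1.2 hp.2 hq.1.2⟩, ?_⟩, ?_⟩
    · rw [hφ, midpoint_comm x y, midpoint_comm p q]
      exact homothety_midpoint_mem_closedBall hδ ht0 ht1 (by rwa [norm_sub_rev]) hq.1.2 hq.2 hp.1.2
    · refine (dist_midpoint_midpoint_le p q x y).trans ?_
      linarith [mem_closedBall.1 hp.1.2, mem_closedBall.1 hq.1.2]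
  calc _ ≤ (1 - t) ^ finrank ℝ E * volume.real C' := by
        have := sub_nonneg.2 ht1
        gcongr
        exact min_measureReal_le_of_midpoint_mem ((hball x).diff measurableSet_closedBall)
          ((hball y).diff measurableSet_closedBall)
          (((AffineMap.homothety_continuous _ _).measurable hCm).inter measurableSet_closedBall)
          (volume_inter_closedBall_ne_top _ _ _) hmem
    _ ≤ volume.real C :=
        pow_finrank_mul_measureReal_le_of_mapsTo_homothety (sub_nonneg.2 ht1)
          (volume_inter_closedBall_ne_top _ _ _) fun _ hw => hw.1

theorem mul_min_localVolume_le_measureReal_inter {K : Set E} {δ : ℝ} {x y : E}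
    (hK : Convex ℝ K) (hKm : MeasurableSet K) (hδ : 0 ≤ δ) (hx : x ∈ K) (hy : y ∈ K)
    (hxy : ‖x - y‖ ≤ δ / (2 * √(finrank ℝ E))) :
    3 / 7 * min (localVolume K δ x) (localVolume K δ y) ≤
      volume.real (K ∩ closedBall x δ ∩ closedBall y δ) := by
  set n := finrank ℝ E
  set t : ℝ := (n : ℝ)⁻¹ / 4 with ht
  have ht0 : 0 ≤ t := by positivity
  have ht1 : t ≤ 1 := by linarith [Nat.cast_inv_le_one (α := ℝ) n]
  have hdist : ‖x - y‖ ^ 2 ≤ t * δ ^ 2 :=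
    calc ‖x - y‖ ^ 2 ≤ (δ / (2 * √n)) ^ 2 := by gcongr
      _ = t * δ ^ 2 := by
        rw [div_pow, mul_pow, sq_sqrt n.cast_nonneg, ht]
        ring
  have hbernoulli : 3 / 4 ≤ (1 - t) ^ n := by
    have hnt : n * t ≤ 1 / 4 := by
      rw [ht]
      linarith [mul_inv_le_one (a := (n : ℝ))]
    rw [sub_eq_add_neg]
    exact le_trans (by linarith) (one_add_mul_le_pow (by linarith) n)
  have hlunes := (mul_le_mul_of_nonneg_right hbernoulli
    (le_min measureReal_nonneg measureReal_nonneg)).trans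
      (pow_finrank_mul_min_measureReal_lune_le hK hKm hδ hx hy ht0 ht1 hdist)
  rw [localVolume_eq_add K δ x y, localVolume_eq_add K δ y x, inter_right_comm K (closedBall y δ),
    min_add_add_left]
  linarith

end Overlap

section SpeedyStep

theorem min_one_div_nonneg {α : Type*} {f : α → ℝ} (hf : 0 ≤ f) (x y : α) : 0 ≤ min 1 (f y / f x) :=
  le_min zero_le_one (div_nonneg (hf y) (hf x))

theorem norm_min_one_div_le_one {α : Type*} {f : α → ℝ} (hf : 0 ≤ f) (x y : α) :
    ‖min 1 (f y / f x)‖ ≤ 1 := by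
  rw [Real.norm_of_nonneg (min_one_div_nonneg hf x y)]
  exact min_le_left _ _

variable {E : Type*} [NormedAddCommGroup E] [InnerProductSpace ℝ E] [FiniteDimensional ℝ E]
  [MeasurableSpace E] [BorelSpace E] {K S : Set E} {f : E → ℝ} {δ : ℝ} {x y : E}

/-- The probability that the speedy walk on `K` with step size `δ` and target density proportional
to `f` moves from `x` into `S` in one step, for `x ∉ S`. -/
noncomputable def speedyStep (f : E → ℝ) (K : Set E) (δ : ℝ) (x : E) (S : Set E) : ℝ :=
  (∫ y in S ∩ K ∩ closedBall x δ, min 1 (f y / f x)) / localVolume K δ x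

theorem speedyStep_nonneg (hf : 0 ≤ f) (K : Set E) (δ : ℝ) (x : E) (S : Set E) :
    0 ≤ speedyStep f K δ x S :=
  div_nonneg (integral_nonneg (min_one_div_nonneg hf x)) (localVolume_nonneg K δ x)

theorem speedyStep_le_one (hf : 0 ≤ f) (K : Set E) (δ : ℝ) (x : E) (S : Set E) :
    speedyStep f K δ x S ≤ 1 := by
  refine div_le_one_of_le₀ ?_ (localVolume_nonneg K δ x)
  calc ∫ y in S ∩ K ∩ closedBall x δ, min 1 (f y / f x)
      ≤ 1 * volume.real (S ∩ K ∩ closedBall x δ) :=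
        (le_norm_self _).trans (norm_setIntegral_le_of_norm_le_const
          (volume_inter_closedBall_ne_top _ _ _).lt_top fun y _ => norm_min_one_div_le_one hf x y)
    _ ≤ localVolume K δ x := by
      rw [one_mul]
      exact measureReal_mono (inter_subset_inter_left _ inter_subset_right)
        (volume_inter_closedBall_ne_top _ _ _)

theorem measurable_speedyStep (hf : Measurable f) (hK : volume K ≠ ⊤) (hδ : 0 < δ) (S : Set E) :
    Measurable fun x => speedyStep f K δ x S := by
  refine Measurable.div ?_ (continuous_localVolume hK hδ).measurable
  have hind (x : E) : ∫ y in S ∩ K ∩ closedBall x δ, min 1 (f y / f x) =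
      ∫ y in S ∩ K, {z : E × E | dist z.2 z.1 ≤ δ}.indicator
        (fun z => min 1 (f z.2 / f z.1)) (x, y) := by
    rw [← setIntegral_indicator measurableSet_closedBall]
    rfl
  simp only [hind]
  refine (StronglyMeasurable.integral_prod_right' (Measurable.stronglyMeasurable ?_)).measurable
  exact (measurable_const.min ((hf.comp measurable_snd).div (hf.comp measurable_fst))).indicator
    (measurableSet_le (measurable_snd.dist measurable_fst) measurable_const)

theorem integrableOn_speedyStep (hf0 : 0 ≤ f) (hf : Measurable f) (hK : volume K ≠ ⊤)
    (hδ : 0 < δ) (S A : Set E) (μ : Measure E) [IsFiniteMeasure μ] :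
    IntegrableOn (fun x => speedyStep f K δ x S) A μ :=
  (Integrable.of_bound (measurable_speedyStep hf hK hδ S).aestronglyMeasurable 1
    (Eventually.of_forall fun x => (Real.norm_of_nonneg (speedyStep_nonneg hf0 K δ x S)).trans_le
      (speedyStep_le_one hf0 K δ x S))).integrableOn

theorem mul_measureReal_le_speedyStep_mul_localVolume (hf0 : 0 ≤ f) (hf : Measurable f)
    (hKS : MeasurableSet (S ∩ K)) (hx : localVolume K δ x ≠ 0) {c : ℝ}
    (hc : ∀ y ∈ S ∩ K, ‖y - x‖ ≤ δ → c ≤ min 1 (f y / f x)) :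
    c * volume.real (S ∩ K ∩ closedBall x δ) ≤ speedyStep f K δ x S * localVolume K δ x := by
  rw [speedyStep, div_mul_cancel₀ _ hx, mul_comm, ← smul_eq_mul, ← setIntegral_const]
  have hfin := volume_inter_closedBall_ne_top (S ∩ K) δ x
  refine setIntegral_mono_on (integrableOn_const hfin) ?_ (hKS.inter measurableSet_closedBall)
    fun y hy => hc y hy.1 (mem_closedBall_iff_norm.1 hy.2)
  exact Measure.integrableOn_of_bounded hfin
    (measurable_const.min (hf.div_const _)).aestronglyMeasurable
    (Eventually.of_forall (norm_min_one_div_le_one hf0 x))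

theorem measureReal_inter_le_add_of_subset (K S : Set E) (δ : ℝ) (x y : E) :
    volume.real (K ∩ closedBall x δ ∩ closedBall y δ) ≤
      volume.real ((K \ S) ∩ K ∩ closedBall x δ) + volume.real (S ∩ K ∩ closedBall y δ) := by
  refine (measureReal_mono (fun z hz => ?_) (measure_union_ne_top
    (volume_inter_closedBall_ne_top _ _ _) (volume_inter_closedBall_ne_top _ _ _))).trans
      (measureReal_union_le _ _)
  by_cases hzS : z ∈ S
  · exact Or.inr ⟨⟨hzS, hz.1.1⟩, hz.2⟩
  · exact Or.inl ⟨⟨⟨hz.1.1, hzS⟩, hz.1.1⟩, hz.1.2⟩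

theorem separated_of_speedyStep_lt (hK : Convex ℝ K) (hKm : MeasurableSet K)
    (hKint : (interior K).Nonempty) (hδ : 0 < δ) (hf0 : 0 ≤ f) (hf : Measurable f)
    (hratio : ∀ x ∈ K, ∀ y ∈ K, ‖y - x‖ ≤ δ → 3 / 5 ≤ min 1 (f y / f x))
    (hS : MeasurableSet S) (hx : x ∈ K) (hy : y ∈ K)
    (hxesc : speedyStep f K δ x (K \ S) < 1 / 16) (hyesc : speedyStep f K δ y S < 1 / 16) :
    Separated (fun z => log (localVolume K δ z)) (δ / (2 * √(finrank ℝ E))) (log 3) x y := by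
  by_contra! hcon
  simp only [Separated, not_or, not_le, abs_lt, neg_lt_sub_iff_lt_add] at hcon
  obtain ⟨hdist, hlogy, hlogx⟩ := hcon
  have hoverlap := (mul_min_localVolume_le_measureReal_inter hK hKm hδ.le hx hy hdist.le).trans
    (measureReal_inter_le_add_of_subset K S δ x y)
  have hx0 := localVolume_pos hK hKint hδ hx
  have hy0 := localVolume_pos hK hKint hδ hy
  have hxcost := mul_measureReal_le_speedyStep_mul_localVolume hf0 hf
    ((hKm.diff hS).inter hKm) hx0.ne' fun z hz => hratio x hx z hz.2
  have hycost := mul_measureReal_le_speedyStep_mul_localVolume hf0 hf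
    (hS.inter hKm) hy0.ne' fun z hz => hratio y hy z hz.2
  have hxsmall := mul_lt_mul_of_pos_right hxesc hx0
  have hysmall := mul_lt_mul_of_pos_right hyesc hy0
  have hxy := localVolume_lt_mul_of_log_sub_log_lt hK hKint hδ hx hy three_pos hlogx
  have hyx := localVolume_lt_mul_of_log_sub_log_lt hK hKint hδ hy hx three_pos (by linarith)
  rcases min_cases (localVolume K δ x) (localVolume K δ y) with ⟨h, -⟩ | ⟨h, -⟩ <;>
    rw [h] at hoverlap <;> linarith

end SpeedyStep

section Conductance

theorem mul_measureReal_diff_le_setIntegral {α : Type*} [MeasurableSpace α] {μ : Measure α}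
    {A : Set α} {g : α → ℝ} (hA : MeasurableSet A) (hg0 : 0 ≤ g) (hg : IntegrableOn g A μ)
    (c : ℝ) : c * μ.real (A \ {x | g x < c}) ≤ ∫ x in A, g x ∂μ := by
  have hmarkov := mul_meas_ge_le_integral_of_nonneg (Eventually.of_forall hg0) hg c
  rwa [measureReal_restrict_apply' hA, show {x | c ≤ g x} ∩ A = A \ {x | g x < c} by
    ext x; simp [and_comm]] at hmarkov

theorem mul_min_le_of_mul_min_sub_le {κ a b u v : ℝ} (hκ : 0 ≤ κ) (hu : 0 ≤ u) (hv : 0 ≤ v)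
    (h : κ * min (a - u) (b - v) ≤ u + v) : κ * min a b ≤ (1 + κ) * (u + v) := by
  have hmin : min a b - (u + v) ≤ min (a - u) (b - v) :=
    le_min (by linarith [min_le_left a b]) (by linarith [min_le_right a b])
  linarith [mul_le_mul_of_nonneg_left hmin hκ]

theorem mul_min_measureReal_le_flow {α : Type*} [MeasurableSpace α] {μ : Measure α}
    [IsFiniteMeasure μ] {K S : Set α} {g₁ g₂ : α → ℝ} {c κ : ℝ} (hK : MeasurableSet K)
    (hS : MeasurableSet S) (hg₁ : Measurable g₁) (hg₂ : Measurable g₂)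
    (hg₁0 : 0 ≤ g₁) (hg₂0 : 0 ≤ g₂) (hg₁μ : IntegrableOn g₁ S μ) (hg₂μ : IntegrableOn g₂ (K \ S) μ)
    (hc : 0 ≤ c) (hκ : 0 ≤ κ)
    (hiso : κ * min (μ.real (S ∩ {x | g₁ x < c})) (μ.real ((K \ S) ∩ {x | g₂ x < c})) ≤
      μ.real (K \ (S ∩ {x | g₁ x < c} ∪ (K \ S) ∩ {x | g₂ x < c}))) :
    c * (κ * min (μ.real S) (μ.real (K \ S))) ≤
      (1 + κ) * ((∫ x in S, g₁ x ∂μ) + ∫ x in K \ S, g₂ x ∂μ) := by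
  set L₁ := {x | g₁ x < c}
  set L₂ := {x | g₂ x < c}
  have hL₁ : MeasurableSet L₁ := measurableSet_lt hg₁ measurable_const
  have hL₂ : MeasurableSet L₂ := measurableSet_lt hg₂ measurable_const
  have hgap : K \ (S ∩ L₁ ∪ (K \ S) ∩ L₂) ⊆ S \ L₁ ∪ (K \ S) \ L₂ := fun x hx => by
    by_cases hxS : x ∈ S
    · exact Or.inl ⟨hxS, fun h => hx.2 (Or.inl ⟨hxS, h⟩)⟩
    · exact Or.inr ⟨⟨hx.1, hxS⟩, fun h => hx.2 (Or.inr ⟨⟨hx.1, hxS⟩, h⟩)⟩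
  have hslow := hiso.trans ((measureReal_mono hgap).trans (measureReal_union_le _ _))
  rw [eq_sub_of_add_eq (measureReal_inter_add_sdiff (s := S) hL₁),
    eq_sub_of_add_eq (measureReal_inter_add_sdiff (s := K \ S) hL₂)] at hslow
  calc c * (κ * min (μ.real S) (μ.real (K \ S)))
      ≤ c * ((1 + κ) * (μ.real (S \ L₁) + μ.real ((K \ S) \ L₂))) := by
        exact mul_le_mul_of_nonneg_left
          (mul_min_le_of_mul_min_sub_le hκ measureReal_nonneg measureReal_nonneg hslow) hc
    _ = (1 + κ) * (c * μ.real (S \ L₁) + c * μ.real ((K \ S) \ L₂)) := by ring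
    _ ≤ (1 + κ) * ((∫ x in S, g₁ x ∂μ) + ∫ x in K \ S, g₂ x ∂μ) := by
      gcongr
      exacts [mul_measureReal_diff_le_setIntegral hS hg₁0 hg₁μ c,
        mul_measureReal_diff_le_setIntegral (hK.diff hS) hg₂0 hg₂μ c]

theorem three_fifths_lt_exp_neg_half : 3 / 5 < exp (-(1 / 2)) := by
  have hsq : exp (-(1 / 2)) ^ 2 * exp 1 = 1 := by
    rw [← exp_nat_mul, ← exp_add]
    norm_num
  by_contra! hle
  have hle2 : exp (-(1 / 2)) ^ 2 ≤ (3 / 5) ^ 2 := by gcongr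
  nlinarith [exp_one_lt_d9, exp_pos 1]

variable {E : Type*} [NormedAddCommGroup E]

theorem exp_neg_half_le_min_gaussianWeight_div {σ δ R : ℝ} {x y : E} (hσ : 0 < σ)
    (hx : ‖x‖ ≤ R) (hy : ‖y‖ ≤ R) (hxy : ‖y - x‖ ≤ δ) (hδR : δ * (2 * R) ≤ σ ^ 2) :
    exp (-(1 / 2)) ≤ min 1 (gaussianWeight σ y / gaussianWeight σ x) := by
  refine le_min (exp_le_one_iff.2 (by norm_num)) ?_
  have hδ : 0 ≤ δ := (norm_nonneg _).trans hxy
  have hsq : ‖y‖ ^ 2 - ‖x‖ ^ 2 ≤ σ ^ 2 :=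
    calc ‖y‖ ^ 2 - ‖x‖ ^ 2 = (‖y‖ - ‖x‖) * (‖y‖ + ‖x‖) := by ring
      _ ≤ δ * (2 * R) := by
        gcongr
        · exact (norm_sub_norm_le y x).trans hxy
        · linarith
      _ ≤ σ ^ 2 := hδR
  rw [gaussianWeight, gaussianWeight, ← exp_sub, ← sub_div, exp_le_exp,
    le_div_iff₀ (by positivity)]
  linarith

variable [InnerProductSpace ℝ E] [FiniteDimensional ℝ E] {K S : Set E} {δ σ : ℝ}

theorem three_fifths_le_min_gaussianWeight_div [Nontrivial E] (hσ : 0 < σ)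
    (hKbdd : K ⊆ closedBall 0 (4 * σ * √(finrank ℝ E))) (hδσ : δ ≤ σ / (8 * √(finrank ℝ E))) :
    ∀ x ∈ K, ∀ y ∈ K, ‖y - x‖ ≤ δ → 3 / 5 ≤ min 1 (gaussianWeight σ y / gaussianWeight σ x) := by
  have hn : 0 < √(finrank ℝ E : ℝ) := sqrt_pos.2 (Nat.cast_pos.2 finrank_pos)
  intro x hx y hy hxy
  refine three_fifths_lt_exp_neg_half.le.trans (exp_neg_half_le_min_gaussianWeight_div hσ
    (mem_closedBall_zero_iff.1 (hKbdd hx)) (mem_closedBall_zero_iff.1 (hKbdd hy)) hxy ?_)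
  calc δ * (2 * (4 * σ * √(finrank ℝ E)))
      ≤ σ / (8 * √(finrank ℝ E)) * (2 * (4 * σ * √(finrank ℝ E))) := by gcongr
    _ = σ ^ 2 := by
      field_simp
      norm_num

variable [MeasurableSpace E] [BorelSpace E]

theorem StronglyLogConcave.isoperimetry_log_localVolume [Nontrivial E] {μ : Measure E}
    [IsFiniteMeasure μ] (hμ : StronglyLogConcave μ σ) (hμvol : μ ≪ volume) (hσ : 0 < σ)
    (hKconv : Convex ℝ K) (hK : IsCompact K) (hKint : (interior K).Nonempty) (hδ : 0 < δ)
    (hδσ : δ ≤ σ / (8 * √(finrank ℝ E))) {S₁ S₂ : Set E} (hS₁ : MeasurableSet S₁)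
    (hS₂ : MeasurableSet S₂) (hS₁K : S₁ ⊆ K) (hS₂K : S₂ ⊆ K)
    (hsep : ∀ x ∈ S₁, ∀ y ∈ S₂,
      Separated (fun z => log (localVolume K δ z)) (δ / (2 * √(finrank ℝ E))) (log 3) x y) :
    δ / (σ * √(finrank ℝ E)) / 80 * min (μ.real S₁) (μ.real S₂) ≤ μ.real (K \ (S₁ ∪ S₂)) := by
  have hN : (1 : ℝ) ≤ finrank ℝ E := Nat.one_le_cast.2 finrank_pos
  have : 0 < √(finrank ℝ E : ℝ) := sqrt_pos.2 (by linarith)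
  have hlog : 1 < log 3 := (lt_log_iff_exp_lt three_pos).2 (by linarith [exp_one_lt_d9])
  have hdσ : δ / (2 * √(finrank ℝ E)) / 2 ≤ σ / (8 * finrank ℝ E) :=
    calc δ / (2 * √(finrank ℝ E)) / 2
        ≤ σ / (8 * √(finrank ℝ E)) / (2 * √(finrank ℝ E)) / 2 := by gcongr
      _ = σ / (32 * √(finrank ℝ E) ^ 2) := by
        field_simp
        norm_num
      _ ≤ σ / (8 * finrank ℝ E) := by
        rw [sq_sqrt (by linarith)]
        gcongr
        norm_num
  refine le_of_eq_of_le ?_ (hμ.isoperimetry hμvol hσ hN hK hKconv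
    (continuousOn_log_localVolume hK hKconv hKint hδ)
    (logHomothetyBound_log_localVolume hKconv hKint hδ) hlog (by positivity) hdσ
    (half_lt_self (by positivity)) hS₁ hS₂ hS₁K hS₂K hsep)
  field_simp
  ring

theorem speedyMeasure_conductance [Nontrivial E] (hσ : 0 < σ) (hKconv : Convex ℝ K)
    (hK : IsCompact K) (hKint : (interior K).Nonempty)
    (hKbdd : K ⊆ closedBall 0 (4 * σ * √(finrank ℝ E))) (hδ : 0 < δ)
    (hδσ : δ ≤ σ / (8 * √(finrank ℝ E))) (hS : MeasurableSet S) (hSK : S ⊆ K) :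
    1 / 10000 * (δ / (σ * √(finrank ℝ E))) *
        min ((speedyMeasure K δ σ).real S) ((speedyMeasure K δ σ).real (K \ S)) ≤
      1 / 2 * ((∫ x in S, speedyStep (gaussianWeight σ) K δ x (K \ S) ∂speedyMeasure K δ σ) +
        ∫ x in K \ S, speedyStep (gaussianWeight σ) K δ x S ∂speedyMeasure K δ σ) := by
  have := isFiniteMeasure_speedyMeasure hK hδ σ
  set μ := speedyMeasure K δ σ
  set step := speedyStep (gaussianWeight σ) K δ
  set κ := δ / (σ * √(finrank ℝ E))
  have hκ1 : κ ≤ 1 :=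
    have hn : 1 ≤ √(finrank ℝ E : ℝ) := one_le_sqrt.2 (Nat.one_le_cast.2 finrank_pos)
    div_le_one_of_le₀ (hδσ.trans ((div_le_self hσ.le (by linarith)).trans
      (le_mul_of_one_le_right hσ.le hn))) (by positivity)
  have hw0 : 0 ≤ gaussianWeight (E := E) σ := fun x => (gaussianWeight_pos σ x).le
  have hw : Measurable (gaussianWeight (E := E) σ) := (continuous_gaussianWeight σ).measurable
  have hstep0 (A : Set E) : 0 ≤ (step · A) := fun x => speedyStep_nonneg hw0 K δ x A
  have hstep (A : Set E) : Measurable (step · A) :=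
    measurable_speedyStep hw hK.measure_lt_top.ne hδ A
  have hint (A B : Set E) : IntegrableOn (step · A) B μ :=
    integrableOn_speedyStep hw0 hw hK.measure_lt_top.ne hδ A B μ
  have hiso := (stronglyLogConcave_speedyMeasure hKconv hK hδ σ).isoperimetry_log_localVolume
    (speedyMeasure_absolutelyContinuous K δ σ) hσ hKconv hK hKint hδ hδσ
    (hS.inter (measurableSet_lt (hstep (K \ S)) (measurable_const (a := 1 / 16))))
    ((hK.measurableSet.diff hS).inter (measurableSet_lt (hstep S) (measurable_const (a := 1 / 16))))
    (inter_subset_left.trans hSK) (inter_subset_left.trans sdiff_subset) fun x hx y hy =>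
      separated_of_speedyStep_lt hKconv hK.measurableSet hKint hδ hw0 hw
        (three_fifths_le_min_gaussianWeight_div hσ hKbdd hδσ) hS (hSK hx.1) hy.1.1 hx.2 hy.2
  have hflow := mul_min_measureReal_le_flow hK.measurableSet hS (hstep _) (hstep _)
    (hstep0 _) (hstep0 _) (hint _ _) (hint _ _) (by norm_num) (by positivity) hiso
  have hflow0 : 0 ≤ (∫ x in S, step x (K \ S) ∂μ) + ∫ x in K \ S, step x S ∂μ :=
    add_nonneg (integral_nonneg (hstep0 _)) (integral_nonneg (hstep0 _))
  linarith [mul_le_mul_of_nonneg_right hκ1 hflow0]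

end Conductance

section Normalization

variable {E : Type*} [NormedAddCommGroup E] [InnerProductSpace ℝ E]

theorem nontrivial_of_pos_of_le_div_sqrt_finrank {σ δ : ℝ} (hδ : 0 < δ)
    (hδσ : δ ≤ σ / (8 * √(finrank ℝ E))) : Nontrivial E := by
  refine not_subsingleton_iff_nontrivial.1 fun _ => ?_
  rw [finrank_zero_of_subsingleton, Nat.cast_zero, sqrt_zero, mul_zero, div_zero] at hδσ
  exact hδσ.not_gt hδ

variable [FiniteDimensional ℝ E] [MeasurableSpace E] [BorelSpace E] {K : Set E}

theorem interior_nonempty_of_volume_ne_zero (hKconv : Convex ℝ K) (hK : IsClosed K)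
    (hvol : volume K ≠ 0) : (interior K).Nonempty := by
  rw [nonempty_iff_ne_empty]
  intro hint
  have hfrontier := hKconv.addHaar_frontier volume
  rw [hK.frontier_eq, hint, sdiff_empty] at hfrontier
  exact hvol hfrontier

theorem setIntegral_mul_localVolume_div {δ : ℝ} (hK : IsCompact K) (hδ : 0 < δ) (σ V : ℝ)
    {A : Set E} (hA : MeasurableSet A) (hAK : A ⊆ K) (g : E → ℝ) :
    ∫ x in A, g x * (localVolume K δ x / V * gaussianWeight σ x) =
      (∫ x in A, g x ∂speedyMeasure K δ σ) / V := by
  rw [setIntegral_speedyMeasure hK hδ σ hA hAK, ← integral_div]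
  congr with x
  ring

end Normalization

theorem speedy_conductance_general {E : Type*} [NormedAddCommGroup E] [InnerProductSpace ℝ E]
    [FiniteDimensional ℝ E] [MeasurableSpace E] [BorelSpace E] {σ δ : ℝ} (hσ : 0 < σ) {K : Set E}
    (hKconv : Convex ℝ K) (hK : IsCompact K)
    (hKbdd : K ⊆ closedBall 0 (4 * σ * √(finrank ℝ E))) (hδ : 0 < δ)
    (hδσ : δ ≤ σ / (8 * √(finrank ℝ E))) {f : E → ℝ}
    (hf : ∀ x, f x = exp (-‖x‖ ^ 2 / (2 * σ ^ 2))) {ℓ : E → ℝ}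
    (hℓ : ∀ x, ℓ x = volume.real (K ∩ closedBall x δ) / volume.real (closedBall (0 : E) δ))
    {P : E → Set E → ℝ}
    (hP : ∀ x S, P x S =
      (∫ y in S ∩ K ∩ closedBall x δ, min 1 (f y / f x)) / volume.real (K ∩ closedBall x δ))
    {Z : ℝ} (hZ : Z = ∫ x in K, ℓ x * f x) (hZpos : 0 < Z) {pi : Set E → ℝ}
    (hpi : ∀ S, pi S = (∫ x in S, ℓ x * f x) / Z) {S : Set E} (hS : MeasurableSet S)
    (hSK : S ⊆ K) :
    1 / 10000 * (δ / (σ * √(finrank ℝ E))) * min (pi S) (pi (K \ S)) ≤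
      1 / 2 * ((∫ x in S, P x (K \ S) * (ℓ x * f x)) / Z +
        (∫ x in K \ S, P x S * (ℓ x * f x)) / Z) := by
  have := nontrivial_of_pos_of_le_div_sqrt_finrank hδ hδσ
  have hKint := interior_nonempty_of_volume_ne_zero hKconv hK.isClosed fun hvol =>
    hZpos.ne' (hZ.trans (setIntegral_measure_zero _ hvol))
  obtain rfl : f = gaussianWeight σ := funext hf
  obtain rfl : P = speedyStep (gaussianWeight σ) K δ := funext fun x => funext (hP x)
  set V := volume.real (closedBall (0 : E) δ)
  obtain rfl : ℓ = fun x => localVolume K δ x / V := funext hℓ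
  have hpiμ {A : Set E} (hA : MeasurableSet A) (hAK : A ⊆ K) :
      pi A = (speedyMeasure K δ σ).real A / V / Z := by
    rw [hpi, ← setIntegral_one_eq_measureReal, ← setIntegral_mul_localVolume_div hK hδ σ V hA hAK]
    simp only [one_mul]
  have hT : MeasurableSet (K \ S) := hK.measurableSet.diff hS
  rw [hpiμ hS hSK, hpiμ hT sdiff_subset, setIntegral_mul_localVolume_div hK hδ σ V hS hSK,
    setIntegral_mul_localVolume_div hK hδ σ V hT sdiff_subset, div_div, div_div, div_div, div_div,
    min_div_div_right (by positivity), ← add_div]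
  simpa only [mul_div_assoc] using div_le_div_of_nonneg_right (c := V * Z)
    (speedyMeasure_conductance hσ hKconv hK hKint hKbdd hδ hδσ hS hSK) (by positivity)

/-- Conductance of the speedy walk (Theorem 5.3 of the paper): for a convex body `K`
with `B_n ⊆ K ⊆ 4σ√n B_n`, step size `δ ≤ σ/(8√n)`, Gaussian weight
`f(x) = e^{-‖x‖²/(2σ²)}`, local conductance `ℓ`, one-step distribution `P`, and
stationary measure `π` with density proportional to `ℓ · f` on `K`, for every
measurable `S ⊆ K` with `0 < π(S) < 1`, the ergodic flow satisfies
`(1/2)(∫_S P_x(K∖S) dπ + ∫_{K∖S} P_x(S) dπ) ≥ 10⁻⁴ · (δ/(σ√n)) · min{π(S), π(K∖S)}`. -/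
theorem speedy_conductance
    (n : ℕ) (σ δ : ℝ) (hσ : 0 < σ)
    (K : Set (EuclideanSpace ℝ (Fin n)))
    (hKconv : Convex ℝ K) (hKcomp : IsCompact K)
    (hKball : closedBall (0 : EuclideanSpace ℝ (Fin n)) 1 ⊆ K)
    (hKbdd : K ⊆ closedBall (0 : EuclideanSpace ℝ (Fin n)) (4 * σ * Real.sqrt n))
    (hδ : 0 < δ) (hδσ : δ ≤ σ / (8 * Real.sqrt n))
    (f : EuclideanSpace ℝ (Fin n) → ℝ)
    (hf : ∀ x, f x = Real.exp (-‖x‖^2 / (2 * σ^2)))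
    (ℓ : EuclideanSpace ℝ (Fin n) → ℝ)
    (hℓ : ∀ x, ℓ x = (volume (K ∩ closedBall x δ)).toReal /
      (volume (closedBall (0 : EuclideanSpace ℝ (Fin n)) δ)).toReal)
    (P : EuclideanSpace ℝ (Fin n) → Set (EuclideanSpace ℝ (Fin n)) → ℝ)
    (hP : ∀ x S, P x S = (∫ y in S ∩ K ∩ closedBall x δ, min 1 (f y / f x)) /
      (volume (K ∩ closedBall x δ)).toReal)
    (Z : ℝ) (hZ : Z = ∫ x in K, ℓ x * f x) (hZpos : 0 < Z)
    (pi : Set (EuclideanSpace ℝ (Fin n)) → ℝ)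
    (hpi : ∀ S, pi S = (∫ x in S, ℓ x * f x) / Z)
    (S : Set (EuclideanSpace ℝ (Fin n))) (hS : MeasurableSet S) (hSK : S ⊆ K)
    (hS0 : 0 < pi S) (hS1 : pi S < 1) :
    (1 / 10000 : ℝ) * (δ / (σ * Real.sqrt n)) * min (pi S) (pi (K \ S)) ≤
      (1 / 2) * ((∫ x in S, P x (K \ S) * (ℓ x * f x)) / Z +
        (∫ x in K \ S, P x S * (ℓ x * f x)) / Z) := by
  simpa only [finrank_euclideanSpace_fin] using speedy_conductance_general hσ hKconv hKcomp
    (by simpa using hKbdd) hδ (by simpa using hδσ) hf hℓ hP hZ hZpos hpi hS hSK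
end

section
/- Let a > 0, δ > 0, and let f : ℝⁿ → ℝ≥0 be an a-rounded logconcave probability density with convex support K; that is, for every level t > 0 the level set L_t = {x : f(x) ≥ t} contains a ball of radius a·π_f(L_t), where π_f is the probability measure with density f. Define the local conductance ℓ(x) = vol(K ∩ (x + δB_n))/vol(δB_n) and the average local conductance λ(f) = ∫_K ℓ(x) f(x) dx / ∫_K f(x) dx. Then λ(f) ≥ 1 − 32 δ^{1/2} n^{1/4} / a^{1/2}. -/
open MeasureTheory Real Set Metric

/-!
Choose a point with density `f` and then a uniform point of the `δ`-ball around it; `1 - λ(f)` is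
the probability that the second point lies outside `K`. By the layer cake formula it is enough to
bound, for each superlevel set `L` of `f`, the measure of the pairs `(x, y)` with `dist x y ≤ δ`,
`x ∈ L` and `y ∉ L`. The set `L` is convex. If `L` contains the `r`-ball around `z`, then a
point `y` outside the dilate `z + s (L - z)` is separated from `L` by a slab of width `r (s - 1)`,
so `L` meets the `δ`-ball around `y` in at most a fraction `exp (-n (r (s - 1))² / (2 δ²))` of its
volume. Summing over dilates with steps `δ / (r √n)` gives at most `64 δ √n / r` times the measure
of all pairs with `dist x y ≤ δ` and `x ∈ L`.

Roundedness gives `r = a π(L)`, which is useless for levels with small `π(L)`; but the levels with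
`π(L) < s` contribute at most `s` altogether. With `θ = δ √n / a` the result is
`1 - λ(f) ≤ 64 θ / s + s` for every `s > 0`, and `s = 8 √θ` is optimal.
-/

section RealInequalities

lemma le_two_mul_sqrt_of_forall_le_div_add {b c : ℝ} (hc : 0 ≤ c)
    (h : ∀ s, 0 < s → b ≤ c / s + s) : b ≤ 2 * √c := by
  rcases hc.eq_or_lt with rfl | hc
  · simpa using le_of_forall_pos_le_add fun s hs ↦ by simpa using h s hs
  · calc b ≤ c / √c + √c := h _ (sqrt_pos.2 hc)
      _ = 2 * √c := by rw [div_sqrt]; ring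

lemma one_add_add_pow_sub_one_add_pow_le {u η : ℝ} (hu : 0 ≤ u) (hη : 0 ≤ η) (d : ℕ) :
    (1 + u + η) ^ d - (1 + u) ^ d ≤ d * η * exp (d * (u + η)) := by
  have hpow : (1 + u + η) ^ (d - 1) ≤ exp (d * (u + η)) := by
    calc (1 + u + η) ^ (d - 1) ≤ (1 + u + η) ^ d :=
          pow_le_pow_right₀ (by linarith) (Nat.sub_le d 1)
      _ ≤ exp (u + η) ^ d := by gcongr; linarith [add_one_le_exp (u + η)]
      _ = exp (d * (u + η)) := (exp_nat_mul _ _).symm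
  calc (1 + u + η) ^ d - (1 + u) ^ d
      ≤ |1 + u + η - (1 + u)| * d * max |1 + u + η| |1 + u| ^ (d - 1) :=
        (le_abs_self _).trans (abs_pow_sub_pow_le ..)
    _ = d * η * (1 + u + η) ^ (d - 1) := by
        rw [add_sub_cancel_left, abs_of_nonneg hη, abs_of_nonneg (by positivity : 0 ≤ 1 + u + η),
          abs_of_nonneg (by positivity : 0 ≤ 1 + u), max_eq_left (by linarith)]
        ring
    _ ≤ d * η * exp (d * (u + η)) := by gcongr

lemma exp_neg_sq_div_two_mul_exp_succ_le (k : ℕ) :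
    exp (-((k : ℝ) ^ 2 / 2)) * exp (k + 1) ≤ 32 * (1 / 2) ^ k := by
  have exp_three_le : exp 3 ≤ 32 := by
    calc exp 3 = exp 1 ^ 3 := by rw [← exp_nat_mul]; norm_num
      _ ≤ 3 ^ 3 := by gcongr; exact exp_one_lt_three.le
      _ ≤ 32 := by norm_num
  have exp_neg_one_le : exp (-1) ≤ 1 / 2 := by
    rw [exp_neg, one_div]
    exact inv_anti₀ (by norm_num) (by linarith [exp_one_gt_d9])
  calc exp (-((k : ℝ) ^ 2 / 2)) * exp (k + 1) ≤ exp 3 * exp (-1) ^ k := by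
        rw [← exp_add, ← exp_nat_mul, ← exp_add, exp_le_exp]
        nlinarith [sq_nonneg ((k : ℝ) - 2)]
    _ ≤ 32 * (1 / 2) ^ k := by gcongr

lemma exp_mul_shell_factor_le {d : ℕ} {η : ℝ} (hη : 0 ≤ η) (hdη : d * η ≤ 1) (k : ℕ) :
    exp (-((k : ℝ) ^ 2 / 2)) * ((1 + (k + 1 : ℕ) * η) ^ d - (1 + k * η) ^ d) ≤
      32 * (d * η) * (1 / 2) ^ k := by
  have hdiff : (1 + (k + 1 : ℕ) * η) ^ d - (1 + k * η) ^ d ≤ d * η * exp (k + 1) := by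
    calc (1 + (k + 1 : ℕ) * η) ^ d - (1 + k * η) ^ d
        = (1 + k * η + η) ^ d - (1 + k * η) ^ d := by push_cast; ring
      _ ≤ d * η * exp (d * (k * η + η)) :=
          one_add_add_pow_sub_one_add_pow_le (by positivity) hη d
      _ = d * η * exp (d * η * (k + 1)) := by ring_nf
      _ ≤ d * η * exp (k + 1) := by
          gcongr; exact mul_le_of_le_one_left (by positivity) hdη
  calc exp (-((k : ℝ) ^ 2 / 2)) * ((1 + (k + 1 : ℕ) * η) ^ d - (1 + k * η) ^ d)
      ≤ exp (-((k : ℝ) ^ 2 / 2)) * (d * η * exp (k + 1)) := by gcongr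
    _ = d * η * (exp (-((k : ℝ) ^ 2 / 2)) * exp (k + 1)) := by ring
    _ ≤ d * η * (32 * (1 / 2) ^ k) := by
        gcongr d * η * ?_; exact exp_neg_sq_div_two_mul_exp_succ_le k
    _ = 32 * (d * η) * (1 / 2) ^ k := by ring

end RealInequalities

section LayerCake

variable {α : Type*} [MeasurableSpace α] {μ : Measure α} {f : α → ℝ}

lemma antitone_measure_superlevel (μ : Measure α) (f : α → ℝ) :
    Antitone fun t ↦ μ {x | t ≤ f x} :=
  fun _ _ htu ↦ measure_mono fun _ hx ↦ htu.trans hx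

lemma lintegral_Ioi_measure_superlevel_le {τ : ℝ} (hτ : 0 ≤ τ) (hf0 : 0 ≤ f)
    (hf : AEMeasurable f μ) :
    ∫⁻ t in Ioi τ, μ {x | t ≤ f x} ≤ ∫⁻ x in {x | τ < f x}, ENNReal.ofReal (f x) ∂μ := by
  calc ∫⁻ t in Ioi τ, μ {x | t ≤ f x}
      = ∫⁻ t in Ioi τ, μ.restrict {x | τ < f x} {x | t ≤ f x} :=
        setLIntegral_congr_fun measurableSet_Ioi fun t ht ↦
          (Measure.restrict_eq_self μ fun x (hx : t ≤ f x) ↦ show τ < f x from ht.trans_le hx).symm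
    _ ≤ ∫⁻ t in Ioi 0, μ.restrict {x | τ < f x} {x | t ≤ f x} :=
        lintegral_mono_set (Ioi_subset_Ioi hτ)
    _ = ∫⁻ x in {x | τ < f x}, ENNReal.ofReal (f x) ∂μ :=
        (lintegral_eq_lintegral_meas_le _ (.of_forall hf0) hf.restrict).symm

lemma setLIntegral_lt_le_of_forall_superlevel_le {g : α → ENNReal} {τ : ℝ} {c : ENNReal}
    (h : ∀ t, τ < t → ∫⁻ x in {x | t ≤ f x}, g x ∂μ ≤ c) :
    ∫⁻ x in {x | τ < f x}, g x ∂μ ≤ c := by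
  obtain ⟨u, hu_anti, hτu, hu_tendsto⟩ := exists_seq_strictAnti_tendsto τ
  have hunion : {x | τ < f x} = ⋃ k, {x | u k ≤ f x} := by
    change f ⁻¹' Ioi τ = ⋃ k, f ⁻¹' Ici (u k)
    rw [← preimage_iUnion, iUnion_Ici_eq_Ioi_of_lt_of_tendsto hτu hu_tendsto]
  have hmono : Monotone fun k ↦ {x | u k ≤ f x} :=
    fun _ _ hjk _ hx ↦ (hu_anti.antitone hjk).trans hx
  rw [hunion, setLIntegral_iUnion_of_directed _ hmono.directed_le]
  exact iSup_le fun k ↦ h _ (hτu k)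

lemma lintegral_measure_superlevel_le_of_setIntegral_lt (hf0 : 0 ≤ f) (hf : Integrable f μ)
    (s : ℝ) :
    ∫⁻ t in Ioi 0 ∩ {t | ∫ x in {x | t ≤ f x}, f x ∂μ < s}, μ {x | t ≤ f x} ≤
      ENNReal.ofReal s := by
  set T := Ioi 0 ∩ {t | ∫ x in {x | t ≤ f x}, f x ∂μ < s}
  rcases T.eq_empty_or_nonempty with hT | hT
  · simp [hT]
  have hT_bdd : BddBelow T := ⟨0, fun t ht ↦ ht.1.le⟩
  have hmass : ∀ t, sInf T < t →
      ∫⁻ x in {x | t ≤ f x}, ENNReal.ofReal (f x) ∂μ ≤ ENNReal.ofReal s := by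
    intro t ht
    obtain ⟨u, hu, hut⟩ := exists_lt_of_csInf_lt hT ht
    calc ∫⁻ x in {x | t ≤ f x}, ENNReal.ofReal (f x) ∂μ
        ≤ ∫⁻ x in {x | u ≤ f x}, ENNReal.ofReal (f x) ∂μ :=
          lintegral_mono_set fun x hx ↦ hut.le.trans hx
      _ = ENNReal.ofReal (∫ x in {x | u ≤ f x}, f x ∂μ) :=
          (ofReal_integral_eq_lintegral_ofReal hf.integrableOn (.of_forall hf0)).symm
      _ ≤ ENNReal.ofReal s := ENNReal.ofReal_le_ofReal hu.2.le
  calc ∫⁻ t in T, μ {x | t ≤ f x}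
      ≤ ∫⁻ t in Ici (sInf T), μ {x | t ≤ f x} :=
        lintegral_mono_set fun t ht ↦ csInf_le hT_bdd ht
    _ = ∫⁻ t in Ioi (sInf T), μ {x | t ≤ f x} := setLIntegral_congr Ioi_ae_eq_Ici.symm
    _ ≤ ∫⁻ x in {x | sInf T < f x}, ENNReal.ofReal (f x) ∂μ :=
        lintegral_Ioi_measure_superlevel_le (le_csInf hT fun t ht ↦ ht.1.le) hf0 hf.aemeasurable
    _ ≤ ENNReal.ofReal s := setLIntegral_lt_le_of_forall_superlevel_le hmass

lemma lintegral_mul_ofReal_eq_lintegral_superlevel [SFinite μ] {q : α → ENNReal}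
    (hq : AEMeasurable q μ) (hf0 : 0 ≤ f) (hf : AEMeasurable f μ) :
    ∫⁻ x, q x * ENNReal.ofReal (f x) ∂μ = ∫⁻ t in Ioi 0, ∫⁻ x in {x | t ≤ f x}, q x ∂μ := by
  calc ∫⁻ x, q x * ENNReal.ofReal (f x) ∂μ = ∫⁻ x, ENNReal.ofReal (f x) ∂μ.withDensity q :=
        (lintegral_withDensity_eq_lintegral_mul₀ hq hf.ennreal_ofReal).symm
    _ = ∫⁻ t in Ioi 0, μ.withDensity q {x | t ≤ f x} :=
        lintegral_eq_lintegral_meas_le _ (.of_forall hf0)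
          (hf.mono_ac (withDensity_absolutelyContinuous _ _))
    _ = ∫⁻ t in Ioi 0, ∫⁻ x in {x | t ≤ f x}, q x ∂μ := by simp only [withDensity_apply']

lemma lintegral_mul_ofReal_le_of_forall_superlevel [SFinite μ] {q : α → ENNReal}
    (hq : AEMeasurable q μ) (hq1 : ∀ x, q x ≤ 1) (hf0 : 0 ≤ f) (hf : Integrable f μ)
    {C : ENNReal} {s : ℝ}
    (h : ∀ t, 0 < t → s ≤ ∫ x in {x | t ≤ f x}, f x ∂μ →
      ∫⁻ x in {x | t ≤ f x}, q x ∂μ ≤ C * μ {x | t ≤ f x}) :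
    ∫⁻ x, q x * ENNReal.ofReal (f x) ∂μ ≤
      ENNReal.ofReal s + C * ∫⁻ x, ENNReal.ofReal (f x) ∂μ := by
  set T := {t | ∫ x in {x | t ≤ f x}, f x ∂μ < s}
  have hmeas : Measurable fun t ↦ μ {x | t ≤ f x} := (antitone_measure_superlevel μ f).measurable
  have hsmall : ∫⁻ t in Ioi 0 ∩ T, ∫⁻ x in {x | t ≤ f x}, q x ∂μ ≤ ENNReal.ofReal s := by
    calc ∫⁻ t in Ioi 0 ∩ T, ∫⁻ x in {x | t ≤ f x}, q x ∂μ
        ≤ ∫⁻ t in Ioi 0 ∩ T, μ {x | t ≤ f x} :=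
          lintegral_mono fun t ↦ (lintegral_mono hq1).trans_eq (setLIntegral_one _)
      _ ≤ ENNReal.ofReal s := lintegral_measure_superlevel_le_of_setIntegral_lt hf0 hf s
  have hlarge : ∫⁻ t in Ioi 0 \ T, ∫⁻ x in {x | t ≤ f x}, q x ∂μ ≤
      C * ∫⁻ x, ENNReal.ofReal (f x) ∂μ := by
    calc ∫⁻ t in Ioi 0 \ T, ∫⁻ x in {x | t ≤ f x}, q x ∂μ
        ≤ ∫⁻ t in Ioi 0 \ T, C * μ {x | t ≤ f x} :=
          setLIntegral_mono (hmeas.const_mul C) fun t ht ↦ h t ht.1 (not_lt.1 ht.2)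
      _ ≤ ∫⁻ t in Ioi 0, C * μ {x | t ≤ f x} := lintegral_mono_set sdiff_subset
      _ = C * ∫⁻ x, ENNReal.ofReal (f x) ∂μ := by
          rw [lintegral_const_mul _ hmeas,
            lintegral_eq_lintegral_meas_le _ (.of_forall hf0) hf.aemeasurable]
  calc ∫⁻ x, q x * ENNReal.ofReal (f x) ∂μ
      = ∫⁻ t in Ioi 0 ∩ T ∪ Ioi 0 \ T, ∫⁻ x in {x | t ≤ f x}, q x ∂μ := by
        rw [lintegral_mul_ofReal_eq_lintegral_superlevel hq hf0 hf.aemeasurable,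
          inter_union_sdiff]
    _ ≤ _ := (lintegral_union_le _ _ _).trans (add_le_add hsmall hlarge)

end LayerCake

lemma compl_subset_iUnion_succ_sdiff {α : Type*} {A : ℕ → Set α} (hA : ⋃ k, A k = univ) :
    (A 0)ᶜ ⊆ ⋃ k, A (k + 1) \ A k := by
  intro y hy
  by_contra hshell
  simp only [mem_iUnion, mem_sdiff, not_exists, not_and, not_not] at hshell
  have hnotMem : ∀ k, y ∉ A k := fun k ↦ by
    induction k with
    | zero => exact hy
    | succ k ih => exact fun hk ↦ ih (hshell k hk)
  exact (mem_iUnion.1 (hA ▸ mem_univ y)).elim hnotMem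

lemma lintegral_measure_closedBall_inter_comm {α : Type*} [PseudoMetricSpace α]
    [SecondCountableTopology α] [MeasurableSpace α] [OpensMeasurableSpace α] (μ : Measure α)
    [SFinite μ] (A B : Set α) (δ : ℝ) :
    ∫⁻ x in A, μ (closedBall x δ ∩ B) ∂μ = ∫⁻ y in B, μ (closedBall y δ ∩ A) ∂μ := by
  have hpairs : MeasurableSet {p : α × α | dist p.2 p.1 ≤ δ} :=
    measurableSet_le (measurable_snd.dist measurable_fst) measurable_const
  calc ∫⁻ x in A, μ (closedBall x δ ∩ B) ∂μ
      = (μ.restrict A).prod (μ.restrict B) {p | dist p.2 p.1 ≤ δ} := by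
        rw [Measure.prod_apply hpairs]
        exact lintegral_congr fun x ↦ (Measure.restrict_apply measurableSet_closedBall).symm
    _ = ∫⁻ y in B, μ (closedBall y δ ∩ A) ∂μ := by
        rw [Measure.prod_apply_symm hpairs]
        refine lintegral_congr fun y ↦ ?_
        rw [← Measure.restrict_apply measurableSet_closedBall]
        congr 1 with x
        simp [dist_comm]

section Dilation

variable {E : Type*} [AddCommGroup E] [Module ℝ E] {L : Set E} {z : E}

lemma mem_homothety_image_iff {s : ℝ} (hs : s ≠ 0) {y : E} :
    y ∈ AffineMap.homothety z s '' L ↔ AffineMap.homothety z s⁻¹ y ∈ L := by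
  constructor
  · rintro ⟨x, hx, rfl⟩
    simpa [AffineMap.homothety_apply, smul_smul, hs] using hx
  · exact fun hy ↦ ⟨_, hy, by simp [AffineMap.homothety_apply, smul_smul, hs]⟩

lemma homothety_image_subset_homothety_image (hL : StarConvex ℝ z L) {s s' : ℝ} (hs : 0 < s)
    (hss' : s ≤ s') : AffineMap.homothety z s '' L ⊆ AffineMap.homothety z s' '' L := by
  rintro _ ⟨x, hx, rfl⟩
  have hs' : 0 < s' := hs.trans_le hss'
  rw [mem_homothety_image_iff hs'.ne']
  have hmem := hL.add_smul_sub_mem hx (t := s / s') (by positivity) ((div_le_one hs').2 hss')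
  simpa [AffineMap.homothety_apply, smul_smul, div_eq_inv_mul, add_comm] using hmem

end Dilation

lemma iUnion_homothety_image_eq_univ {E : Type*} [NormedAddCommGroup E] [NormedSpace ℝ E]
    {L : Set E} {z : E} {r η : ℝ} (hr : 0 < r) (hzL : ball z r ⊆ L) (hη : 0 < η) :
    ⋃ k : ℕ, AffineMap.homothety z (1 + k * η) '' L = univ := by
  refine eq_univ_of_forall fun y ↦ mem_iUnion.2 ?_
  obtain ⟨k, hk⟩ := exists_nat_gt (‖y - z‖ / r / η)
  have hs : 0 < 1 + k * η := by positivity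
  rw [div_lt_iff₀ hη, div_lt_iff₀ hr] at hk
  refine ⟨k, (mem_homothety_image_iff hs.ne').2 (hzL ?_)⟩
  rw [mem_ball, dist_homothety_center, norm_inv, Real.norm_of_nonneg hs.le,
    inv_mul_lt_iff₀ hs, dist_comm, dist_eq_norm]
  nlinarith

section Separation

variable {E : Type*} [NormedAddCommGroup E] [InnerProductSpace ℝ E]

open scoped InnerProductSpace

lemma exists_unit_inner_lt_of_notMem [CompleteSpace E] {A : Set E} (hAo : IsOpen A)
    (hAc : Convex ℝ A) (hA : A.Nonempty) {y : E} (hy : y ∉ A) :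
    ∃ e : E, ‖e‖ = 1 ∧ ∀ x ∈ A, ⟪e, x⟫_ℝ < ⟪e, y⟫_ℝ := by
  obtain ⟨φ, hφ⟩ := geometric_hahn_banach_open_point hAc hAo hy
  set v := (InnerProductSpace.toDual ℝ E).symm φ
  have hv : ∀ x ∈ A, ⟪v, x⟫_ℝ < ⟪v, y⟫_ℝ := by
    simpa only [v, InnerProductSpace.toDual_symm_apply] using hφ
  have hv0 : v ≠ 0 := by
    obtain ⟨x, hx⟩ := hA
    intro h
    simpa [h] using hv x hx
  refine ⟨‖v‖⁻¹ • v, norm_smul_inv_norm hv0, fun x hx ↦ ?_⟩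
  rw [real_inner_smul_left, real_inner_smul_left]
  exact mul_lt_mul_of_pos_left (hv x hx) (inv_pos.2 (norm_pos_iff.2 hv0))

lemma inner_add_radius_le_of_forall_ball {e z : E} {r c : ℝ} (he : ‖e‖ = 1) (hr : 0 < r)
    (h : ∀ x ∈ ball z r, ⟪e, x⟫_ℝ ≤ c) : ⟪e, z⟫_ℝ + r ≤ c := by
  have hclosed : closedBall z r ⊆ {x | ⟪e, x⟫_ℝ ≤ c} := by
    rw [← closure_ball z hr.ne']
    exact closure_minimal h (isClosed_le (by fun_prop) continuous_const)
  have hmem : z + r • e ∈ closedBall z r := by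
    simp [dist_eq_norm, norm_smul, he, abs_of_pos hr]
  have hle : ⟪e, z + r • e⟫_ℝ ≤ c := hclosed hmem
  rwa [inner_add_right, real_inner_smul_right, real_inner_self_eq_norm_sq, he, one_pow,
    mul_one] at hle

lemma exists_unit_forall_le_inner_sub [CompleteSpace E] {L : Set E} (hLo : IsOpen L)
    (hLc : Convex ℝ L) {z : E} {r s : ℝ} (hr : 0 < r) (hs : 1 ≤ s) (hzL : ball z r ⊆ L) {y : E}
    (hy : y ∉ AffineMap.homothety z s '' L) :
    ∃ e : E, ‖e‖ = 1 ∧ ∀ x ∈ L, r * (s - 1) ≤ ⟪e, y - x⟫_ℝ := by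
  have hs0 : 0 < s := by linarith
  obtain ⟨e, he, hsep⟩ := exists_unit_inner_lt_of_notMem
    (AffineMap.homothety_isOpenMap z s hs0.ne' L hLo) (hLc.affine_image _)
    (Nonempty.image _ ⟨z, hzL (mem_ball_self hr)⟩) hy
  set h := ⟪e, y - z⟫_ℝ / s with hh
  have hL : ∀ x ∈ L, ⟪e, x⟫_ℝ ≤ ⟪e, z⟫_ℝ + h := by
    intro x hx
    have hlt := hsep _ (mem_image_of_mem _ hx)
    rw [AffineMap.homothety_apply, vsub_eq_sub, vadd_eq_add, inner_add_right,
      real_inner_smul_right, inner_sub_right] at hlt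
    rw [← sub_le_iff_le_add', hh, le_div_iff₀ hs0, inner_sub_right]
    linarith
  have hrh : r ≤ h := by
    linarith [inner_add_radius_le_of_forall_ball he hr fun x hx ↦ hL x (hzL hx)]
  refine ⟨e, he, fun x hx ↦ ?_⟩
  calc r * (s - 1) ≤ h * (s - 1) := by gcongr
    _ = ⟪e, y - z⟫_ℝ - h := by rw [hh]; field_simp
    _ ≤ ⟪e, y - x⟫_ℝ := by rw [inner_sub_right, inner_sub_right]; linarith [hL x hx]

lemma closedBall_inter_halfspace_subset {e y : E} (he : ‖e‖ = 1) {t δ : ℝ} (ht : 0 ≤ t)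
    (hδ : 0 < δ) :
    closedBall y δ ∩ {x | t ≤ ⟪e, y - x⟫_ℝ} ⊆
      closedBall (y - t • e) (δ * exp (-(t ^ 2 / (2 * δ ^ 2)))) := by
  rintro x ⟨hxy, hxt⟩
  rw [mem_closedBall, dist_comm, dist_eq_norm] at hxy ⊢
  rw [mem_ofPred_eq] at hxt
  refine le_of_sq_le_sq ?_ (by positivity)
  calc ‖y - t • e - x‖ ^ 2 = ‖y - x‖ ^ 2 - 2 * (t * ⟪e, y - x⟫_ℝ) + t ^ 2 := by
        rw [sub_right_comm, norm_sub_sq_real, real_inner_smul_right, real_inner_comm, norm_smul,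
          he, mul_one, Real.norm_eq_abs, sq_abs]
    _ ≤ δ ^ 2 - 2 * (t * t) + t ^ 2 := by gcongr
    _ = δ ^ 2 * (-(t ^ 2 / δ ^ 2) + 1) := by field_simp; ring
    _ ≤ δ ^ 2 * exp (-(t ^ 2 / δ ^ 2)) := by gcongr; exact add_one_le_exp _
    _ = (δ * exp (-(t ^ 2 / (2 * δ ^ 2)))) ^ 2 := by
        rw [mul_pow, ← exp_nat_mul]; congr 2; push_cast; field_simp

end Separation

lemma lintegral_measure_closedBall_sdiff_le_mul {E : Type*} [NormedAddCommGroup E]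
    [MeasurableSpace E] [BorelSpace E] (μ : Measure E) [μ.IsAddHaarMeasure] (A B : Set E)
    (δ : ℝ) : ∫⁻ x in A, μ (closedBall x δ \ B) ∂μ ≤ μ A * μ (closedBall 0 δ) := by
  calc ∫⁻ x in A, μ (closedBall x δ \ B) ∂μ ≤ ∫⁻ _ in A, μ (closedBall 0 δ) ∂μ :=
        lintegral_mono fun x ↦
          (measure_mono sdiff_subset).trans_eq (Measure.addHaar_closedBall_center μ x δ)
    _ = μ A * μ (closedBall 0 δ) := by rw [setLIntegral_const, mul_comm]

section ConvexBody

variable {E : Type*} [NormedAddCommGroup E] [InnerProductSpace ℝ E] [FiniteDimensional ℝ E]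
  [MeasurableSpace E] [BorelSpace E] (μ : Measure E) [μ.IsAddHaarMeasure]

open scoped InnerProductSpace

local notation "dim" => Module.finrank ℝ E

lemma addHaar_closedBall_inter_halfspace_le {e y : E} (he : ‖e‖ = 1) {t δ : ℝ} (ht : 0 ≤ t)
    (hδ : 0 < δ) :
    μ (closedBall y δ ∩ {x | t ≤ ⟪e, y - x⟫_ℝ}) ≤
      ENNReal.ofReal (exp (-(dim * t ^ 2 / (2 * δ ^ 2)))) * μ (closedBall 0 δ) := by
  calc μ (closedBall y δ ∩ {x | t ≤ ⟪e, y - x⟫_ℝ})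
      ≤ μ (closedBall (y - t • e) (δ * exp (-(t ^ 2 / (2 * δ ^ 2))))) :=
        measure_mono (closedBall_inter_halfspace_subset he ht hδ)
    _ = ENNReal.ofReal (exp (-(t ^ 2 / (2 * δ ^ 2))) ^ dim) * μ (closedBall 0 δ) := by
        rw [mul_comm δ, Measure.addHaar_closedBall_mul μ _ (exp_pos _).le hδ.le]
    _ = ENNReal.ofReal (exp (-(dim * t ^ 2 / (2 * δ ^ 2)))) * μ (closedBall 0 δ) := by
        rw [← exp_nat_mul, mul_neg, mul_div_assoc]

variable {L : Set E} {z : E} {r δ : ℝ}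

lemma addHaar_closedBall_inter_le_of_notMem_homothety_image (hLo : IsOpen L) (hLc : Convex ℝ L)
    (hr : 0 < r) (hzL : ball z r ⊆ L) (hδ : 0 < δ) {s : ℝ} (hs : 1 ≤ s) {y : E}
    (hy : y ∉ AffineMap.homothety z s '' L) :
    μ (closedBall y δ ∩ L) ≤
      ENNReal.ofReal (exp (-(dim * (r * (s - 1)) ^ 2 / (2 * δ ^ 2)))) * μ (closedBall 0 δ) := by
  obtain ⟨e, he, hL⟩ := exists_unit_forall_le_inner_sub hLo hLc hr hs hzL hy
  exact (measure_mono (inter_subset_inter_right _ hL)).trans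
    (addHaar_closedBall_inter_halfspace_le μ he (mul_nonneg hr.le (sub_nonneg.2 hs)) hδ)

lemma addHaar_homothety_image_sdiff (hLo : IsOpen L) (hLz : StarConvex ℝ z L) (hL : μ L ≠ ⊤)
    {s s' : ℝ} (hs : 0 < s) (hss' : s ≤ s') :
    μ (AffineMap.homothety z s' '' L \ AffineMap.homothety z s '' L) =
      ENNReal.ofReal (s' ^ dim - s ^ dim) * μ L := by
  have hvol : ∀ u : ℝ, 0 < u →
      μ (AffineMap.homothety z u '' L) = ENNReal.ofReal (u ^ dim) * μ L := fun u hu ↦ by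
    rw [Measure.addHaar_image_homothety, abs_of_pos (pow_pos hu _)]
  rw [measure_sdiff (homothety_image_subset_homothety_image hLz hs hss')
      (AffineMap.homothety_isOpenMap z s hs.ne' L hLo).nullMeasurableSet
      (by rw [hvol s hs]; finiteness),
    hvol s hs, hvol s' (hs.trans_le hss'), ENNReal.ofReal_sub _ (by positivity),
    ENNReal.sub_mul fun _ _ ↦ hL]

lemma setLIntegral_homothety_image_sdiff_le (hLo : IsOpen L) (hLc : Convex ℝ L) (hL : μ L ≠ ⊤)
    (hr : 0 < r) (hzL : ball z r ⊆ L) (hδ : 0 < δ) {s s' : ℝ} (hs : 1 ≤ s) (hss' : s ≤ s') :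
    ∫⁻ y in AffineMap.homothety z s' '' L \ AffineMap.homothety z s '' L,
        μ (closedBall y δ ∩ L) ∂μ ≤
      ENNReal.ofReal (exp (-(dim * (r * (s - 1)) ^ 2 / (2 * δ ^ 2))) * (s' ^ dim - s ^ dim)) *
        (μ L * μ (closedBall 0 δ)) := by
  have hs0 : 0 < s := by linarith
  set c := exp (-(dim * (r * (s - 1)) ^ 2 / (2 * δ ^ 2)))
  have hmeas : ∀ u : ℝ, 0 < u → MeasurableSet (AffineMap.homothety z u '' L) := fun u hu ↦
    (AffineMap.homothety_isOpenMap z u hu.ne' L hLo).measurableSet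
  calc ∫⁻ y in AffineMap.homothety z s' '' L \ AffineMap.homothety z s '' L,
        μ (closedBall y δ ∩ L) ∂μ
      ≤ ∫⁻ _ in AffineMap.homothety z s' '' L \ AffineMap.homothety z s '' L,
          ENNReal.ofReal c * μ (closedBall 0 δ) ∂μ :=
        setLIntegral_mono' ((hmeas s' (hs0.trans_le hss')).diff (hmeas s hs0)) fun _ hy ↦
          addHaar_closedBall_inter_le_of_notMem_homothety_image μ hLo hLc hr hzL hδ hs hy.2
    _ = ENNReal.ofReal (c * (s' ^ dim - s ^ dim)) * (μ L * μ (closedBall 0 δ)) := by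
        rw [setLIntegral_const, addHaar_homothety_image_sdiff μ hLo
          (hLc.starConvex (hzL (mem_ball_self hr))) hL hs0 hss', ENNReal.ofReal_mul (exp_pos _).le]
        ring

lemma lintegral_measure_closedBall_sdiff_le_of_isOpen [Nontrivial E] (hLo : IsOpen L)
    (hLc : Convex ℝ L) (hL : μ L ≠ ⊤) (hr : 0 < r) (hzL : ball z r ⊆ L) (hδ : 0 < δ)
    (hθ : δ * √dim / r ≤ 1) :
    ∫⁻ x in L, μ (closedBall x δ \ L) ∂μ ≤
      ENNReal.ofReal (64 * (δ * √dim / r)) * (μ L * μ (closedBall 0 δ)) := by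
  have hdim : 0 < (dim : ℝ) := Nat.cast_pos.2 Module.finrank_pos
  set θ := δ * √dim / r with hθ_def
  set η := δ / (r * √dim) with hη_def
  have hη : 0 < η := by positivity
  have hdimη : dim * η = θ := by
    rw [hη_def, hθ_def]; field_simp; rw [sq_sqrt hdim.le]
  have hexponent : ∀ k : ℕ, dim * (r * (1 + k * η - 1)) ^ 2 / (2 * δ ^ 2) = (k : ℝ) ^ 2 / 2 := by
    intro k
    rw [hη_def, add_sub_cancel_left]; field_simp; rw [sq_sqrt hdim.le, mul_comm]
  set A : ℕ → Set E := fun k ↦ AffineMap.homothety z (1 + k * η) '' L with hA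
  have hA0 : A 0 = L := by simp [hA]
  have hshell : ∀ k : ℕ, ∫⁻ y in A (k + 1) \ A k, μ (closedBall y δ ∩ L) ∂μ ≤
      ENNReal.ofReal (32 * θ * (1 / 2) ^ k) * (μ L * μ (closedBall 0 δ)) := by
    intro k
    refine (setLIntegral_homothety_image_sdiff_le μ hLo hLc hL hr hzL hδ
      (le_add_of_nonneg_right (by positivity)) (by gcongr; exact k.le_succ)).trans ?_
    rw [hexponent, ← hdimη]
    gcongr ENNReal.ofReal ?_ * _
    exact exp_mul_shell_factor_le hη.le (hdimη.trans_le hθ) k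
  calc ∫⁻ x in L, μ (closedBall x δ \ L) ∂μ = ∫⁻ y in (A 0)ᶜ, μ (closedBall y δ ∩ L) ∂μ := by
        rw [hA0]; exact lintegral_measure_closedBall_inter_comm μ L Lᶜ δ
    _ ≤ ∫⁻ y in ⋃ k, A (k + 1) \ A k, μ (closedBall y δ ∩ L) ∂μ :=
        lintegral_mono_set
          (compl_subset_iUnion_succ_sdiff (iUnion_homothety_image_eq_univ hr hzL hη))
    _ ≤ ∑' k, ∫⁻ y in A (k + 1) \ A k, μ (closedBall y δ ∩ L) ∂μ := lintegral_iUnion_le _ _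
    _ ≤ ∑' k : ℕ, ENNReal.ofReal (32 * θ * (1 / 2) ^ k) * (μ L * μ (closedBall 0 δ)) :=
        ENNReal.tsum_le_tsum hshell
    _ = ENNReal.ofReal (64 * θ) * (μ L * μ (closedBall 0 δ)) := by
        rw [ENNReal.tsum_mul_right, ← ENNReal.ofReal_tsum_of_nonneg (fun k ↦ by positivity)
          (summable_geometric_two.mul_left _), tsum_mul_left, tsum_geometric_two]
        ring_nf

lemma lintegral_measure_closedBall_sdiff_le (hLc : Convex ℝ L) (hL : μ L ≠ ⊤) (hr : 0 < r)
    (hzL : ball z r ⊆ L) (hδ : 0 < δ) :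
    ∫⁻ x in L, μ (closedBall x δ \ L) ∂μ ≤
      ENNReal.ofReal (64 * (δ * √dim / r)) * (μ L * μ (closedBall 0 δ)) := by
  rcases subsingleton_or_nontrivial E with hE | hE
  · have hLuniv : L = univ :=
      Subsingleton.eq_univ_of_nonempty ⟨z, hzL (mem_ball_self hr)⟩
    simp [hLuniv]
  rcases le_or_gt (δ * √dim / r) 1 with hθ | hθ
  · have hinterior : μ (interior L) = μ L :=
      measure_congr (interior_ae_eq_of_null_frontier (hLc.addHaar_frontier μ))
    calc ∫⁻ x in L, μ (closedBall x δ \ L) ∂μ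
        = ∫⁻ x in interior L, μ (closedBall x δ \ L) ∂μ :=
          setLIntegral_congr (interior_ae_eq_of_null_frontier (hLc.addHaar_frontier μ)).symm
      _ ≤ ∫⁻ x in interior L, μ (closedBall x δ \ interior L) ∂μ :=
          lintegral_mono fun x ↦ measure_mono (sdiff_subset_sdiff_right interior_subset)
      _ ≤ ENNReal.ofReal (64 * (δ * √dim / r)) * (μ L * μ (closedBall 0 δ)) := by
          rw [← hinterior] at hL ⊢
          exact lintegral_measure_closedBall_sdiff_le_of_isOpen μ isOpen_interior hLc.interior hL
            hr (interior_maximal hzL isOpen_ball) hδ hθ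
  · calc ∫⁻ x in L, μ (closedBall x δ \ L) ∂μ ≤ 1 * (μ L * μ (closedBall 0 δ)) := by
          rw [one_mul]; exact lintegral_measure_closedBall_sdiff_le_mul μ L L δ
      _ ≤ ENNReal.ofReal (64 * (δ * √dim / r)) * (μ L * μ (closedBall 0 δ)) := by
          gcongr
          exact ENNReal.one_le_ofReal.2 (by linarith)

end ConvexBody

section LocalConductance

variable {E : Type*} [NormedAddCommGroup E] [MeasurableSpace E] (μ : Measure E) (K : Set E)
  (δ : ℝ)

/-- The local conductance `ℓ` of the ball walk with step `δ` in `K`: the probability that a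
uniform point of the closed ball of radius `δ` around `x` lies in `K`. -/
noncomputable def localConductance (x : E) : ℝ :=
  μ.real (K ∩ closedBall x δ) / μ.real (closedBall 0 δ)

/-- The average local conductance `λ(f)`: the mean of the local conductance of `K` with respect to
the measure on `K` with density proportional to `f`. -/
noncomputable def averageLocalConductance (f : E → ℝ) : ℝ :=
  (∫ x in K, localConductance μ K δ x * f x ∂μ) / ∫ x in K, f x ∂μ

/-- A density `f` is `a`-rounded if each nonempty superlevel set `L` of positive level contains a
ball of radius `a * π L`, where `π` is the measure with density `f`. -/
def IsRounded (a : ℝ) (f : E → ℝ) : Prop :=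
  ∀ t : ℝ, 0 < t → {x | t ≤ f x}.Nonempty →
    ∃ z : E, closedBall z (a * ∫ x in {x | t ≤ f x}, f x ∂μ) ⊆ {x | t ≤ f x}

lemma localConductance_nonneg (x : E) : 0 ≤ localConductance μ K δ x := by
  unfold localConductance; positivity

variable {K δ}

lemma measurable_localConductance [SecondCountableTopology E] [OpensMeasurableSpace E] [SFinite μ]
    (hK : MeasurableSet K) : Measurable (localConductance μ K δ) := by
  have hpairs : MeasurableSet {p : E × E | p.2 ∈ K ∧ dist p.2 p.1 ≤ δ} :=
    (measurable_snd hK).inter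
      (measurableSet_le (measurable_snd.dist measurable_fst) measurable_const)
  exact (measurable_measure_prodMk_left hpairs).ennreal_toReal.div_const _

variable [BorelSpace E] [μ.IsAddHaarMeasure]

lemma one_sub_localConductance [ProperSpace E] (hK : MeasurableSet K) (hδ : 0 < δ) (x : E) :
    1 - localConductance μ K δ x = μ.real (closedBall x δ \ K) / μ.real (closedBall 0 δ) := by
  have hpos : 0 < μ.real (closedBall 0 δ) :=
    ENNReal.toReal_pos (measure_closedBall_pos μ _ hδ).ne' measure_closedBall_lt_top.ne
  have hsplit : μ.real (K ∩ closedBall x δ) + μ.real (closedBall x δ \ K) =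
      μ.real (closedBall 0 δ) := by
    rw [inter_comm, measureReal_inter_add_sdiff hK measure_closedBall_lt_top.ne,
      Measure.addHaar_real_closedBall_center]
  rw [localConductance, eq_div_iff hpos.ne', sub_mul, div_mul_cancel₀ _ hpos.ne', one_mul,
    ← hsplit, add_sub_cancel_left]

lemma localConductance_le_one [ProperSpace E] (hK : MeasurableSet K) (hδ : 0 < δ) (x : E) :
    localConductance μ K δ x ≤ 1 := by
  rw [← sub_nonneg, one_sub_localConductance μ hK hδ]
  positivity

lemma ofReal_one_sub_localConductance [ProperSpace E] (hK : MeasurableSet K) (hδ : 0 < δ)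
    (x : E) :
    ENNReal.ofReal (1 - localConductance μ K δ x) =
      μ (closedBall x δ \ K) / μ (closedBall 0 δ) := by
  have hfin : μ (closedBall x δ \ K) ≠ ⊤ :=
    measure_ne_top_of_subset sdiff_subset measure_closedBall_lt_top.ne
  rw [one_sub_localConductance μ hK hδ, measureReal_def, measureReal_def,
    ENNReal.ofReal_div_of_pos (ENNReal.toReal_pos (measure_closedBall_pos μ _ hδ).ne'
      measure_closedBall_lt_top.ne), ENNReal.ofReal_toReal hfin,
    ENNReal.ofReal_toReal measure_closedBall_lt_top.ne]

end LocalConductance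

lemma quasiconcaveOn_univ_of_rpow_mul_rpow_le {E : Type*} [AddCommGroup E] [Module ℝ E]
    {f : E → ℝ} (hf0 : 0 ≤ f)
    (hf : ∀ x y : E, ∀ l ∈ Icc (0 : ℝ) 1, f x ^ l * f y ^ (1 - l) ≤ f (l • x + (1 - l) • y)) :
    QuasiconcaveOn ℝ univ f := by
  refine quasiconcaveOn_iff_min_le.2 ⟨convex_univ, fun x _ y _ b c hb hc hbc ↦ ?_⟩
  obtain rfl : c = 1 - b := by linarith
  have hx : 0 ≤ f x := hf0 x
  have hm : 0 ≤ min (f x) (f y) := le_min hx (hf0 y)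
  calc min (f x) (f y) = min (f x) (f y) ^ b * min (f x) (f y) ^ (1 - b) := by
        rw [← rpow_add_of_nonneg hm hb hc, add_sub_cancel, rpow_one]
    _ ≤ f x ^ b * f y ^ (1 - b) := by
        gcongr
        · exact min_le_left _ _
        · exact min_le_right _ _
    _ ≤ f (b • x + (1 - b) • y) := hf x y b ⟨hb, by linarith⟩

section Average

variable {E : Type*} [NormedAddCommGroup E] [InnerProductSpace ℝ E] [FiniteDimensional ℝ E]
  [MeasurableSpace E] [BorelSpace E] (μ : Measure E) [μ.IsAddHaarMeasure] {a δ : ℝ} {K : Set E}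
  {f : E → ℝ}

local notation "dim" => Module.finrank ℝ E

lemma setLIntegral_superlevel_one_sub_localConductance_le (ha : 0 < a) (hδ : 0 < δ)
    (hK : MeasurableSet K) (hfK : Function.support f ⊆ K) (hf : QuasiconcaveOn ℝ univ f)
    (hint : Integrable f μ) (hround : IsRounded μ a f) {s t : ℝ} (hs : 0 < s) (ht : 0 < t)
    (hst : s ≤ ∫ x in {x | t ≤ f x}, f x ∂μ) :
    ∫⁻ x in {x | t ≤ f x}, ENNReal.ofReal (1 - localConductance μ K δ x) ∂μ ≤
      ENNReal.ofReal (64 * (δ * √dim / a) / s) * μ {x | t ≤ f x} := by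
  set L := {x | t ≤ f x}
  have hLc : Convex ℝ L := by simpa using hf t
  have hLK : L ⊆ K := fun x hx ↦ hfK (ht.trans_le hx).ne'
  have hL : L.Nonempty := by
    by_contra hempty
    rw [not_nonempty_iff_eq_empty.1 hempty, setIntegral_empty] at hst
    linarith
  obtain ⟨z, hz⟩ := hround t ht hL
  have hball : ball z (a * s) ⊆ L :=
    (ball_subset_ball (by gcongr)).trans (ball_subset_closedBall.trans hz)
  have hV0 : μ (closedBall 0 δ) ≠ 0 := (measure_closedBall_pos μ _ hδ).ne'
  calc ∫⁻ x in L, ENNReal.ofReal (1 - localConductance μ K δ x) ∂μ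
      = ∫⁻ x in L, (μ (closedBall 0 δ))⁻¹ * μ (closedBall x δ \ K) ∂μ := by
        simp only [ofReal_one_sub_localConductance μ hK hδ, ENNReal.div_eq_inv_mul]
    _ ≤ ∫⁻ x in L, (μ (closedBall 0 δ))⁻¹ * μ (closedBall x δ \ L) ∂μ := by gcongr
    _ = (μ (closedBall 0 δ))⁻¹ * ∫⁻ x in L, μ (closedBall x δ \ L) ∂μ :=
        lintegral_const_mul' _ _ (ENNReal.inv_ne_top.2 hV0)
    _ ≤ (μ (closedBall 0 δ))⁻¹ *
          (ENNReal.ofReal (64 * (δ * √dim / (a * s))) * (μ L * μ (closedBall 0 δ))) := by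
        gcongr
        exact lintegral_measure_closedBall_sdiff_le μ hLc (hint.measure_ge_lt_top ht).ne
          (by positivity) hball hδ
    _ = ENNReal.ofReal (64 * (δ * √dim / a) / s) * μ L *
          ((μ (closedBall 0 δ))⁻¹ * μ (closedBall 0 δ)) := by
        rw [← div_div, ← mul_div_assoc]; ring
    _ = ENNReal.ofReal (64 * (δ * √dim / a) / s) * μ L := by
        rw [ENNReal.inv_mul_cancel hV0 measure_closedBall_lt_top.ne, mul_one]

lemma integrable_localConductance_mul (hδ : 0 < δ) (hK : MeasurableSet K)
    (hint : Integrable f μ) : Integrable (fun x ↦ localConductance μ K δ x * f x) μ := by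
  refine hint.bdd_mul (c := 1) (measurable_localConductance μ hK).aestronglyMeasurable
    (.of_forall fun x ↦ ?_)
  rw [Real.norm_of_nonneg (localConductance_nonneg μ K δ x)]
  exact localConductance_le_one μ hK hδ x

lemma one_sub_averageLocalConductance (hδ : 0 < δ) (hK : MeasurableSet K)
    (hfK : Function.support f ⊆ K) (hint : Integrable f μ) (hmass : ∫ x, f x ∂μ = 1) :
    1 - averageLocalConductance μ K δ f = ∫ x, (1 - localConductance μ K δ x) * f x ∂μ := by
  have hsupp : ∀ x, x ∉ K → f x = 0 := fun x hx ↦ Function.notMem_support.1 fun h ↦ hx (hfK h)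
  simp only [averageLocalConductance, sub_mul, one_mul]
  rw [integral_sub hint (integrable_localConductance_mul μ hδ hK hint),
    setIntegral_eq_integral_of_forall_compl_eq_zero hsupp,
    setIntegral_eq_integral_of_forall_compl_eq_zero fun x hx ↦ by rw [hsupp x hx, mul_zero],
    hmass, div_one]

lemma one_sub_averageLocalConductance_le_div_add (ha : 0 < a) (hδ : 0 < δ)
    (hK : MeasurableSet K) (hf0 : 0 ≤ f) (hfK : Function.support f ⊆ K)
    (hf : QuasiconcaveOn ℝ univ f) (hint : Integrable f μ) (hmass : ∫ x, f x ∂μ = 1)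
    (hround : IsRounded μ a f) {s : ℝ} (hs : 0 < s) :
    1 - averageLocalConductance μ K δ f ≤ 64 * (δ * √dim / a) / s + s := by
  have hescape : ∀ x, 0 ≤ 1 - localConductance μ K δ x := fun x ↦
    sub_nonneg.2 (localConductance_le_one μ hK hδ x)
  have hℓ : Measurable (localConductance μ K δ) := measurable_localConductance μ hK
  have hℓf : Integrable (fun x ↦ localConductance μ K δ x * f x) μ :=
    integrable_localConductance_mul μ hδ hK hint
  rw [one_sub_averageLocalConductance μ hδ hK hfK hint hmass]
  refine (ENNReal.ofReal_le_ofReal_iff (by positivity)).1 ?_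
  calc ENNReal.ofReal (∫ x, (1 - localConductance μ K δ x) * f x ∂μ)
      = ∫⁻ x, ENNReal.ofReal ((1 - localConductance μ K δ x) * f x) ∂μ :=
        ofReal_integral_eq_lintegral_ofReal
          (by simpa only [sub_mul, one_mul] using hint.sub' hℓf)
          (.of_forall fun x ↦ mul_nonneg (hescape x) (hf0 x))
    _ = ∫⁻ x, ENNReal.ofReal (1 - localConductance μ K δ x) * ENNReal.ofReal (f x) ∂μ := by
        simp only [ENNReal.ofReal_mul (hescape _)]
    _ ≤ ENNReal.ofReal s + ENNReal.ofReal (64 * (δ * √dim / a) / s) *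
          ∫⁻ x, ENNReal.ofReal (f x) ∂μ :=
        lintegral_mul_ofReal_le_of_forall_superlevel
          (hℓ.const_sub 1).ennreal_ofReal.aemeasurable
          (fun x ↦ ENNReal.ofReal_le_one.2 (sub_le_self _ (localConductance_nonneg μ K δ x)))
          hf0 hint fun t ht hst ↦ setLIntegral_superlevel_one_sub_localConductance_le μ ha hδ hK
            hfK hf hint hround hs ht hst
    _ = ENNReal.ofReal (64 * (δ * √dim / a) / s + s) := by
        rw [← ofReal_integral_eq_lintegral_ofReal hint (.of_forall hf0), hmass, ENNReal.ofReal_one,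
          mul_one, ← ENNReal.ofReal_add hs.le (by positivity), add_comm]

theorem average_local_conductance_general (ha : 0 < a) (hδ : 0 < δ) (hK : MeasurableSet K)
    (hf0 : 0 ≤ f) (hfK : Function.support f ⊆ K) (hf : QuasiconcaveOn ℝ univ f)
    (hint : Integrable f μ) (hmass : ∫ x, f x ∂μ = 1) (hround : IsRounded μ a f) :
    1 - 16 * √δ * (Module.finrank ℝ E : ℝ) ^ ((1 : ℝ) / 4) / √a ≤
      averageLocalConductance μ K δ f := by
  have hbound : 1 - averageLocalConductance μ K δ f ≤ 2 * √(64 * (δ * √dim / a)) :=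
    le_two_mul_sqrt_of_forall_le_div_add (by positivity) fun s hs ↦
      one_sub_averageLocalConductance_le_div_add μ ha hδ hK hf0 hfK hf hint hmass hround hs
  have hsqrt : 2 * √(64 * (δ * √dim / a)) = 16 * √δ * (dim : ℝ) ^ ((1 : ℝ) / 4) / √a := by
    have hsqrt64 : √(64 : ℝ) = 8 := by rw [show (64 : ℝ) = 8 ^ 2 by norm_num, sqrt_sq (by norm_num)]
    have hfourth : √√(dim : ℝ) = (dim : ℝ) ^ ((1 : ℝ) / 4) := by
      rw [sqrt_eq_rpow, sqrt_eq_rpow, ← rpow_mul (Nat.cast_nonneg _)]; norm_num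
    rw [sqrt_mul (by norm_num), hsqrt64, sqrt_div (by positivity), sqrt_mul hδ.le, hfourth]
    ring
  linarith

end Average

/-- Average local conductance of the ball walk for rounded logconcave densities
(Lemma 5.5 of the paper): if `f` is an `a`-rounded logconcave probability density with
convex support `K`, then the average local conductance with step size `δ` satisfies
`λ(f) ≥ 1 - 32 δ^{1/2} n^{1/4} / a^{1/2}`. -/
theorem average_local_conductance
    (n : ℕ) (a δ : ℝ) (ha : 0 < a) (hδ : 0 < δ)
    (K : Set (EuclideanSpace ℝ (Fin n))) (hKconv : Convex ℝ K) (hKm : MeasurableSet K)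
    (f : EuclideanSpace ℝ (Fin n) → ℝ)
    (hf0 : ∀ x, 0 ≤ f x)
    (hsupp : ∀ x, x ∉ K → f x = 0)
    (hlc : ∀ x y : EuclideanSpace ℝ (Fin n), ∀ l ∈ Icc (0:ℝ) 1,
      f x ^ l * f y ^ (1 - l) ≤ f (l • x + (1 - l) • y))
    (hint : Integrable f) (hmass : ∫ x, f x = 1)
    (hrounded : ∀ t : ℝ, 0 < t → ({x | t ≤ f x}).Nonempty →
      ∃ z : EuclideanSpace ℝ (Fin n),
        closedBall z (a * ∫ x in {x | t ≤ f x}, f x) ⊆ {x | t ≤ f x})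
    (ℓ : EuclideanSpace ℝ (Fin n) → ℝ)
    (hℓ : ∀ x, ℓ x = (volume (K ∩ closedBall x δ)).toReal /
      (volume (closedBall (0 : EuclideanSpace ℝ (Fin n)) δ)).toReal) :
    1 - 32 * Real.sqrt δ * (n : ℝ) ^ ((1:ℝ)/4) / Real.sqrt a ≤
      (∫ x in K, ℓ x * f x) / (∫ x in K, f x) := by
  obtain rfl : ℓ = localConductance volume K δ := funext hℓ
  have h := average_local_conductance_general volume ha hδ hKm hf0
    (fun x hx ↦ by_contra fun hxK ↦ hx (hsupp x hxK))
    (quasiconcaveOn_univ_of_rpow_mul_rpow_le hf0 hlc) hint hmass hrounded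
  rw [finrank_euclideanSpace_fin] at h
  exact (sub_le_sub_left (by gcongr; norm_num) 1).trans h
end
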